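/- Let D be an h-convex drawing of K_n with a specified witnessing set of convex sides, and let e, e' be distinct edges of K_n. Label each vertex of the cycle C_e^1 with 1, 2, or 3 according to whether it is in Σ_{e'}^1, in Σ_{e'}^2, or incident with e'. Then the cyclic order of vertices around C_e^1 contains no pattern 1,2,1,2. -/

import Mathlib

/-!
Why the pattern `1,2,1,2` cannot occur. The argument turns the drawing into a sign function on
ordered triples of vertices and then is purely combinatorial.

*Plane topology.* Removing a point of the sphere that lies on no edge gives a planar chart, in
which winding numbers are variations of continuous logarithms of `φ z - φ p` (`PoleChart`, `th`).
For three arcs forming a closed curve, the winding number takes exactly two consecutive values,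
each attained near every point of the curve, and its level sets are the complementary components
(`Tri.values`, `Tri.comp_of_eq`, `Tri.mixes`). This is the Jordan curve theorem for triangles.

*Signs.* Hence the winding number of the oriented triangle `u v w` is `k` off the chosen side and
`k + s` inside, with `s = ±1`; let `sg u v w = s`. It is alternating (`Ctx.sg_rot`, `Ctx.sg_swap`),
and `sg a b x = sg a b y` exactly when the chosen sides of `a b x` and `a b y` lie on the same side
of the edge `a b` (`Ctx.germ_eq`, `Ctx.germ_opp`). So the labels `1` and `2` of vertices with
respect to `a' b'` correspond to distinct values of `sg a' b' _` (`Ctx.sg_ne`).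

*Convexity.* If `z` lies in the chosen side of `u v w`, then nestedness gives
`sg u v z = sg u v w` (`Ctx.sg_of_mem`). From this, if the edge `a b` enters the chosen side of
`a x y`, then `sg a b x = - sg a x y` and `sg a b y = sg a x y` (`Ctx.star`); the case where `a b`
leaves this side again through `x y` is handled by cutting winding numbers along the edge
(`Ctx.cut`, `Ctx.star_out`). Since the winding numbers of `a x y`, `a y z`, `a z x` add up to that
of `x y z`, which is constant near `a`, equal signs of these three triangles mean that their chosen
sides cover a punctured neighbourhood of `a` up to edges at `a`. The edge `a b` has to enter one of
them, so `sg a b x`, `sg a b y`, `sg a b z` cannot all agree (`Ctx.no_wheel`).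

*The cycle.* Let `F` be the face, and let `tau u v w` be the sign of the triangle with respect to
its side not containing `F`. An edge `u v` on the boundary of `F` has the same `tau u v _` for all
third vertices (`Ctx.tau_edge`), and the cocycle relation of winding numbers near a vertex on the
boundary of `F` propagates this to all triples in cyclic order (`Ctx.tau_cycle`). If the chosen
side of `u v w` contained `F`, then nestedness would force it to coincide with the chosen side of
`u v x` for a further vertex `x` of the cycle, which is absurd (`Ctx.not_mem_side`). So `sg = tau`
for triples of any four vertices of the cycle, and the four signs agree (`Ctx.sg_cycle`).

*Conclusion.* Four vertices whose triples have equal signs cannot have signs alternating with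
respect to a further edge: this follows from finitely many applications of `Ctx.no_wheel`
(`Ctx.no_alternation`).
-/

open Set Topology

noncomputable section

/-- The sphere `S²`, realized as the unit sphere in `ℝ³`. -/
abbrev Sph : Type := Metric.sphere (0 : EuclideanSpace ℝ (Fin 3)) 1

/-- `A` is an arc (homeomorph of a compact interval) in the sphere. -/
def IsArc (A : Set Sph) : Prop :=
  ∃ f : ℝ → Sph, ContinuousOn f (Set.Icc 0 1) ∧ Set.InjOn f (Set.Icc 0 1) ∧
    f '' Set.Icc 0 1 = A

/-- `A` is an arc in the sphere with ends `a` and `b`. -/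
def IsArcEnds (A : Set Sph) (a b : Sph) : Prop :=
  ∃ f : ℝ → Sph, ContinuousOn f (Set.Icc 0 1) ∧ Set.InjOn f (Set.Icc 0 1) ∧
    f '' Set.Icc 0 1 = A ∧ f 0 = a ∧ f 1 = b

/-- `C` is a simple closed curve (homeomorph of the circle) in the sphere. -/
def IsSimpleClosedCurve (C : Set Sph) : Prop :=
  ∃ f : Metric.sphere (0 : ℂ) 1 → Sph,
    Continuous f ∧ Function.Injective f ∧ Set.range f = C

/-- Two subsets of the sphere cross at `p`: near `p` there is a homeomorphism of a
neighbourhood of `p` with an open subset of the plane taking `γ₁` to the horizontal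
axis and `γ₂` to the vertical axis; in particular the curves locally cross from one
side of each other to the other. -/
def IsCrossing (γ₁ γ₂ : Set Sph) (p : Sph) : Prop :=
  p ∈ γ₁ ∩ γ₂ ∧
  ∃ φ : PartialHomeomorph Sph (ℝ × ℝ), p ∈ φ.source ∧
    φ '' (γ₁ ∩ φ.source) = {q | q ∈ φ.target ∧ q.2 = 0} ∧
    φ '' (γ₂ ∩ φ.source) = {q | q ∈ φ.target ∧ q.1 = 0}

/-- `F` is a face (connected component of the complement) of the set `X ⊆ S²`. -/
def IsFaceOf (F X : Set Sph) : Prop :=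
  ∃ x ∈ Xᶜ, F = connectedComponentIn Xᶜ x

/-- A good drawing of the complete graph `K_n` in the sphere: vertices are distinct
points, each edge is an arc joining its two ends, no edge passes through another
vertex, and two distinct edges have at most one common point, which, if it exists,
is a common incident vertex or a crossing. -/
structure GoodDrawing (n : ℕ) where
  vtx : Fin n → Sph
  vtx_inj : Function.Injective vtx
  edge : Fin n → Fin n → Set Sph
  edge_symm : ∀ u v, edge u v = edge v u
  edge_arc : ∀ u v, u ≠ v → IsArcEnds (edge u v) (vtx u) (vtx v)
  edge_vtx : ∀ u v, u ≠ v → ∀ w, vtx w ∈ edge u v → w = u ∨ w = v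
  edge_meet : ∀ u v x y, u ≠ v → x ≠ y → ({u, v} : Set (Fin n)) ≠ {x, y} →
    (edge u v ∩ edge x y).Subsingleton ∧
    ∀ p ∈ edge u v ∩ edge x y,
      (∃ w, (w = u ∨ w = v) ∧ (w = x ∨ w = y) ∧ p = vtx w) ∨
      IsCrossing (edge u v) (edge x y) p

/-- The drawing `D[T]` of the 3-cycle `T` on vertices `u, v, w`. -/
def triCurve {n : ℕ} (D : GoodDrawing n) (u v w : Fin n) : Set Sph :=
  D.edge u v ∪ D.edge v w ∪ D.edge u w

/-- `Δ` is a closed side (closed disc bounded by) the drawing of the 3-cycle `u v w`. -/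
def IsSideOfTri {n : ℕ} (D : GoodDrawing n) (u v w : Fin n) (Δ : Set Sph) : Prop :=
  ∃ x ∈ (triCurve D u v w)ᶜ, Δ = closure (connectedComponentIn (triCurve D u v w)ᶜ x)

/-- `Δ` is a convex side of the drawing of the 3-cycle `u v w`: whenever two vertices
are drawn in `Δ`, the edge between them is also drawn in `Δ`. -/
def IsConvexSide {n : ℕ} (D : GoodDrawing n) (u v w : Fin n) (Δ : Set Sph) : Prop :=
  IsSideOfTri D u v w Δ ∧
  ∀ x y : Fin n, x ≠ y → D.vtx x ∈ Δ → D.vtx y ∈ Δ → D.edge x y ⊆ Δ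

/-- `Δf` is a witnessing choice of convex sides for h-convexity of `D`: a convex side
for each 3-cycle such that whenever one 3-cycle is drawn inside the chosen side of
another, its chosen side is contained in that side. -/
def IsHConvexWitness {n : ℕ} (D : GoodDrawing n)
    (Δf : Fin n → Fin n → Fin n → Set Sph) : Prop :=
  (∀ u v w, Δf u v w = Δf v u w) ∧
  (∀ u v w, Δf u v w = Δf u w v) ∧
  (∀ u v w : Fin n, u ≠ v → v ≠ w → u ≠ w → IsConvexSide D u v w (Δf u v w)) ∧
  (∀ u v w x y z : Fin n, u ≠ v → v ≠ w → u ≠ w → x ≠ y → y ≠ z → x ≠ z →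
    triCurve D x y z ⊆ Δf u v w → Δf x y z ⊆ Δf u v w)

/-- `D` is h-convex. -/
def IsHConvex {n : ℕ} (D : GoodDrawing n) : Prop := ∃ Δf, IsHConvexWitness D Δf

/-- Common part of the (weak) pseudospherical conditions: each `γ u v` is a simple
closed curve containing the edge `u v` and no vertex other than `u, v` (PS1), all
intersections of two of the curves are crossings, and each edge meets each other
curve at most once (PS3). -/
def PSWitnessCore {n : ℕ} (D : GoodDrawing n) (γ : Fin n → Fin n → Set Sph) : Prop :=
  (∀ u v, γ u v = γ v u) ∧
  ∀ u v : Fin n, u ≠ v →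
    IsSimpleClosedCurve (γ u v) ∧
    D.edge u v ⊆ γ u v ∧
    (∀ w, D.vtx w ∈ γ u v → w = u ∨ w = v) ∧
    ∀ x y : Fin n, x ≠ y → ({u, v} : Set (Fin n)) ≠ {x, y} →
      (∀ p ∈ γ u v ∩ γ x y, IsCrossing (γ u v) (γ x y) p) ∧
      (D.edge u v ∩ γ x y).Subsingleton

/-- `γ` witnesses that `D` is pseudospherical: (PS1), (PS2), (PS3). -/
def PseudosphericalWitness {n : ℕ} (D : GoodDrawing n)
    (γ : Fin n → Fin n → Set Sph) : Prop :=
  PSWitnessCore D γ ∧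
  ∀ u v x y : Fin n, u ≠ v → x ≠ y → ({u, v} : Set (Fin n)) ≠ {x, y} →
    (γ u v ∩ γ x y).encard = 2

/-- `γ` witnesses that `D` is weakly pseudospherical: (PS1), (PS2w), (PS3). -/
def WeakPseudosphericalWitness {n : ℕ} (D : GoodDrawing n)
    (γ : Fin n → Fin n → Set Sph) : Prop :=
  PSWitnessCore D γ ∧
  ∀ u v x y : Fin n, u ≠ v → x ≠ y → ({u, v} : Set (Fin n)) ≠ {x, y} →
    (γ u v ∩ γ x y).encard ≤ 2

/-- `D` is pseudospherical. -/
def Pseudospherical {n : ℕ} (D : GoodDrawing n) : Prop :=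
  ∃ γ, PseudosphericalWitness D γ

/-- `D` is weakly pseudospherical. -/
def WeakPseudospherical {n : ℕ} (D : GoodDrawing n) : Prop :=
  ∃ γ, WeakPseudosphericalWitness D γ

/-- A collar of an arc `A` in the sphere: a homeomorphism of a neighbourhood of `A`
with an open subset of the plane taking `A` to the segment `[0,1] × {0}`.  It is used
to speak of the two (local) sides of `A`. -/
structure Collar (A : Set Sph) where
  φ : PartialHomeomorph Sph (ℝ × ℝ)
  source_sub : A ⊆ φ.source
  image_eq : φ '' A = Set.Icc (0 : ℝ) 1 ×ˢ ({0} : Set ℝ)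

/-- With respect to the collar `c` of the arc `A`, the set `X` touches the interior of
`A` from the side `s` (`true` = positive side, `false` = negative side): near some
interior point of `A`, the points of `X` off `A` are on side `s`. -/
def SideTouches {A : Set Sph} (c : Collar A) (X : Set Sph) (s : Bool) : Prop :=
  ∃ q ∈ A, (c.φ q).1 ∈ Set.Ioo (0 : ℝ) 1 ∧
    ∃ U ∈ 𝓝 q, ((X ∩ U) \ A).Nonempty ∧
      ∀ x ∈ X ∩ U, x ∉ A → x ∈ c.φ.source ∧
        (if s then 0 < (c.φ x).2 else (c.φ x).2 < 0)

/-- `Σ_e^1`: the vertices `v` not incident with the (oriented) edge `e = ab` whose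
chosen convex side of the 3-cycle on `a, b, v` lies on the first side of `e`
(with respect to the collar `c` of the drawn edge). -/
def sigmaSide1 {n : ℕ} (D : GoodDrawing n) (Δf : Fin n → Fin n → Fin n → Set Sph)
    (a b : Fin n) (c : Collar (D.edge a b)) : Set (Fin n) :=
  {v | v ≠ a ∧ v ≠ b ∧ SideTouches c (Δf a b v) true}

/-- `Σ_e^2`: the remaining vertices not incident with `e = ab`. -/
def sigmaSide2 {n : ℕ} (D : GoodDrawing n) (Δf : Fin n → Fin n → Fin n → Set Sph)
    (a b : Fin n) (c : Collar (D.edge a b)) : Set (Fin n) :=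
  {v | v ≠ a ∧ v ≠ b ∧ v ∉ sigmaSide1 D Δf a b c}

/-- The point set of the subdrawing of `D` induced by the set `S` of vertices. -/
def drawingOn {n : ℕ} (D : GoodDrawing n) (S : Set (Fin n)) : Set Sph :=
  (D.vtx '' S) ∪ ⋃ u ∈ S, ⋃ v ∈ S, ⋃ _ : u ≠ v, D.edge u v

/-- `F` is the face `F_e^i` of the subdrawing `D_e^i` induced by `S ∪ {a,b}`:
a face of that subdrawing incident with the edge `ab` and containing the vertices
drawn in `Sother` (the other class). -/
def IsEdgeFace {n : ℕ} (D : GoodDrawing n) (a b : Fin n)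
    (S Sother : Set (Fin n)) (F : Set Sph) : Prop :=
  IsFaceOf F (drawingOn D (S ∪ {a, b})) ∧
  D.edge a b ⊆ closure F ∧
  D.vtx '' Sother ⊆ F

/-- `C` is the drawing of a cycle of `K_n` through the edge `ab`. -/
def IsCycleDrawingThrough {n : ℕ} (D : GoodDrawing n) (a b : Fin n)
    (C : Set Sph) : Prop :=
  ∃ (k : ℕ) (c : Fin (k + 3) → Fin n), Function.Injective c ∧
    (∃ j : Fin (k + 3), ({c j, c (j + 1)} : Set (Fin n)) = {a, b}) ∧
    C = ⋃ j : Fin (k + 3), D.edge (c j) (c (j + 1))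

/-- `Δ` is a closed disc bounded by (the drawing of) a cycle of `K_n` containing the
edge `ab`, and containing the subdrawing induced by `S ∪ {a,b}`. -/
def IsBoundedDelta {n : ℕ} (D : GoodDrawing n) (a b : Fin n)
    (S : Set (Fin n)) (Δ : Set Sph) : Prop :=
  ∃ C : Set Sph, IsCycleDrawingThrough D a b C ∧
    (∃ x ∈ Cᶜ, Δ = closure (connectedComponentIn Cᶜ x)) ∧
    drawingOn D (S ∪ {a, b}) ⊆ Δ

namespace HConv

/-! ### Continuous logarithms -/

/-- `f` has a continuous logarithm on `K`. -/
def HasLog {X : Type*} [TopologicalSpace X] (K : Set X) (f : X → ℂ) : Prop :=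
  ∃ g : X → ℂ, ContinuousOn g K ∧ ∀ z ∈ K, Complex.exp (g z) = f z

/-- A continuous function with values in `2πiℤ` is constant on a connected set. -/
lemma log_diff_const {X : Type*} [TopologicalSpace X] {K : Set X} (hK : IsPreconnected K)
    {g : X → ℂ} (hg : ContinuousOn g K) (h1 : ∀ z ∈ K, Complex.exp (g z) = 1)
    {x y : X} (hx : x ∈ K) (hy : y ∈ K) : g x = g y := by
  have hd : IsDiscrete (Set.range ((↑) : ℤ → ℂ)) :=
    Complex.isClosedEmbedding_intCast.isEmbedding.isDiscrete_range
  have hpi : (2 * Real.pi * Complex.I : ℂ) ≠ 0 := Complex.two_pi_I_ne_zero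
  have := hK.constant_of_mapsTo hd (f := fun z => g z / (2 * Real.pi * Complex.I))
    (hg.div_const _) (fun z hz => by
      obtain ⟨n, hn⟩ := Complex.exp_eq_one_iff.1 (h1 z hz)
      exact ⟨n, by simp only [hn]; field_simp⟩) hx hy
  simpa [div_left_inj' hpi] using this

/-- On a compact set that is star-shaped about the origin, every nonvanishing continuous
function has a continuous logarithm: the ratio of values at consecutive points `(i/N)x`,
`((i+1)/N)x` is close to `1`, so the principal logarithms of these ratios can be summed. -/
lemma hasLog_of_starConvex {E : Type*} [NormedAddCommGroup E] [NormedSpace ℝ E] {K : Set E}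
    (hK : IsCompact K) (hs : ∀ x ∈ K, ∀ t ∈ Icc (0 : ℝ) 1, t • x ∈ K) {f : E → ℂ}
    (hf : ContinuousOn f K) (h0 : ∀ x ∈ K, f x ≠ 0) : HasLog K f := by
  rcases K.eq_empty_or_nonempty with rfl | hne
  · exact ⟨0, by simp, by simp⟩
  obtain ⟨x0, hx0, hmin⟩ := hK.exists_isMinOn hne hf.norm
  set m := ‖f x0‖ with hm
  have hmpos : 0 < m := norm_pos_iff.2 (h0 x0 hx0)
  have huc := hK.uniformContinuousOn_of_continuous hf
  obtain ⟨δ, hδ, hd⟩ := Metric.uniformContinuousOn_iff.1 huc m hmpos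
  obtain ⟨R, hR⟩ := hK.isBounded.exists_norm_le
  obtain ⟨N, hN⟩ := exists_nat_gt (max R 0 / δ)
  have hNpos : (0 : ℝ) < N := lt_of_le_of_lt (by positivity) hN
  have hRN : max R 0 / N < δ := by
    rw [div_lt_iff₀ hδ] at hN; rw [div_lt_iff₀ hNpos]; linarith
  have hin : ∀ i : ℕ, i ≤ N → ∀ x ∈ K, ((i : ℝ) / N) • x ∈ K := fun i hi x hx =>
    hs x hx _ ⟨by positivity, by rw [div_le_one hNpos]; exact_mod_cast hi⟩
  have hratio : ∀ i : ℕ, i < N → ∀ x ∈ K,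
      f ((((i + 1 : ℕ) : ℝ) / N) • x) / f (((i : ℝ) / N) • x) ∈ Complex.slitPlane := by
    intro i hi x hx
    have h1 := hin i hi.le x hx
    have h2 := hin (i + 1) hi x hx
    have hb := hd _ h2 _ h1 (by
      rw [dist_eq_norm, ← sub_smul, norm_smul]
      have : ((i + 1 : ℕ) : ℝ) / N - i / N = 1 / N := by push_cast; ring
      rw [this, Real.norm_of_nonneg (by positivity)]
      calc 1 / N * ‖x‖ ≤ 1 / N * max R 0 := by
            gcongr; exact (hR x hx).trans (le_max_left _ _)
        _ = max R 0 / N := by ring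
        _ < δ := hRN)
    have hge : m ≤ ‖f (((i : ℝ) / N) • x)‖ := hmin h1
    rw [dist_eq_norm] at hb
    apply Complex.mem_slitPlane_of_norm_lt_one (z := f ((((i + 1 : ℕ) : ℝ) / N) • x) / f (((i : ℝ) / N) • x) - 1) _ |> fun h => by simpa using h
    rw [div_sub_one (h0 _ h1), norm_div, div_lt_one (by linarith)]
    linarith
  refine ⟨fun x => Complex.log (f 0) + ∑ i ∈ Finset.range N,
    Complex.log (f ((((i + 1 : ℕ) : ℝ) / N) • x) / f (((i : ℝ) / N) • x)), ?_, ?_⟩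
  · refine continuousOn_const.add (continuousOn_finsetSum _ fun i hi => ?_)
    have hi := Finset.mem_range.1 hi
    refine ContinuousOn.clog (ContinuousOn.div ?_ ?_ fun x hx => h0 _ (hin i hi.le x hx))
      (hratio i hi)
    · exact hf.comp (by fun_prop) fun x hx => hin (i + 1) hi x hx
    · exact hf.comp (by fun_prop) fun x hx => hin i hi.le x hx
  · intro x hx
    have key : ∀ n : ℕ, n ≤ N → Complex.exp (Complex.log (f 0) + ∑ i ∈ Finset.range n,
        Complex.log (f ((((i + 1 : ℕ) : ℝ) / N) • x) / f (((i : ℝ) / N) • x)))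
          = f (((n : ℝ) / N) • x) := by
      intro n
      induction n with
      | zero =>
        intro _
        have : (0 : E) ∈ K := by simpa using hs x hx 0 (by simp)
        simp [Complex.exp_log (h0 _ this)]
      | succ n ih =>
        intro hn
        rw [Finset.sum_range_succ, ← add_assoc, Complex.exp_add, ih (by omega),
          Complex.exp_log (Complex.slitPlane_ne_zero (hratio n hn x hx))]
        field_simp [h0 _ (hin n (by omega) x hx)]
    simpa [hNpos.ne'] using key N le_rfl

lemma hasLog_Icc {f : ℝ → ℂ} {s : ℝ} (hf : ContinuousOn f (Icc 0 s))
    (h0 : ∀ x ∈ Icc (0 : ℝ) s, f x ≠ 0) : HasLog (Icc 0 s) f :=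
  hasLog_of_starConvex isCompact_Icc (fun x hx t ht => by
    simp only [smul_eq_mul, mem_Icc] at *
    exact ⟨by nlinarith, by nlinarith⟩) hf h0

lemma hasLog_closedBall {f : ℂ → ℂ} {u : ℂ} {r : ℝ}
    (hf : ContinuousOn f (Metric.closedBall u r))
    (h0 : ∀ x ∈ Metric.closedBall u r, f x ≠ 0) : HasLog (Metric.closedBall u r) f := by
  have hmaps : ∀ x ∈ Metric.closedBall (0 : ℂ) r, u + x ∈ Metric.closedBall u r := by
    intro x hx; simpa [dist_eq_norm] using hx
  obtain ⟨g, hg, hge⟩ := hasLog_of_starConvex (f := fun x => f (u + x))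
    (isCompact_closedBall (0 : ℂ) r) (fun x hx t ht => by
      simp only [mem_closedBall_zero_iff, norm_smul, Real.norm_eq_abs, mem_Icc] at *
      rw [abs_of_nonneg ht.1]
      nlinarith [norm_nonneg x])
    (hf.comp (by fun_prop) hmaps) (fun x hx => h0 _ (hmaps x hx))
  have hm2 : ∀ z ∈ Metric.closedBall u r, z - u ∈ Metric.closedBall (0 : ℂ) r := by
    intro z hz; simpa [dist_eq_norm] using hz
  refine ⟨fun z => g (z - u), hg.comp (by fun_prop) hm2, fun z hz => ?_⟩
  rw [hge _ (hm2 z hz)]; simp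

/-- On a circle about `u`, the function `(z - u) ^ a` times a `d`-th power has winding number
`≡ a` modulo `d`; it can have a continuous logarithm only if `d ∣ a`. -/
lemma circle_winding {u : ℂ} {r : ℝ} (hr : 0 < r) {R h : ℂ → ℂ} {a d : ℤ}
    (hR : ContinuousOn R (Metric.sphere u r)) (hR0 : ∀ z ∈ Metric.sphere u r, R z ≠ 0)
    (hh : ContinuousOn h (Metric.sphere u r))
    (heq : ∀ z ∈ Metric.sphere u r, (z - u) ^ a * R z ^ d = Complex.exp (h z)) : d ∣ a := by
  set γ : ℝ → ℂ := fun t => u + r * Complex.exp (t * Complex.I) with hγ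
  have hγc : Continuous γ := by fun_prop
  have hγm : ∀ t, γ t ∈ Metric.sphere u r := by
    intro t; simp [hγ, Complex.norm_exp_ofReal_mul_I, abs_of_pos hr]
  have hpi : (0 : ℝ) ≤ 2 * Real.pi := by positivity
  obtain ⟨l, hl, hle⟩ := hasLog_Icc (f := fun t => R (γ t))
    (hR.comp hγc.continuousOn fun t _ => hγm t) (fun t _ => hR0 _ (hγm t))
  have h0m : (0 : ℝ) ∈ Icc 0 (2 * Real.pi) := ⟨le_rfl, hpi⟩
  have h1m : 2 * Real.pi ∈ Icc 0 (2 * Real.pi) := ⟨hpi, le_rfl⟩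
  have hper : γ (2 * Real.pi) = γ 0 := by simp [hγ]
  have hconst := log_diff_const (isPreconnected_Icc (a := (0 : ℝ)) (b := 2 * Real.pi))
    (g := fun t => a * (Complex.log r + t * Complex.I) + d * l t - h (γ t))
    (by
      refine ContinuousOn.sub (ContinuousOn.add (by fun_prop) (continuousOn_const.mul hl)) ?_
      exact hh.comp hγc.continuousOn fun t _ => hγm t)
    (by
      intro t ht
      have hrc : (r : ℂ) ≠ 0 := by exact_mod_cast hr.ne'
      rw [Complex.exp_sub, ← heq _ (hγm t), Complex.exp_add, Complex.exp_int_mul,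
        Complex.exp_int_mul, hle t ht, Complex.exp_add, Complex.exp_log hrc]
      have : γ t - u = r * Complex.exp (t * Complex.I) := by simp [hγ]
      rw [this, div_self]
      exact mul_ne_zero (zpow_ne_zero _ (mul_ne_zero hrc (Complex.exp_ne_zero _)))
        (zpow_ne_zero _ (hR0 _ (hγm t)))) h0m h1m
  obtain ⟨k, hk⟩ := Complex.exp_eq_exp_iff_exists_int.1
    ((hle _ h1m).trans ((congrArg R hper).trans (hle _ h0m).symm))
  simp only [hper, hk] at hconst
  have h2 : (2 * Real.pi * Complex.I) * ((a : ℂ) + d * k) = 0 := by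
    push_cast at hconst
    linear_combination -hconst
  have h3 : ((a + d * k : ℤ) : ℂ) = 0 := by
    push_cast
    exact (mul_eq_zero.1 h2).resolve_left Complex.two_pi_I_ne_zero
  have h4 : a + d * k = 0 := by exact_mod_cast h3
  exact ⟨-k, by linarith⟩

/-- Continuous logarithms on two closed pieces meeting at two points `u`, `v` glue, provided
they have the same variation from `u` to `v`. -/
lemma glue_log {X : Type*} [TopologicalSpace X] {A B : Set X} (hA : IsClosed A) (hB : IsClosed B)
    {u v : X} (hAB : A ∩ B = {u, v}) {f gA gB : X → ℂ} (hgA : ContinuousOn gA A)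
    (hgB : ContinuousOn gB B) (heA : ∀ z ∈ A, Complex.exp (gA z) = f z)
    (heB : ∀ z ∈ B, Complex.exp (gB z) = f z) (hvar : gA v - gA u = gB v - gB u) :
    HasLog (A ∪ B) f := by
  classical
  have hu : u ∈ A ∩ B := by rw [hAB]; simp
  have hδ : Complex.exp (gA u - gB u) = 1 := by
    rw [Complex.exp_sub, heA u hu.1, heB u hu.2, div_self]
    rw [← heA u hu.1]; exact Complex.exp_ne_zero _
  set G : X → ℂ := fun z => if z ∈ A then gA z else gB z + (gA u - gB u) with hG
  have hGA : EqOn G gA A := fun z hz => by simp [hG, hz]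
  have hGB : EqOn G (fun z => gB z + (gA u - gB u)) B := fun z hz => by
    by_cases hzA : z ∈ A
    · have : z ∈ ({u, v} : Set X) := hAB ▸ ⟨hzA, hz⟩
      rcases this with rfl | rfl
      · simp [hG, hzA]
      · simp only [hG, hzA, if_true]; linear_combination hvar
    · simp [hG, hzA]
  refine ⟨G, ?_, ?_⟩
  · exact (hgA.congr hGA).union_of_isClosed ((hgB.add continuousOn_const).congr hGB) hA hB
  · rintro z (hz | hz)
    · rw [hGA hz, heA z hz]
    · rw [hGB hz, Complex.exp_add, hδ, heB z hz, mul_one]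

end HConv

namespace HConv

/-! ### A planar chart of the punctured sphere -/

/-- A homeomorphism `φ` (with inverse `ψ`) from the complement of the point `o` of the sphere
onto the complex plane. -/
structure PoleChart where
  o : Sph
  φ : Sph → ℂ
  ψ : ℂ → Sph
  contφ : ContinuousOn φ {o}ᶜ
  contψ : Continuous ψ
  ψ_ne : ∀ w, ψ w ≠ o
  left : ∀ z, z ≠ o → ψ (φ z) = z
  right : ∀ w, φ (ψ w) = w

lemma exists_poleChart (o : Sph) : ∃ c : PoleChart, c.o = o := by
  have : Fact (Module.finrank ℝ (EuclideanSpace ℝ (Fin 3)) = 2 + 1) := ⟨by simp⟩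
  set S := stereographic' 2 o
  have hs : S.source = {o}ᶜ := stereographic'_source o
  have ht : S.target = univ := stereographic'_target o
  set L := Complex.orthonormalBasisOneI.repr
  refine ⟨⟨o, fun z => L.symm (S z), fun w => S.symm (L w), ?_, ?_, ?_, ?_, ?_⟩, rfl⟩
  · exact L.symm.continuous.comp_continuousOn (hs ▸ S.continuousOn)
  · have h2 : ContinuousOn S.symm univ := ht ▸ S.continuousOn_symm
    exact (continuousOn_univ.1 h2).comp L.continuous
  · intro w
    have := S.map_target (x := L w) (by rw [ht]; trivial)
    rw [hs] at this
    exact this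
  · intro z hz
    have : z ∈ S.source := by rw [hs]; exact hz
    simp [S.left_inv this]
  · intro w
    simp [S.right_inv (x := L w) (by rw [ht]; trivial)]

instance : LocallyConnectedSpace Sph := by
  have : Fact (Module.finrank ℝ (EuclideanSpace ℝ (Fin 3)) = 2 + 1) := ⟨by simp⟩
  exact ChartedSpace.locallyConnectedSpace (EuclideanSpace ℝ (Fin 2)) Sph

variable (c : PoleChart)

namespace PoleChart

lemma φ_inj {z w : Sph} (hz : z ≠ c.o) (hw : w ≠ c.o) (h : c.φ z = c.φ w) : z = w := by
  rw [← c.left z hz, h, c.left w hw]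

lemma ψ_inj : Function.Injective c.ψ := fun z w h => by rw [← c.right z, h, c.right]

lemma contAt {z : Sph} (hz : z ≠ c.o) : ContinuousAt c.φ z :=
  c.contφ.continuousAt (isOpen_compl_singleton.mem_nhds hz)

lemma contOn {K : Set Sph} (hK : c.o ∉ K) : ContinuousOn c.φ K :=
  c.contφ.mono fun z hz h => hK (h ▸ hz)

lemma image_eq_preimage {K : Set Sph} (hK : c.o ∉ K) : c.φ '' K = c.ψ ⁻¹' K := by
  ext w
  constructor
  · rintro ⟨z, hz, rfl⟩
    have : z ≠ c.o := fun h => hK (h ▸ hz)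
    simpa [c.left z this] using hz
  · intro hw
    exact ⟨_, hw, c.right w⟩

lemma isOpen_image {V : Set ℂ} (hV : IsOpen V) : IsOpen (c.ψ '' V) := by
  have : c.ψ '' V = {c.o}ᶜ ∩ c.φ ⁻¹' V := by
    ext z
    constructor
    · rintro ⟨w, hw, rfl⟩
      exact ⟨c.ψ_ne w, by simpa [c.right] using hw⟩
    · rintro ⟨h1, h2⟩
      exact ⟨_, h2, c.left z h1⟩
  rw [this]
  exact c.contφ.isOpen_inter_preimage isOpen_compl_singleton hV

/-- The complement of a compact planar set is a neighbourhood of the pole. -/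
lemma eventually_large (R : ℝ) : ∀ᶠ p in 𝓝 c.o, p = c.o ∨ R < ‖c.φ p‖ := by
  have hc : IsCompact (c.ψ '' Metric.closedBall 0 R) := (isCompact_closedBall _ _).image c.contψ
  have ho : c.o ∉ c.ψ '' Metric.closedBall 0 R := by
    rintro ⟨w, -, hw⟩; exact c.ψ_ne w hw
  filter_upwards [hc.isClosed.isOpen_compl.mem_nhds ho] with p hp
  by_contra! h
  exact hp ⟨c.φ p, by simpa using h.2, c.left p h.1⟩

/-- The function `z ↦ φ z - φ p`, which vanishes at `p` only; it is replaced by the constant `1`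
when `p` is the pole. -/
def m (p z : Sph) : ℂ := if p = c.o then 1 else c.φ z - c.φ p

lemma m_ne {p z : Sph} (hz : z ≠ c.o) (hzp : z ≠ p) : c.m p z ≠ 0 := by
  unfold m
  split_ifs with h
  · exact one_ne_zero
  · exact sub_ne_zero.2 fun h' => hzp (c.φ_inj hz h h')

lemma m_cont {K : Set Sph} (hK : c.o ∉ K) (p : Sph) : ContinuousOn (c.m p) K := by
  unfold m
  split_ifs
  · exact continuousOn_const
  · exact (c.contOn hK).sub continuousOn_const

end PoleChart

/-! ### Separation by a logarithm obstruction -/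

/-- Let `U ∋ p` be open with `U ∪ K` compact, and `h` nonvanishing on `U ∪ K`. If `(z - p) ^ a * h z`
has a continuous logarithm `g` on `K`, then `a = 0`: for an extension `G` of `g`, the function equal
to `exp G / h` on `U` and to `(z - p) ^ a` off `U` is continuous and nonvanishing on the plane. -/
lemma eilenberg_plane {K U : Set ℂ} (hK : IsClosed K) (hU : IsOpen U) (hUK : IsCompact (U ∪ K))
    {p : ℂ} (hp : p ∈ U) {h g : ℂ → ℂ} (hh : ContinuousOn h (U ∪ K))
    (hh0 : ∀ z ∈ U ∪ K, h z ≠ 0) (hg : ContinuousOn g K) {a : ℤ}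
    (heq : ∀ z ∈ K, Complex.exp (g z) = (z - p) ^ a * h z) : a = 0 := by
  classical
  obtain ⟨G, hG⟩ := ContinuousMap.exists_restrict_eq hK (⟨K.domRestrict g, hg.domRestrict⟩ : C(K, ℂ))
  have hGK : ∀ z ∈ K, G z = g z := fun z hz => congrArg (fun f : C(K, ℂ) => f ⟨z, hz⟩) hG
  set f : ℂ → ℂ := fun z => if z ∈ U then Complex.exp (G z) / h z else (z - p) ^ a with hf
  have hf1 : EqOn f (fun z => Complex.exp (G z) / h z) (U ∪ K) := by
    rintro z hz
    by_cases hzU : z ∈ U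
    · simp [hf, hzU]
    · have hzK : z ∈ K := hz.resolve_left hzU
      simp only [hf, hzU, if_false]
      rw [hGK z hzK, heq z hzK, mul_div_cancel_right₀ _ (hh0 z hz)]
  have hf2 : EqOn f (fun z => (z - p) ^ a) Uᶜ := fun z hz => by
    have : z ∉ U := hz
    simp [hf, this]
  have hne : ∀ z ∈ Uᶜ, z - p ≠ 0 := fun z hz h0 => hz (by rwa [sub_eq_zero.1 h0])
  have hcont : Continuous f := by
    rw [← continuousOn_univ]
    have : (univ : Set ℂ) = (U ∪ K) ∪ Uᶜ := by
      ext z; by_cases hz : z ∈ U <;> simp [hz]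
    rw [this]
    refine ContinuousOn.union_of_isClosed ?_ ?_ hUK.isClosed hU.isClosed_compl
    · exact ((Complex.continuous_exp.comp G.continuous).continuousOn.div hh hh0).congr hf1
    · refine ContinuousOn.congr ?_ hf2
      exact (continuousOn_id.sub continuousOn_const).zpow₀ a fun z hz => Or.inl (hne z hz)
  have hf0 : ∀ z, f z ≠ 0 := by
    intro z
    by_cases hz : z ∈ U
    · rw [hf1 (Or.inl hz)]
      exact div_ne_zero (Complex.exp_ne_zero _) (hh0 z (Or.inl hz))
    · rw [hf2 hz]
      exact zpow_ne_zero _ (hne z hz)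
  obtain ⟨R, hR, hRU⟩ := hUK.isBounded.subset_ball_lt 0 p
  obtain ⟨l, hl, hle⟩ := hasLog_closedBall (u := p) (r := R) hcont.continuousOn fun z _ => hf0 z
  have := circle_winding (u := p) hR (R := fun _ => 1) (h := l) (a := a) (d := 0)
    continuousOn_const (fun _ _ => one_ne_zero) (hl.mono Metric.sphere_subset_closedBall)
    (fun z hz => by
      have hzU : z ∉ U := fun h' => by
        have h3 := hRU (Or.inl h')
        rw [Metric.mem_ball] at h3
        rw [Metric.mem_sphere] at hz
        linarith
      rw [hle z (Metric.sphere_subset_closedBall hz), hf2 hzU]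
      simp)
  simpa using this

/-- Let `U` be open with boundary in the closed set `K`, both avoiding the pole. If
`(m p) ^ a * h` has a continuous logarithm on `K`, where `p ∈ U` and `h` is continuous and
nonvanishing on `U ∪ K`, then `a = 0`: otherwise the logarithm, extended over `U`, would remove
the zero of `(φ z - φ p) ^ a` and contradict its winding number on a large circle. -/
lemma eilenberg {K U : Set Sph} (hK : IsClosed K) (hU : IsOpen U) (hUK : IsClosed (U ∪ K))
    (ho : c.o ∉ U ∪ K) {p : Sph} (hp : p ∈ U) {h g : Sph → ℂ}
    (hh : ContinuousOn h (U ∪ K)) (hh0 : ∀ z ∈ U ∪ K, h z ≠ 0) (hg : ContinuousOn g K) {a : ℤ}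
    (heq : ∀ z ∈ K, Complex.exp (g z) = c.m p z ^ a * h z) : a = 0 := by
  have hpo : p ≠ c.o := fun h' => ho (h' ▸ Or.inl hp)
  have hc : IsCompact (c.ψ ⁻¹' (U ∪ K)) := by
    rw [← c.image_eq_preimage ho]
    exact hUK.isCompact.image_of_continuousOn (c.contOn ho)
  refine eilenberg_plane (K := c.ψ ⁻¹' K) (U := c.ψ ⁻¹' U) (p := c.φ p)
    (h := fun w => h (c.ψ w)) (g := fun w => g (c.ψ w)) (hK.preimage c.contψ)
    (hU.preimage c.contψ) hc (by simpa [c.left p hpo] using hp)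
    (hh.comp c.contψ.continuousOn fun w hw => hw) (fun w hw => hh0 _ hw)
    (hg.comp c.contψ.continuousOn fun w hw => hw) fun w hw => ?_
  rw [heq _ hw, PoleChart.m, if_neg hpo, c.right]

lemma isClosed_comp_union {K : Set Sph} (hK : IsClosed K) (x : Sph) :
    IsClosed (connectedComponentIn Kᶜ x ∪ K) := by
  rw [← closure_subset_iff_isClosed, closure_union, hK.closure_eq]
  rintro z (hz | hz)
  · by_cases hzK : z ∈ K
    · exact Or.inr hzK
    · left
      have ho : IsOpen (connectedComponentIn Kᶜ z) := hK.isOpen_compl.connectedComponentIn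
      obtain ⟨y, hy1, hy2⟩ := mem_closure_iff.1 hz _ ho (mem_connectedComponentIn hzK)
      rw [connectedComponentIn_eq hy2, ← connectedComponentIn_eq hy1]
      exact mem_connectedComponentIn hzK
  · exact Or.inr hz

end HConv

namespace HConv

/-! ### Arcs and the variation of logarithms along them -/

/-- A compact connected set on which every nonvanishing continuous function has a continuous
logarithm. Arcs, and unions of two such sets with exactly one common point, are of this kind. -/
structure Acy (K : Set Sph) : Prop where
  cpt : IsCompact K
  conn : IsPreconnected K
  log : ∀ f : Sph → ℂ, ContinuousOn f K → (∀ z ∈ K, f z ≠ 0) → HasLog K f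

lemma Acy.closed {K : Set Sph} (h : Acy K) : IsClosed K := h.cpt.isClosed

/-- An injective continuous parametrization of a compact interval has a continuous inverse. -/
lemma exists_inv {f : ℝ → Sph} {s t : ℝ} (hf : ContinuousOn f (Icc s t))
    (hi : InjOn f (Icc s t)) :
    ∃ r : Sph → ℝ, ContinuousOn r (f '' Icc s t) ∧ ∀ x ∈ Icc s t, r (f x) = x := by
  rcases (Icc s t).eq_empty_or_nonempty with he | hne
  · exact ⟨fun _ => 0, continuousOn_const, by simp [he]⟩
  have hl : ∀ x ∈ Icc s t, Function.invFunOn f (Icc s t) (f x) = x := fun x hx =>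
    hi.leftInvOn_invFunOn hx
  refine ⟨Function.invFunOn f (Icc s t), ?_, hl⟩
  rw [continuousOn_iff_isClosed]
  intro C hC
  refine ⟨f '' (C ∩ Icc s t), ?_, ?_⟩
  · exact ((isCompact_Icc.inter_left hC).image_of_continuousOn
      (hf.mono inter_subset_right)).isClosed
  · ext z
    constructor
    · rintro ⟨h1, x, hx, rfl⟩
      exact ⟨⟨x, ⟨by rw [mem_preimage, hl x hx] at h1; exact h1, hx⟩, rfl⟩, x, hx, rfl⟩
    · rintro ⟨⟨x, ⟨hxC, hx⟩, rfl⟩, -⟩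
      exact ⟨by rw [mem_preimage, hl x hx]; exact hxC, x, hx, rfl⟩

section Arcs

variable {A : Set Sph} {a b : Sph}

lemma _root_.IsArcEnds.acy (h : IsArcEnds A a b) : Acy A := by
  obtain ⟨f, hf, hi, rfl, -, -⟩ := h
  refine ⟨isCompact_Icc.image_of_continuousOn hf, isPreconnected_Icc.image _ hf, ?_⟩
  intro F hF h0
  obtain ⟨r, hr, hrf⟩ := exists_inv hf hi
  obtain ⟨g, hg, hge⟩ := hasLog_Icc (s := 1) (f := fun x => F (f x))
    (hF.comp hf fun x hx => mem_image_of_mem f hx) fun x hx => h0 _ (mem_image_of_mem f hx)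
  refine ⟨fun z => g (r z), hg.comp hr ?_, ?_⟩
  · rintro _ ⟨x, hx, rfl⟩; rwa [hrf x hx]
  · rintro _ ⟨x, hx, rfl⟩; simp only [hrf x hx]; exact hge x hx

lemma _root_.IsArcEnds.left_mem (h : IsArcEnds A a b) : a ∈ A := by
  obtain ⟨f, -, -, rfl, rfl, -⟩ := h; exact ⟨0, by simp, rfl⟩

lemma _root_.IsArcEnds.right_mem (h : IsArcEnds A a b) : b ∈ A := by
  obtain ⟨f, -, -, rfl, -, rfl⟩ := h; exact ⟨1, by simp, rfl⟩

lemma _root_.IsArcEnds.ne (h : IsArcEnds A a b) : a ≠ b := by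
  obtain ⟨f, -, hi, -, rfl, rfl⟩ := h
  intro h
  have := hi (by simp) (by simp) h
  norm_num at this

lemma _root_.IsArcEnds.symm (h : IsArcEnds A a b) : IsArcEnds A b a := by
  obtain ⟨f, hf, hi, rfl, h0, h1⟩ := h
  have hm : ∀ x ∈ Icc (0 : ℝ) 1, 1 - x ∈ Icc (0 : ℝ) 1 := fun x hx => by
    simp only [mem_Icc] at *; constructor <;> linarith [hx.1, hx.2]
  refine ⟨fun x => f (1 - x), hf.comp (by fun_prop) hm, ?_, ?_, by simpa, by simpa⟩
  · intro x hx y hy hxy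
    have := hi (hm x hx) (hm y hy) hxy
    linarith
  · ext z
    constructor
    · rintro ⟨x, hx, rfl⟩; exact ⟨_, hm x hx, rfl⟩
    · rintro ⟨x, hx, rfl⟩; exact ⟨1 - x, hm x hx, by simp⟩

/-- The restriction of a parametrization of an arc to a subinterval parametrizes an arc. -/
lemma subarc {f : ℝ → Sph} (hf : ContinuousOn f (Icc 0 1)) (hi : InjOn f (Icc 0 1)) {s t : ℝ}
    (hs : 0 ≤ s) (hst : s < t) (ht : t ≤ 1) : IsArcEnds (f '' Icc s t) (f s) (f t) := by
  have hm : ∀ x ∈ Icc (0 : ℝ) 1, s + x * (t - s) ∈ Icc s t := fun x hx => by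
    simp only [mem_Icc] at *; constructor <;> nlinarith [hx.1, hx.2]
  have hsub : Icc s t ⊆ Icc 0 1 := Icc_subset_Icc hs ht
  refine ⟨fun x => f (s + x * (t - s)), hf.comp (by fun_prop) fun x hx => hsub (hm x hx),
    ?_, ?_, by simp, by simp⟩
  · intro x hx y hy hxy
    have h1 := hi (hsub (hm x hx)) (hsub (hm y hy)) hxy
    have h2 : (x - y) * (t - s) = 0 := by linarith
    rcases mul_eq_zero.1 h2 with h | h <;> linarith
  · ext z
    constructor
    · rintro ⟨x, hx, rfl⟩; exact ⟨_, hm x hx, rfl⟩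
    · rintro ⟨y, hy, rfl⟩
      have : 0 < t - s := by linarith
      refine ⟨(y - s) / (t - s), ⟨div_nonneg (by linarith [hy.1]) this.le,
        (div_le_one this).2 (by linarith [hy.2])⟩, ?_⟩
      simp only
      congr 1
      field_simp
      ring

/-- An interior point of an arc cuts it into two arcs. -/
lemma _root_.IsArcEnds.split (h : IsArcEnds A a b) {q : Sph} (hq : q ∈ A) (hqa : q ≠ a)
    (hqb : q ≠ b) :
    ∃ A₁ A₂, IsArcEnds A₁ a q ∧ IsArcEnds A₂ q b ∧ A = A₁ ∪ A₂ ∧ A₁ ∩ A₂ = {q} := by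
  obtain ⟨f, hf, hi, rfl, rfl, rfl⟩ := h
  obtain ⟨t, ht, rfl⟩ := hq
  have h0 : 0 < t := lt_of_le_of_ne ht.1 fun h => hqa (by rw [← h])
  have h1 : t < 1 := lt_of_le_of_ne ht.2 fun h => hqb (by rw [← h])
  refine ⟨f '' Icc 0 t, f '' Icc t 1, subarc hf hi le_rfl h0 h1.le,
    subarc hf hi h0.le h1 le_rfl, ?_, ?_⟩
  · rw [← image_union, Icc_union_Icc_eq_Icc h0.le h1.le]
  · ext z
    constructor
    · rintro ⟨⟨x, hx, rfl⟩, y, hy, hxy⟩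
      have := hi ⟨h0.le.trans hy.1, hy.2⟩ ⟨hx.1, hx.2.trans h1.le⟩ hxy
      have : x = t := le_antisymm hx.2 (this ▸ hy.1)
      rw [this]; rfl
    · rintro rfl
      exact ⟨⟨t, ⟨h0.le, le_rfl⟩, rfl⟩, t, ⟨le_rfl, h1.le⟩, rfl⟩

end Arcs

lemma Acy.union {A B : Set Sph} (hA : Acy A) (hB : Acy B) {x : Sph} (h : A ∩ B = {x}) :
    Acy (A ∪ B) := by
  have hx : x ∈ A ∩ B := by rw [h]; rfl
  refine ⟨hA.cpt.union hB.cpt, hA.conn.union x hx.1 hx.2 hB.conn, fun f hf h0 => ?_⟩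
  obtain ⟨g1, hg1, he1⟩ := hA.log f (hf.mono subset_union_left) fun z hz => h0 z (Or.inl hz)
  obtain ⟨g2, hg2, he2⟩ := hB.log f (hf.mono subset_union_right) fun z hz => h0 z (Or.inr hz)
  exact glue_log (u := x) (v := x) hA.closed hB.closed (by simpa using h) hg1 hg2 he1 he2
    (by simp)

variable (c : PoleChart)

open Classical in
/-- The variation from `u` to `v` of a continuous logarithm of `φ z - φ p` on `A`
(`0` if there is no such logarithm). -/
def th (A : Set Sph) (p u v : Sph) : ℂ :=
  if h : HasLog A (c.m p) then h.choose v - h.choose u else 0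

section

variable {c} {A B : Set Sph} {p u v w : Sph}

lemma Acy.hasLog (hA : Acy A) (ho : c.o ∉ A) (hp : p ∉ A) : HasLog A (c.m p) :=
  hA.log _ (c.m_cont ho p) fun _ hz => c.m_ne (fun h => ho (h ▸ hz)) fun h => hp (h ▸ hz)

lemma th_eq (hA : IsPreconnected A) (hu : u ∈ A) (hv : v ∈ A) {g : Sph → ℂ}
    (hg : ContinuousOn g A) (he : ∀ z ∈ A, Complex.exp (g z) = c.m p z) :
    th c A p u v = g v - g u := by
  have h : HasLog A (c.m p) := ⟨g, hg, he⟩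
  rw [th, dif_pos h]
  obtain ⟨h1, h2⟩ := h.choose_spec
  have := log_diff_const hA (g := fun z => h.choose z - g z) (h1.sub hg) (fun z hz => by
    rw [Complex.exp_sub, h2 z hz, he z hz, div_self]
    rw [← he z hz]; exact Complex.exp_ne_zero _) hu hv
  linear_combination -this

lemma th_symm : th c A p v u = - th c A p u v := by
  unfold th; split_ifs <;> simp

lemma th_exp (hA : Acy A) (ho : c.o ∉ A) (hp : p ∉ A) (hu : u ∈ A) (hv : v ∈ A) :
    Complex.exp (th c A p u v) = c.m p v / c.m p u := by
  obtain ⟨g, hg, he⟩ := hA.hasLog ho hp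
  rw [th_eq hA.conn hu hv hg he, Complex.exp_sub, he v hv, he u hu]

lemma th_mono (hA : Acy A) (ho : c.o ∉ A) (hp : p ∉ A) (hB : IsPreconnected B) (hBA : B ⊆ A)
    (hu : u ∈ B) (hv : v ∈ B) : th c B p u v = th c A p u v := by
  obtain ⟨g, hg, he⟩ := hA.hasLog ho hp
  rw [th_eq hA.conn (hBA hu) (hBA hv) hg he,
    th_eq hB hu hv (hg.mono hBA) fun z hz => he z (hBA hz)]

lemma th_add (hA : Acy A) (ho : c.o ∉ A) (hp : p ∉ A) (hu : u ∈ A) (hv : v ∈ A) (hw : w ∈ A) :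
    th c A p u v + th c A p v w = th c A p u w := by
  obtain ⟨g, hg, he⟩ := hA.hasLog ho hp
  rw [th_eq hA.conn hu hv hg he, th_eq hA.conn hv hw hg he, th_eq hA.conn hu hw hg he]
  ring

/-- Additivity of the variation under concatenation. -/
lemma th_union (hA : Acy A) (hB : Acy B) (hAB : A ∩ B = {v}) (hoA : c.o ∉ A) (hoB : c.o ∉ B)
    (hpA : p ∉ A) (hpB : p ∉ B) (hu : u ∈ A) (hw : w ∈ B) :
    th c (A ∪ B) p u w = th c A p u v + th c B p v w := by
  have hv : v ∈ A ∩ B := by rw [hAB]; rfl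
  have ho : c.o ∉ A ∪ B := fun h => h.elim hoA hoB
  have hp : p ∉ A ∪ B := fun h => h.elim hpA hpB
  have hU := hA.union hB hAB
  rw [th_mono hU ho hp hA.conn subset_union_left hu hv.1,
    th_mono hU ho hp hB.conn subset_union_right hv.2 hw,
    th_add hU ho hp (Or.inl hu) (Or.inl hv.1) (Or.inr hw)]

end

/-- The ratio of `m p z` and `m p₀ z`, normalized so as to be close to `1` for `p` near `p₀`. -/
def rho (p₀ p z : Sph) : ℂ :=
  if p₀ = c.o then (if p = c.o then 1 else 1 - c.φ z / c.φ p)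
  else (c.φ z - c.φ p) / (c.φ z - c.φ p₀)

variable {c}

lemma rho_near (p₀ : Sph) {A : Set Sph} (hA : IsCompact A) (ho : c.o ∉ A) (hp : p₀ ∉ A) {ε : ℝ}
    (hε : 0 < ε) : ∀ᶠ p in 𝓝 p₀, p ∉ A ∧ ContinuousOn (rho c p₀ p) A ∧
      (∀ z ∈ A, ‖rho c p₀ p z - 1‖ < ε) ∧
      ∃ κ : ℂ, κ ≠ 0 ∧ ∀ z ∈ A, c.m p z = κ * c.m p₀ z * rho c p₀ p z := by
  have hφ := c.contOn ho
  have hoff : ∀ᶠ p in 𝓝 p₀, p ∉ A := hA.isClosed.isOpen_compl.mem_nhds hp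
  by_cases h0 : p₀ = c.o
  · subst h0
    obtain ⟨R, hR⟩ := (hA.image_of_continuousOn hφ).isBounded.exists_norm_le
    filter_upwards [hoff, c.eventually_large (max (R / ε) (max R 0))] with p hp hlarge
    by_cases hpo : p = c.o
    · subst hpo
      exact ⟨ho, by unfold rho; simp [continuousOn_const], by simp [rho, hε], 1, one_ne_zero,
        by simp [rho]⟩
    have hl := hlarge.resolve_left hpo
    have h1 : R / ε < ‖c.φ p‖ := (le_max_left _ _).trans_lt hl
    have hpos : 0 < ‖c.φ p‖ :=
      (((le_max_right R 0).trans (le_max_right _ _)).trans_lt hl)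
    have hne : c.φ p ≠ 0 := norm_pos_iff.1 hpos
    refine ⟨hp, ?_, ?_, -c.φ p, neg_ne_zero.2 hne, ?_⟩
    · unfold rho
      simp only [hpo, if_true, if_false]
      exact continuousOn_const.sub (hφ.div_const _)
    · intro z hz
      simp only [rho, hpo, if_true, if_false]
      have hzR := hR _ (mem_image_of_mem _ hz)
      rw [show (1 - c.φ z / c.φ p - 1 : ℂ) = -(c.φ z / c.φ p) by ring, norm_neg, norm_div,
        div_lt_iff₀ hpos]
      rw [div_lt_iff₀ hε] at h1
      linarith
    · intro z hz
      simp only [rho, PoleChart.m, hpo, if_true, if_false]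
      field_simp
      ring
  · have hne : ∀ z ∈ A, c.φ z - c.φ p₀ ≠ 0 := fun z hz h => hp <| by
      rwa [← c.φ_inj (fun h => ho (h ▸ hz)) h0 (sub_eq_zero.1 h)]
    obtain ⟨δ, hδ, hd⟩ : ∃ δ > 0, ∀ z ∈ A, δ ≤ ‖c.φ z - c.φ p₀‖ := by
      rcases A.eq_empty_or_nonempty with rfl | hAne
      · exact ⟨1, one_pos, by simp⟩
      obtain ⟨z0, hz0, hmin⟩ := hA.exists_isMinOn hAne (hφ.sub continuousOn_const).norm
      exact ⟨_, norm_pos_iff.2 (hne z0 hz0), fun z hz => hmin hz⟩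
    have hnear : ∀ᶠ p in 𝓝 p₀, ‖c.φ p - c.φ p₀‖ < ε * δ := by
      have := Metric.continuousAt_iff'.1 (c.contAt h0) (ε * δ) (by positivity)
      simpa [dist_eq_norm] using this
    have hpo : ∀ᶠ p in 𝓝 p₀, p ≠ c.o := isOpen_ne.mem_nhds h0
    filter_upwards [hoff, hnear, hpo] with p hp hn hpo
    refine ⟨hp, ?_, ?_, 1, one_ne_zero, ?_⟩
    · unfold rho
      simp only [h0, if_false]
      exact (hφ.sub continuousOn_const).div (hφ.sub continuousOn_const) hne
    · intro z hz
      simp only [rho, h0, if_false]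
      rw [div_sub_one (hne z hz), norm_div, div_lt_iff₀ (norm_pos_iff.2 (hne z hz))]
      calc _ = ‖c.φ p - c.φ p₀‖ := by rw [← norm_neg]; congr 1; ring
        _ < ε * δ := hn
        _ ≤ _ := by gcongr; exact hd z hz
    · intro z hz
      have := hne z hz
      simp only [rho, PoleChart.m, h0, hpo, if_false]
      field_simp

/-- As `p` moves near `p₀`, the variation along `A` changes by the difference of the values at the
two ends of a function that does not depend on `A`. -/
lemma th_near (p₀ : Sph) {A : Set Sph} (hA : Acy A) (ho : c.o ∉ A) (hp : p₀ ∉ A) :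
    ∀ᶠ p in 𝓝 p₀, p ∉ A ∧ ∀ u ∈ A, ∀ v ∈ A, th c A p u v =
      th c A p₀ u v + Complex.log (rho c p₀ p v) - Complex.log (rho c p₀ p u) := by
  filter_upwards [rho_near p₀ hA.cpt ho hp one_pos] with p ⟨h1, h2, h3, κ, hκ, h4⟩
  refine ⟨h1, fun u hu v hv => ?_⟩
  obtain ⟨g, hg, he⟩ := hA.hasLog ho hp
  have hsl : ∀ z ∈ A, rho c p₀ p z ∈ Complex.slitPlane := fun z hz => by
    simpa using Complex.mem_slitPlane_of_norm_lt_one (h3 z hz)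
  rw [th_eq hA.conn hu hv hg he, th_eq hA.conn hu hv
    (g := fun z => Complex.log κ + g z + Complex.log (rho c p₀ p z))
    ((continuousOn_const.add hg).add (h2.clog hsl)) (fun z hz => by
      rw [Complex.exp_add, Complex.exp_add, Complex.exp_log hκ, he z hz,
        Complex.exp_log (Complex.slitPlane_ne_zero (hsl z hz)), h4 z hz])]
  ring

lemma tendsto_log_rho (p₀ : Sph) {z : Sph} (hz : z ≠ c.o) (hzp : z ≠ p₀) :
    Filter.Tendsto (fun p => Complex.log (rho c p₀ p z)) (𝓝 p₀) (𝓝 0) := by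
  have h1 : Filter.Tendsto (fun p => rho c p₀ p z) (𝓝 p₀) (𝓝 1) := by
    rw [Metric.tendsto_nhds]
    intro ε hε
    filter_upwards [rho_near p₀ (isCompact_singleton (x := z)) (by simpa using hz.symm)
      (by simpa using hzp.symm) hε] with p hp
    simpa [dist_eq_norm] using hp.2.2.1 z rfl
  simpa using h1.clog (by simp)

lemma th_continuousAt {p₀ : Sph} {A : Set Sph} (hA : Acy A) (ho : c.o ∉ A) (hp : p₀ ∉ A)
    {u v : Sph} (hu : u ∈ A) (hv : v ∈ A) : ContinuousAt (fun p => th c A p u v) p₀ := by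
  have hne : ∀ z ∈ A, z ≠ c.o ∧ z ≠ p₀ := fun z hz =>
    ⟨fun h => ho (h ▸ hz), fun h => hp (h ▸ hz)⟩
  have h1 : Filter.Tendsto (fun p => th c A p₀ u v + Complex.log (rho c p₀ p v)
      - Complex.log (rho c p₀ p u)) (𝓝 p₀) (𝓝 (th c A p₀ u v + 0 - 0)) :=
    (tendsto_const_nhds.add (tendsto_log_rho p₀ (hne v hv).1 (hne v hv).2)).sub
      (tendsto_log_rho p₀ (hne u hu).1 (hne u hu).2)
  rw [add_zero, sub_zero] at h1
  refine h1.congr' ?_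
  filter_upwards [th_near p₀ hA ho hp] with p hp
  exact (hp.2 u hu v hv).symm

end HConv

namespace HConv

/-! ### Winding numbers of closed curves and their complementary components -/

/-- The integer `n` with `z = 2πi n`, for `z` with `exp z = 1`. -/
def toZ (z : ℂ) : ℤ := round (z / (2 * Real.pi * Complex.I)).re

lemma toZ_spec {z : ℂ} (h : Complex.exp z = 1) : z = toZ z * (2 * Real.pi * Complex.I) := by
  obtain ⟨n, rfl⟩ := Complex.exp_eq_one_iff.1 h
  have : (n : ℂ) * (2 * Real.pi * Complex.I) / (2 * Real.pi * Complex.I) = n :=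
    mul_div_cancel_right₀ _ Complex.two_pi_I_ne_zero
  rw [toZ, this]
  simp

lemma int_eq_of_mul {m n : ℤ}
    (h : (m : ℂ) * (2 * Real.pi * Complex.I) = n * (2 * Real.pi * Complex.I)) : m = n := by
  have := mul_right_cancel₀ Complex.two_pi_I_ne_zero h
  exact_mod_cast this

lemma const_on_conn {f : Sph → ℤ} {S : Set Sph} (hS : IsPreconnected S)
    (hf : ∀ p ∈ S, ∀ᶠ q in 𝓝 p, f q = f p) {x y : Sph} (hx : x ∈ S) (hy : y ∈ S) :
    f x = f y :=
  hS.constant (fun p hp => (continuousAt_const.congr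
    ((hf p hp).mono fun _ hq => hq.symm)).continuousWithinAt) hx hy

/-- Two arc-like pieces `A`, `B` with exactly the two points `u ≠ v` in common; they form a closed
curve. -/
structure Pair (c : PoleChart) (A B : Set Sph) (u v : Sph) : Prop where
  acyA : Acy A
  acyB : Acy B
  inter : A ∩ B = {u, v}
  ne : u ≠ v
  oA : c.o ∉ A
  oB : c.o ∉ B

/-- The winding number about `p` of the closed curve running through `A` from `u` to `v` and back
through `B`. -/
def W2 (c : PoleChart) (A B : Set Sph) (u v p : Sph) : ℤ :=
  toZ (th c A p u v - th c B p u v)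

/-- `W` attains near `q`, off `C`, values which are not all congruent modulo any `d ≠ ±1`. -/
def Mixes (C : Set Sph) (W : Sph → ℤ) (q : Sph) : Prop :=
  ∀ N ∈ 𝓝 q, ∀ d n : ℤ, (∀ p ∈ N, p ∉ C → d ∣ W p - n) → d ∣ 1

namespace Pair

variable {c : PoleChart} {A B : Set Sph} {u v : Sph} (H : Pair c A B u v)
include H

lemma uA : u ∈ A := (H.inter ▸ (by simp : u ∈ ({u, v} : Set Sph)) : u ∈ A ∩ B).1
lemma uB : u ∈ B := (H.inter ▸ (by simp : u ∈ ({u, v} : Set Sph)) : u ∈ A ∩ B).2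
lemma vA : v ∈ A := (H.inter ▸ (by simp : v ∈ ({u, v} : Set Sph)) : v ∈ A ∩ B).1
lemma vB : v ∈ B := (H.inter ▸ (by simp : v ∈ ({u, v} : Set Sph)) : v ∈ A ∩ B).2

lemma closed : IsClosed (A ∪ B) := H.acyA.closed.union H.acyB.closed

lemma o_not : c.o ∉ A ∪ B := fun h => h.elim H.oA H.oB

lemma spec {p : Sph} (hp : p ∉ A ∪ B) :
    th c A p u v - th c B p u v = W2 c A B u v p * (2 * Real.pi * Complex.I) := by
  have hpA : p ∉ A := fun h => hp (Or.inl h)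
  have hpB : p ∉ B := fun h => hp (Or.inr h)
  refine toZ_spec ?_
  rw [Complex.exp_sub, th_exp H.acyA H.oA hpA H.uA H.vA, th_exp H.acyB H.oB hpB H.uB H.vB,
    div_self]
  refine div_ne_zero (c.m_ne ?_ ?_) (c.m_ne ?_ ?_)
  · exact fun h => H.oA (h ▸ H.vA)
  · exact fun h => hpA (h ▸ H.vA)
  · exact fun h => H.oA (h ▸ H.uA)
  · exact fun h => hpA (h ▸ H.uA)

lemma locConst {p : Sph} (hp : p ∉ A ∪ B) :
    ∀ᶠ q in 𝓝 p, W2 c A B u v q = W2 c A B u v p := by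
  have hpA : p ∉ A := fun h => hp (Or.inl h)
  have hpB : p ∉ B := fun h => hp (Or.inr h)
  filter_upwards [th_near p H.acyA H.oA hpA, th_near p H.acyB H.oB hpB] with q hqA hqB
  have hq : q ∉ A ∪ B := fun h => h.elim hqA.1 hqB.1
  apply int_eq_of_mul
  rw [← H.spec hp, ← H.spec hq, hqA.2 u H.uA v H.vA, hqB.2 u H.uB v H.vB]
  ring

lemma eq_of_comp {p q : Sph} (hp : p ∉ A ∪ B)
    (hq : q ∈ connectedComponentIn (A ∪ B)ᶜ p) : W2 c A B u v q = W2 c A B u v p :=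
  const_on_conn isPreconnected_connectedComponentIn
    (fun _ hx => H.locConst (connectedComponentIn_subset _ _ hx)) hq (mem_connectedComponentIn hp)

/-- If `p` and `q` have the same winding number, then `(φ z - φ p) / (φ z - φ q)` has a continuous
logarithm on the curve, so that the curve does not separate `p` from `q`. -/
lemma sep_aux {p q : Sph} (hp : p ∉ A ∪ B) (hq : q ∉ A ∪ B)
    (hW : W2 c A B u v p = W2 c A B u v q) (ho : c.o ∉ connectedComponentIn (A ∪ B)ᶜ p) :
    q ∈ connectedComponentIn (A ∪ B)ᶜ p := by
  by_contra hqU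
  set U := connectedComponentIn (A ∪ B)ᶜ p with hU
  have hoUK : c.o ∉ U ∪ (A ∪ B) := fun h => h.elim ho H.o_not
  obtain ⟨gp, hgp, hep⟩ := H.acyA.hasLog H.oA (fun h => hp (Or.inl h) : p ∉ A)
  obtain ⟨gp', hgp', hep'⟩ := H.acyB.hasLog H.oB (fun h => hp (Or.inr h) : p ∉ B)
  obtain ⟨gq, hgq, heq⟩ := H.acyA.hasLog H.oA (fun h => hq (Or.inl h) : q ∉ A)
  obtain ⟨gq', hgq', heq'⟩ := H.acyB.hasLog H.oB (fun h => hq (Or.inr h) : q ∉ B)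
  have h1 := H.spec hp
  have h2 := H.spec hq
  rw [th_eq H.acyA.conn H.uA H.vA hgp hep, th_eq H.acyB.conn H.uB H.vB hgp' hep'] at h1
  rw [th_eq H.acyA.conn H.uA H.vA hgq heq, th_eq H.acyB.conn H.uB H.vB hgq' heq', ← hW] at h2
  obtain ⟨g, hg, he⟩ := glue_log H.acyA.closed H.acyB.closed H.inter
    (f := fun z => c.m p z / c.m q z) (hgp.sub hgq) (hgp'.sub hgq')
    (fun z hz => by simp only [Pi.sub_apply, Complex.exp_sub, hep z hz, heq z hz])
    (fun z hz => by simp only [Pi.sub_apply, Complex.exp_sub, hep' z hz, heq' z hz])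
    (by simp only [Pi.sub_apply]; linear_combination h1 - h2)
  have hmq : ∀ z ∈ U ∪ (A ∪ B), c.m q z ≠ 0 := fun z hz =>
    c.m_ne (fun h => hoUK (h ▸ hz)) fun h => (h ▸ hz : q ∈ U ∪ (A ∪ B)).elim hqU hq
  have := eilenberg c H.closed H.closed.isOpen_compl.connectedComponentIn
    (isClosed_comp_union H.closed p) hoUK (mem_connectedComponentIn hp)
    (h := fun z => (c.m q z)⁻¹) (g := g) (a := 1)
    ((c.m_cont hoUK q).inv₀ hmq) (fun z hz => inv_ne_zero (hmq z hz)) hg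
    (fun z hz => by rw [he z hz, zpow_one]; exact div_eq_mul_inv _ _)
  exact one_ne_zero this

lemma comp_of_eq {p q : Sph} (hp : p ∉ A ∪ B) (hq : q ∉ A ∪ B)
    (hW : W2 c A B u v p = W2 c A B u v q) : q ∈ connectedComponentIn (A ∪ B)ᶜ p := by
  by_cases ho : c.o ∈ connectedComponentIn (A ∪ B)ᶜ p
  · by_cases ho' : c.o ∈ connectedComponentIn (A ∪ B)ᶜ q
    · rw [connectedComponentIn_eq ho, ← connectedComponentIn_eq ho']
      exact mem_connectedComponentIn hq
    · have := H.sep_aux hq hp hW.symm ho'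
      rw [← connectedComponentIn_eq this]
      exact mem_connectedComponentIn hq
  · exact H.sep_aux hp hq hW ho

/-- Three points with distinct winding numbers cannot exist: some product of powers of the
functions `φ z - φ pᵢ` would have a continuous logarithm on the curve. -/
lemma two_aux {p₀ p₁ p₂ : Sph} (h₀ : p₀ ∉ A ∪ B) (h₁ : p₁ ∉ A ∪ B) (h₂ : p₂ ∉ A ∪ B)
    (d₀₁ : W2 c A B u v p₀ ≠ W2 c A B u v p₁) (d₁₂ : W2 c A B u v p₁ ≠ W2 c A B u v p₂)
    (d₀₂ : W2 c A B u v p₀ ≠ W2 c A B u v p₂)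
    (ho : c.o ∉ connectedComponentIn (A ∪ B)ᶜ p₁) : False := by
  set U := connectedComponentIn (A ∪ B)ᶜ p₁ with hU
  have hoUK : c.o ∉ U ∪ (A ∪ B) := fun h => h.elim ho H.o_not
  have key : ∀ p, p ∉ A ∪ B → ∃ g g' : Sph → ℂ, ContinuousOn g A ∧ ContinuousOn g' B ∧
      (∀ z ∈ A, Complex.exp (g z) = c.m p z) ∧ (∀ z ∈ B, Complex.exp (g' z) = c.m p z) ∧
      (g v - g u) - (g' v - g' u) = W2 c A B u v p * (2 * Real.pi * Complex.I) := by
    intro p hp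
    obtain ⟨g, hg, he⟩ := H.acyA.hasLog H.oA (fun h => hp (Or.inl h) : p ∉ A)
    obtain ⟨g', hg', he'⟩ := H.acyB.hasLog H.oB (fun h => hp (Or.inr h) : p ∉ B)
    have h1 := H.spec hp
    rw [th_eq H.acyA.conn H.uA H.vA hg he, th_eq H.acyB.conn H.uB H.vB hg' he'] at h1
    exact ⟨g, g', hg, hg', he, he', h1⟩
  obtain ⟨g₀, g₀', hg₀, hg₀', he₀, he₀', s₀⟩ := key p₀ h₀
  obtain ⟨g₁, g₁', hg₁, hg₁', he₁, he₁', s₁⟩ := key p₁ h₁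
  obtain ⟨g₂, g₂', hg₂, hg₂', he₂, he₂', s₂⟩ := key p₂ h₂
  set k₀ := W2 c A B u v p₀
  set k₁ := W2 c A B u v p₁
  set k₂ := W2 c A B u v p₂
  obtain ⟨g, hg, he⟩ := glue_log H.acyA.closed H.acyB.closed H.inter
    (f := fun z => c.m p₁ z ^ (k₂ - k₀) * (c.m p₂ z ^ (k₀ - k₁) * c.m p₀ z ^ (k₁ - k₂)))
    (gA := fun z => ((k₂ - k₀ : ℤ) : ℂ) * g₁ z +
      (((k₀ - k₁ : ℤ) : ℂ) * g₂ z + ((k₁ - k₂ : ℤ) : ℂ) * g₀ z))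
    (gB := fun z => ((k₂ - k₀ : ℤ) : ℂ) * g₁' z +
      (((k₀ - k₁ : ℤ) : ℂ) * g₂' z + ((k₁ - k₂ : ℤ) : ℂ) * g₀' z))
    ((continuousOn_const.mul hg₁).add ((continuousOn_const.mul hg₂).add
      (continuousOn_const.mul hg₀)))
    ((continuousOn_const.mul hg₁').add ((continuousOn_const.mul hg₂').add
      (continuousOn_const.mul hg₀')))
    (fun z hz => by
      rw [Complex.exp_add, Complex.exp_add, Complex.exp_int_mul, Complex.exp_int_mul,
        Complex.exp_int_mul, he₀ z hz, he₁ z hz, he₂ z hz])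
    (fun z hz => by
      rw [Complex.exp_add, Complex.exp_add, Complex.exp_int_mul, Complex.exp_int_mul,
        Complex.exp_int_mul, he₀' z hz, he₁' z hz, he₂' z hz])
    (by
      push_cast
      linear_combination ((k₂ : ℂ) - k₀) * s₁ + ((k₀ : ℂ) - k₁) * s₂ + ((k₁ : ℂ) - k₂) * s₀)
  have hm : ∀ p, p ∉ A ∪ B → W2 c A B u v p ≠ k₁ → ∀ z ∈ U ∪ (A ∪ B), c.m p z ≠ 0 :=
    fun p hp hpk z hz => c.m_ne (fun h => hoUK (h ▸ hz)) fun h =>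
      (h ▸ hz : p ∈ U ∪ (A ∪ B)).elim (fun h => hpk (H.eq_of_comp h₁ h)) hp
  have hm0 := hm p₀ h₀ d₀₁
  have hm2 := hm p₂ h₂ d₁₂.symm
  have := eilenberg c H.closed H.closed.isOpen_compl.connectedComponentIn
    (isClosed_comp_union H.closed p₁) hoUK (mem_connectedComponentIn h₁)
    (h := fun z => c.m p₂ z ^ (k₀ - k₁) * c.m p₀ z ^ (k₁ - k₂)) (g := g) (a := k₂ - k₀)
    (((c.m_cont hoUK p₂).zpow₀ _ fun z hz => Or.inl (hm2 z hz)).mul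
      ((c.m_cont hoUK p₀).zpow₀ _ fun z hz => Or.inl (hm0 z hz)))
    (fun z hz => mul_ne_zero (zpow_ne_zero _ (hm2 z hz)) (zpow_ne_zero _ (hm0 z hz))) hg
    (fun z hz => he z hz)
  exact d₀₂ (by omega)

lemma at_most_two {p₀ p₁ p₂ : Sph} (h₀ : p₀ ∉ A ∪ B) (h₁ : p₁ ∉ A ∪ B) (h₂ : p₂ ∉ A ∪ B)
    (d₀₁ : W2 c A B u v p₀ ≠ W2 c A B u v p₁) (d₁₂ : W2 c A B u v p₁ ≠ W2 c A B u v p₂)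
    (d₀₂ : W2 c A B u v p₀ ≠ W2 c A B u v p₂) : False := by
  by_cases ho : c.o ∈ connectedComponentIn (A ∪ B)ᶜ p₁
  · refine H.two_aux h₀ h₂ h₁ d₀₂ d₁₂.symm d₀₁ fun ho' => d₁₂ ?_
    rw [← H.eq_of_comp h₁ ho, ← H.eq_of_comp h₂ ho']
  · exact H.two_aux h₀ h₁ h₂ d₀₁ d₁₂ d₀₂ ho

/-- If all winding numbers near `u` were congruent modulo `d`, the `d`-th roots
`exp ((variation along A) / d)` and `exp ((variation along B) / d)` would fit together to a `d`-th
root of `(φ v - z) / (φ u - z)` on a small circle about `φ u`. -/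
lemma mixes_left : Mixes (A ∪ B) (W2 c A B u v) u := by
  classical
  have main : ∀ N ∈ 𝓝 u, ∀ d n : ℤ, d ≠ 0 →
      (∀ p ∈ N, p ∉ A ∪ B → d ∣ W2 c A B u v p - n) → d ∣ 1 := by
    intro N hN d n hd hdiv
    have hdc : (d : ℂ) ≠ 0 := by exact_mod_cast hd
    have hou : u ≠ c.o := fun h => H.oA (h ▸ H.uA)
    have hov : v ≠ c.o := fun h => H.oA (h ▸ H.vA)
    have hφne : c.φ v ≠ c.φ u := fun h => H.ne (c.φ_inj hov hou h).symm
    set E := Complex.exp (n * (2 * Real.pi * Complex.I) / d) with hE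
    set R : Sph → ℂ := fun p => if p ∈ A then E * Complex.exp (th c B p u v / d)
      else Complex.exp (th c A p u v / d) with hR
    have hRA : ∀ p ∉ A, R p = Complex.exp (th c A p u v / d) := fun p hp => by simp [hR, hp]
    have hRB : ∀ p ∈ N, p ∉ B → R p = E * Complex.exp (th c B p u v / d) := by
      intro p hpN hpB
      by_cases hpA : p ∈ A
      · simp [hR, hpA]
      · have hp : p ∉ A ∪ B := fun h => h.elim hpA hpB
        obtain ⟨k, hk⟩ := hdiv p hpN hp
        have hs := H.spec hp
        have hk' : (W2 c A B u v p : ℂ) = n + d * k := by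
          have : W2 c A B u v p = n + d * k := by omega
          exact_mod_cast this
        rw [hk'] at hs
        rw [hRA p hpA, hE, ← Complex.exp_add]
        have : th c A p u v / d = n * (2 * Real.pi * Complex.I) / d + th c B p u v / d
            + k * (2 * Real.pi * Complex.I) := by
          field_simp
          linear_combination hs
        rw [this, Complex.exp_add _ (k * _), Complex.exp_int_mul_two_pi_mul_I, mul_one]
    have hEd : E ^ d = 1 := by
      rw [hE, ← Complex.exp_int_mul, mul_div_cancel₀ _ hdc, Complex.exp_int_mul_two_pi_mul_I]
    have hRd : ∀ p ∈ N, p ≠ u → p ≠ v → R p ^ d = c.m p v / c.m p u := by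
      intro p hpN hpu hpv
      by_cases hpA : p ∈ A
      · have hpB : p ∉ B := fun hpB => by
          have : p ∈ ({u, v} : Set Sph) := H.inter ▸ ⟨hpA, hpB⟩
          exact this.elim hpu hpv
        rw [hRB p hpN hpB, mul_zpow, hEd, one_mul, ← Complex.exp_int_mul,
          mul_div_cancel₀ _ hdc, th_exp H.acyB H.oB hpB H.uB H.vB]
      · rw [hRA p hpA, ← Complex.exp_int_mul, mul_div_cancel₀ _ hdc,
          th_exp H.acyA H.oA hpA H.uA H.vA]
    have hNψ : c.ψ ⁻¹' N ∈ 𝓝 (c.φ u) := by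
      apply c.contψ.continuousAt.preimage_mem_nhds
      rwa [c.left u hou]
    obtain ⟨r₁, hr₁, hball⟩ := Metric.nhds_basis_closedBall.mem_iff.1 hNψ
    set r := min r₁ (dist (c.φ v) (c.φ u) / 2) with hr
    have hdist : 0 < dist (c.φ v) (c.φ u) := dist_pos.2 hφne
    have hrpos : 0 < r := lt_min hr₁ (by linarith)
    have hrlt : r < dist (c.φ v) (c.φ u) := (min_le_right _ _).trans_lt (by linarith)
    have hsN : ∀ z ∈ Metric.sphere (c.φ u) r, c.ψ z ∈ N ∧ c.ψ z ≠ u ∧ c.ψ z ≠ v := by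
      intro z hz
      rw [Metric.mem_sphere] at hz
      refine ⟨hball ?_, fun h => ?_, fun h => ?_⟩
      · rw [Metric.mem_closedBall, hz]; exact min_le_left _ _
      · rw [← h, c.right, dist_self] at hz; exact hrpos.ne hz
      · rw [← h, c.right] at hrlt; exact hrlt.ne hz.symm
    obtain ⟨l, hl, hle⟩ := hasLog_closedBall (f := fun z => z - c.φ v) (u := c.φ u) (r := r)
      (by fun_prop) (fun z hz h => by
        rw [Metric.mem_closedBall, sub_eq_zero.1 h] at hz; linarith)
    refine circle_winding hrpos (R := fun z => R (c.ψ z)) (h := l) (a := 1) ?_ ?_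
      (hl.mono Metric.sphere_subset_closedBall) ?_
    · intro z hz
      obtain ⟨hzN, hzu, hzv⟩ := hsN z hz
      have hψ := c.contψ.continuousAt (x := z)
      have hself : ∀ᶠ y in 𝓝[Metric.sphere (c.φ u) r] z, c.ψ y ∈ N :=
        eventually_mem_nhdsWithin.mono fun y hy => (hsN y hy).1
      by_cases hzA : c.ψ z ∈ A
      · have hzB : c.ψ z ∉ B := fun hzB => by
          have : c.ψ z ∈ ({u, v} : Set Sph) := H.inter ▸ ⟨hzA, hzB⟩
          exact this.elim hzu hzv
        have h1 : ContinuousAt (fun y => E * Complex.exp (th c B (c.ψ y) u v / d)) z :=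
          continuousAt_const.mul (Complex.continuous_exp.continuousAt.comp
            ((ContinuousAt.comp (f := c.ψ) (g := fun p => th c B p u v)
              (th_continuousAt H.acyB H.oB hzB H.uB H.vB) hψ).div_const _))
        refine h1.continuousWithinAt.congr_of_eventuallyEq ?_ (hRB _ hzN hzB)
        have := hψ.preimage_mem_nhds (H.acyB.closed.isOpen_compl.mem_nhds hzB)
        filter_upwards [hself, mem_nhdsWithin_of_mem_nhds this] with y hy1 hy2
        exact hRB _ hy1 hy2
      · have h1 : ContinuousAt (fun y => Complex.exp (th c A (c.ψ y) u v / d)) z :=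
          Complex.continuous_exp.continuousAt.comp
            ((ContinuousAt.comp (f := c.ψ) (g := fun p => th c A p u v)
              (th_continuousAt H.acyA H.oA hzA H.uA H.vA) hψ).div_const _)
        refine h1.continuousWithinAt.congr_of_eventuallyEq ?_ (hRA _ hzA)
        have := hψ.preimage_mem_nhds (H.acyA.closed.isOpen_compl.mem_nhds hzA)
        filter_upwards [mem_nhdsWithin_of_mem_nhds this] with y hy2
        exact hRA _ hy2
    · intro z _
      simp only [hR]
      split_ifs
      · exact mul_ne_zero (Complex.exp_ne_zero _) (Complex.exp_ne_zero _)
      · exact Complex.exp_ne_zero _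
    · intro z hz
      obtain ⟨hzN, hzu, hzv⟩ := hsN z hz
      have hzne : z - c.φ u ≠ 0 := fun h => hzu <| by
        rw [sub_eq_zero.1 h, c.left u hou]
      rw [hRd _ hzN hzu hzv, hle z (Metric.sphere_subset_closedBall hz), zpow_one]
      simp only [PoleChart.m, c.ψ_ne, if_false, c.right]
      rw [show c.φ v - z = -(z - c.φ v) by ring, show c.φ u - z = -(z - c.φ u) by ring,
        neg_div_neg_eq]
      field_simp
  intro N hN d n h
  by_cases hd : d = 0
  · subst hd
    have := main N hN 2 n two_ne_zero fun p hp hpC => by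
      have := h p hp hpC
      rw [zero_dvd_iff] at this
      rw [this]; exact dvd_zero _
    norm_num at this
  · exact main N hN d n hd h

end Pair

end HConv

namespace HConv

/-! ### Triangles of arcs -/

/-- Three arcs `P` (from `u` to `v`), `Q` (from `v` to `w`), `R` (from `w` to `u`) meeting only in
their common ends, and avoiding the pole of the chart `c`. -/
structure Tri (c : PoleChart) (P Q R : Set Sph) (u v w : Sph) : Prop where
  arcP : IsArcEnds P u v
  arcQ : IsArcEnds Q v w
  arcR : IsArcEnds R w u
  PQ : P ∩ Q = {v}
  QR : Q ∩ R = {w}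
  RP : R ∩ P = {u}
  oP : c.o ∉ P
  oQ : c.o ∉ Q
  oR : c.o ∉ R

/-- The winding number about `p` of the closed curve running through `P`, `Q` and `R`. -/
def WT (c : PoleChart) (P Q R : Set Sph) (u v w p : Sph) : ℤ :=
  toZ (th c P p u v + th c Q p v w + th c R p w u)

/-- Set-theoretic bookkeeping: splitting `P = P₁ ∪ P₂` at `q`. -/
lemma split_aux {X : Type*} {P₁ P₂ Q R : Set X} {u v w q : X} (hPQ : (P₁ ∪ P₂) ∩ Q = {v})
    (hQR : Q ∩ R = {w}) (hRP : R ∩ (P₁ ∪ P₂) = {u}) (h12 : P₁ ∩ P₂ = {q}) (uP : u ∈ P₁)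
    (vP : v ∈ P₂) (hqu : q ≠ u) :
    P₂ ∩ Q = {v} ∧ (P₂ ∪ Q) ∩ R = {w} ∧ ((P₂ ∪ Q) ∪ R) ∩ P₁ = {q, u} := by
  have hPQ := Set.ext_iff.1 hPQ
  have hQR := Set.ext_iff.1 hQR
  have hRP := Set.ext_iff.1 hRP
  have h12 := Set.ext_iff.1 h12
  simp only [mem_inter_iff, mem_union, mem_singleton_iff] at hPQ hQR hRP h12
  refine ⟨?_, ?_, ?_⟩
  · ext z; simp only [mem_inter_iff, mem_singleton_iff]; grind
  · ext z; simp only [mem_inter_iff, mem_singleton_iff, mem_union]; grind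
  · ext z; simp only [mem_inter_iff, mem_singleton_iff, mem_union, mem_insert_iff]; grind

namespace Tri

variable {c : PoleChart} {P Q R : Set Sph} {u v w : Sph} (T : Tri c P Q R u v w)
include T

lemma rot : Tri c Q R P v w u :=
  ⟨T.arcQ, T.arcR, T.arcP, T.QR, T.RP, T.PQ, T.oQ, T.oR, T.oP⟩

lemma uwv : u ≠ v ∧ v ≠ w ∧ w ≠ u := ⟨T.arcP.ne, T.arcQ.ne, T.arcR.ne⟩

lemma pair : Pair c (P ∪ Q) R u w := by
  refine ⟨T.arcP.acy.union T.arcQ.acy T.PQ, T.arcR.acy, ?_, T.uwv.2.2.symm,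
    fun h => h.elim T.oP T.oQ, T.oR⟩
  rw [union_inter_distrib_right, T.QR, inter_comm, T.RP]
  rfl

lemma w2_eq {p : Sph} (hp : p ∉ P ∪ Q ∪ R) :
    W2 c (P ∪ Q) R u w p = WT c P Q R u v w p := by
  simp only [mem_union, not_or] at hp
  rw [W2, WT, th_union T.arcP.acy T.arcQ.acy T.PQ T.oP T.oQ hp.1.1 hp.1.2 T.arcP.left_mem
    T.arcQ.right_mem, th_symm (u := u) (v := w), sub_eq_add_neg]

lemma spec {p : Sph} (hp : p ∉ P ∪ Q ∪ R) : th c P p u v + th c Q p v w + th c R p w u =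
    WT c P Q R u v w p * (2 * Real.pi * Complex.I) := by
  rw [← T.w2_eq hp, ← T.pair.spec hp]
  simp only [mem_union, not_or] at hp
  rw [th_union T.arcP.acy T.arcQ.acy T.PQ T.oP T.oQ hp.1.1 hp.1.2 T.arcP.left_mem
    T.arcQ.right_mem, th_symm (u := u) (v := w), sub_eq_add_neg]

lemma closed : IsClosed (P ∪ Q ∪ R) := T.pair.closed

lemma locConst {p : Sph} (hp : p ∉ P ∪ Q ∪ R) :
    ∀ᶠ q in 𝓝 p, WT c P Q R u v w q = WT c P Q R u v w p := by
  filter_upwards [T.pair.locConst hp, T.closed.isOpen_compl.mem_nhds hp] with q hq hqT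
  rw [← T.w2_eq hp, ← T.w2_eq hqT, hq]

lemma comp_of_eq {p q : Sph} (hp : p ∉ P ∪ Q ∪ R) (hq : q ∉ P ∪ Q ∪ R)
    (h : WT c P Q R u v w p = WT c P Q R u v w q) :
    q ∈ connectedComponentIn (P ∪ Q ∪ R)ᶜ p :=
  T.pair.comp_of_eq hp hq (by rw [T.w2_eq hp, T.w2_eq hq, h])

lemma at_most_two {p₀ p₁ p₂ : Sph} (h₀ : p₀ ∉ P ∪ Q ∪ R) (h₁ : p₁ ∉ P ∪ Q ∪ R)
    (h₂ : p₂ ∉ P ∪ Q ∪ R) (d₀₁ : WT c P Q R u v w p₀ ≠ WT c P Q R u v w p₁)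
    (d₁₂ : WT c P Q R u v w p₁ ≠ WT c P Q R u v w p₂)
    (d₀₂ : WT c P Q R u v w p₀ ≠ WT c P Q R u v w p₂) : False :=
  T.pair.at_most_two h₀ h₁ h₂ (by rwa [T.w2_eq h₀, T.w2_eq h₁]) (by rwa [T.w2_eq h₁, T.w2_eq h₂])
    (by rwa [T.w2_eq h₀, T.w2_eq h₂])

omit T in
lemma wt_rot {p : Sph} : WT c Q R P v w u p = WT c P Q R u v w p := by
  unfold WT; congr 1; ring

lemma mixes_u : Mixes (P ∪ Q ∪ R) (WT c P Q R u v w) u := by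
  intro N hN d n h
  exact T.pair.mixes_left N hN d n fun p hp hpT => by rw [T.w2_eq hpT]; exact h p hp hpT

lemma mixes_P {q : Sph} (hq : q ∈ P) (hqv : q ≠ v) :
    Mixes (P ∪ Q ∪ R) (WT c P Q R u v w) q := by
  by_cases hqu : q = u
  · rw [hqu]; exact T.mixes_u
  obtain ⟨P₁, P₂, h₁, h₂, rfl, h₁₂⟩ := T.arcP.split hq hqu hqv
  obtain ⟨e1, e2, e4⟩ := split_aux T.PQ T.QR T.RP h₁₂ h₁.left_mem h₂.right_mem hqu
  have m1 := h₁.left_mem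
  have m2 := h₂.right_mem
  have m4 := T.arcR.right_mem
  have m5 := T.arcQ.right_mem
  have m9 := h₂.left_mem
  have oP := T.oP
  have a1 := h₂.acy.union T.arcQ.acy e1
  have a2 := a1.union T.arcR.acy e2
  have o1 : c.o ∉ P₁ := fun h => oP (Or.inl h)
  have o2 : c.o ∉ P₂ := fun h => oP (Or.inr h)
  have o3 : c.o ∉ P₂ ∪ Q := fun h => h.elim o2 T.oQ
  have H : Pair c ((P₂ ∪ Q) ∪ R) P₁ q u :=
    ⟨a2, h₁.acy, e4, hqu, fun h => h.elim o3 T.oR, o1⟩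
  have hset : P₂ ∪ Q ∪ R ∪ P₁ = P₁ ∪ P₂ ∪ Q ∪ R := by
    ext z; simp only [mem_union]; tauto
  intro N hN d n h
  refine H.mixes_left N hN d n fun p hp hpT => ?_
  rw [hset] at hpT
  have : W2 c (P₂ ∪ Q ∪ R) P₁ q u p = WT c (P₁ ∪ P₂) Q R u v w p := by
    have hpT' := hpT
    simp only [mem_union, not_or] at hpT
    obtain ⟨⟨⟨n1, n2⟩, n3⟩, n4⟩ := hpT
    rw [W2, WT, th_union a1 T.arcR.acy e2 o3 T.oR (fun h => h.elim n2 n3) n4 (Or.inl m9) m4,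
      th_union h₂.acy T.arcQ.acy e1 o2 T.oQ n2 n3 m9 m5,
      th_union h₁.acy h₂.acy h₁₂ o1 o2 n1 n2 m1 m2, th_symm (u := u) (v := q)]
    congr 1
    ring
  rw [this]
  exact h p hp hpT

lemma mixes {q : Sph} (hq : q ∈ P ∪ Q ∪ R) : Mixes (P ∪ Q ∪ R) (WT c P Q R u v w) q := by
  have hr : Q ∪ R ∪ P = P ∪ Q ∪ R := by ext z; simp only [mem_union]; tauto
  have hr2 : R ∪ P ∪ Q = P ∪ Q ∪ R := by ext z; simp only [mem_union]; tauto
  have hf : WT c Q R P v w u = WT c P Q R u v w := funext fun _ => wt_rot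
  have hf2 : WT c R P Q w u v = WT c P Q R u v w := funext fun _ => wt_rot.trans wt_rot
  by_cases hqv : q = v
  · have := T.rot.mixes_u
    rw [hr, hf] at this
    rwa [hqv]
  by_cases hqw : q = w
  · have := T.rot.rot.mixes_u
    rw [hr2, hf2] at this
    rwa [hqw]
  rcases hq with (hq | hq) | hq
  · exact T.mixes_P hq hqv
  · have := T.rot.mixes_P hq hqw
    rwa [hr, hf] at this
  · by_cases hqu : q = u
    · rw [hqu]; exact T.mixes_u
    have := T.rot.rot.mixes_P hq hqu
    rwa [hr2, hf2] at this

/-- The winding number takes exactly two values, which are consecutive integers; starting from the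
value `k` at a given point `x`, the other value is `k - s` with `s = ±1`, and both values are
attained near every point of the curve. -/
lemma values {x : Sph} (hx : x ∉ P ∪ Q ∪ R) : ∃ s : ℤ, (s = 1 ∨ s = -1) ∧
    (∀ p, p ∉ P ∪ Q ∪ R → WT c P Q R u v w p = WT c P Q R u v w x ∨
      WT c P Q R u v w p = WT c P Q R u v w x - s) ∧
    ∀ q ∈ P ∪ Q ∪ R, ∀ N ∈ 𝓝 q,
      (∃ p ∈ N, p ∉ P ∪ Q ∪ R ∧ WT c P Q R u v w p = WT c P Q R u v w x) ∧
      ∃ p ∈ N, p ∉ P ∪ Q ∪ R ∧ WT c P Q R u v w p = WT c P Q R u v w x - s := by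
  set W := WT c P Q R u v w with hW
  set C := P ∪ Q ∪ R with hC
  have huC : u ∈ C := Or.inl (Or.inl T.arcP.left_mem)
  obtain ⟨y, hy, hxy⟩ : ∃ y, y ∉ C ∧ W y ≠ W x := by
    by_contra! h
    have := T.mixes_u univ Filter.univ_mem 0 (W x) fun p _ hp => by
      have := h p hp; rw [← hW, this]; simp
    norm_num at this
  have htwo : ∀ p, p ∉ C → W p = W x ∨ W p = W y := by
    intro p hp
    by_contra! h
    exact T.at_most_two hx hy hp hxy.symm h.2.symm h.1.symm
  have hs : W x - W y = 1 ∨ W x - W y = -1 := by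
    have := T.mixes_u univ Filter.univ_mem (W x - W y) (W x) fun p _ hp => by
      rw [← hW]
      rcases htwo p hp with h | h <;> rw [h]
      · simp
      · exact ⟨-1, by ring⟩
    rwa [← isUnit_iff_dvd_one, Int.isUnit_iff] at this
  refine ⟨W x - W y, hs, fun p hp => (htwo p hp).imp id fun h => by omega, ?_⟩
  intro q hq N hN
  have key : ∀ k, (∀ p ∈ N, p ∉ C → W p = k) → False := fun k h => by
    have := T.mixes hq N hN 0 k fun p hp hpC => by
      rw [← hW, h p hp hpC]; simp
    norm_num at this
  constructor
  · by_contra! h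
    exact key (W y) fun p hp hpC => (htwo p hpC).resolve_left (h p hp hpC)
  · by_contra! h
    refine key (W x) fun p hp hpC => (htwo p hpC).resolve_right fun h' => h p hp hpC ?_
    omega

end Tri

end HConv

namespace HConv

/-! ### Arcs are nowhere dense -/

lemma arc_interior {A : Set Sph} {a b : Sph} (h : IsArcEnds A a b) : interior A = ∅ := by
  by_contra hne
  obtain ⟨q₀, hq₀⟩ := nonempty_iff_ne_empty.2 hne
  obtain ⟨c, hc⟩ := exists_poleChart (-q₀)
  have hq₀o : q₀ ≠ c.o := by
    rw [hc]; intro h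
    have h1 : ((q₀ : Sph) : EuclideanSpace ℝ (Fin 3)) = -q₀ := congrArg Subtype.val h
    have h2 : ‖(q₀ : EuclideanSpace ℝ (Fin 3))‖ = 1 := by simp
    have h3 : (2 : ℝ) • (q₀ : EuclideanSpace ℝ (Fin 3)) = 0 := by
      rw [two_smul]; nth_rw 1 [h1]; simp
    rw [(smul_eq_zero.1 h3).resolve_left two_ne_zero, norm_zero] at h2
    exact zero_ne_one h2
  have hV : IsOpen (c.ψ ⁻¹' interior A) := isOpen_interior.preimage c.contψ
  have hVne : (c.ψ ⁻¹' interior A).Nonempty := ⟨c.φ q₀, by simpa [c.left q₀ hq₀o] using hq₀⟩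
  have hfin : ({c.φ a, c.φ b} : Set ℂ).Countable := (Set.toFinite _).countable
  obtain ⟨z, hzV, hz⟩ := (hfin.dense_compl ℝ).inter_open_nonempty _ hV hVne
  have hqA : c.ψ z ∈ A := interior_subset hzV
  have hqa : c.ψ z ≠ a := fun h => hz (Or.inl (by rw [← h, c.right]))
  have hqb : c.ψ z ≠ b := fun h => hz (Or.inr (by rw [← h, c.right]; rfl))
  obtain ⟨A₁, A₂, h₁, h₂, hA, h₁₂⟩ := h.split hqA hqa hqb
  obtain ⟨r, hr, hball⟩ := Metric.isOpen_iff.1 hV z hzV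
  set N := c.ψ '' Metric.ball z r with hN
  have hNo : IsOpen N := c.isOpen_image Metric.isOpen_ball
  have hzN : c.ψ z ∈ N := ⟨z, Metric.mem_ball_self hr, rfl⟩
  have hNA : N ⊆ A := by
    rintro _ ⟨y, hy, rfl⟩
    exact interior_subset (hball hy)
  have hconn : IsPreconnected (N \ {c.ψ z}) := by
    have h1 : IsPreconnected (Metric.ball z r \ {z}) := by
      -- polar coordinates about `z`
      have hI : IsPreconnected (Ioo 0 r ×ˢ (univ : Set ℝ)) := isPreconnected_Ioo.prod isPreconnected_univ
      convert hI.image (fun x : ℝ × ℝ => z + x.1 * Complex.exp (x.2 * Complex.I))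
        (by fun_prop) using 1
      ext y
      simp only [mem_sdiff, Metric.mem_ball, mem_singleton_iff, mem_image, mem_prod, mem_Ioo, mem_univ,
        and_true, Prod.exists]
      constructor
      · rintro ⟨h1, h2⟩
        refine ⟨‖y - z‖, Complex.arg (y - z), ⟨norm_pos_iff.2 (sub_ne_zero.2 h2), ?_⟩, ?_⟩
        · rwa [← dist_eq_norm]
        · rw [Complex.norm_mul_exp_arg_mul_I]; ring
      · rintro ⟨t, θ, ⟨h1, h2⟩, rfl⟩
        refine ⟨?_, ?_⟩
        · simpa [dist_eq_norm, Complex.norm_exp_ofReal_mul_I, abs_of_pos h1] using h2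
        · simpa using h1.ne'
    have h2 : N \ {c.ψ z} = c.ψ '' (Metric.ball z r \ {z}) := by
      rw [image_sdiff c.ψ_inj, image_singleton]
    rw [h2]
    exact h1.image _ c.contψ.continuousOn
  -- the punctured disc `N \ {q}` lies on one side of `q`
  have key : ∀ {B : Set Sph} {e : Sph}, IsArcEnds B (c.ψ z) e → ¬ B ∩ N ⊆ {c.ψ z} := by
    intro B e hB hBN
    have hpc := hB.acy.conn
    have hcl : IsClosed ({c.ψ z} : Set Sph) := isClosed_singleton
    obtain ⟨y, hy1, hy2, hy3⟩ := hpc N {c.ψ z}ᶜ hNo hcl.isOpen_compl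
      (fun y _ => by
        by_cases hy : y = c.ψ z
        · left; rw [hy]; exact hzN
        · right; exact hy) ⟨_, hB.left_mem, hzN⟩ ⟨e, hB.right_mem, fun h => hB.ne h.symm⟩
    exact hy3 (hBN ⟨hy1, hy2⟩)
  have hcov := isPreconnected_closed_iff.1 hconn A₁ A₂ h₁.acy.closed h₂.acy.closed
    (fun y hy => by rw [← hA]; exact hNA hy.1)
  have k1 : ((N \ {c.ψ z}) ∩ A₁).Nonempty := by
    by_contra hcon
    refine key h₁.symm fun y hy => ?_
    by_contra hyz
    exact hcon ⟨y, ⟨hy.2, hyz⟩, hy.1⟩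
  have k2 : ((N \ {c.ψ z}) ∩ A₂).Nonempty := by
    by_contra hcon
    refine key h₂ fun y hy => ?_
    by_contra hyz
    exact hcon ⟨y, ⟨hy.2, hyz⟩, hy.1⟩
  obtain ⟨y, hy1, hy2⟩ := hcov k1 k2
  have : y ∈ ({c.ψ z} : Set Sph) := h₁₂ ▸ hy2
  exact hy1.2 this

/-- The points lying on no edge of the drawing. -/
def offAll {n : ℕ} (D : GoodDrawing n) : Set Sph := {p | ∀ u v, u ≠ v → p ∉ D.edge u v}

lemma offAll_dense {n : ℕ} (D : GoodDrawing n) : Dense (offAll D) := by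
  have h : offAll D = ⋂ i : {i : Fin n × Fin n // i.1 ≠ i.2}, (D.edge i.1.1 i.1.2)ᶜ := by
    ext p; simp [offAll]
  rw [h]
  refine dense_iInter_of_isOpen (fun i => ?_) fun i => ?_
  · exact (D.edge_arc _ _ i.2).acy.closed.isOpen_compl
  · rw [← interior_eq_empty_iff_dense_compl]
    exact arc_interior (D.edge_arc _ _ i.2)

instance : Nonempty Sph := ⟨⟨EuclideanSpace.single 0 1, by simp⟩⟩

end HConv

namespace HConv

/-! ### Signs of the chosen sides of triangles -/

/-- Three pairwise distinct vertices. -/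
abbrev D3 {n : ℕ} (u v w : Fin n) : Prop := u ≠ v ∧ v ≠ w ∧ u ≠ w

lemma D3.rot {n : ℕ} {u v w : Fin n} (h : D3 u v w) : D3 v w u := ⟨h.2.1, h.2.2.symm, h.1.symm⟩
lemma D3.swap {n : ℕ} {u v w : Fin n} (h : D3 u v w) : D3 v u w := ⟨h.1.symm, h.2.2, h.2.1⟩

/-- Four pairwise distinct vertices. -/
abbrev D4 {n : ℕ} (u v w x : Fin n) : Prop := D3 u v w ∧ u ≠ x ∧ v ≠ x ∧ w ≠ x

/-- A witnessing set of convex sides, and a chart of the sphere with pole on no edge. -/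
structure Ctx {n : ℕ} (D : GoodDrawing n) (c : PoleChart) (Δf : Fin n → Fin n → Fin n → Set Sph) :
    Prop where
  pole : c.o ∈ offAll D
  wit : IsHConvexWitness D Δf

/-- The variation of the logarithm of `φ z - φ p` along the edge from `u` to `v`. -/
def ee {n : ℕ} (D : GoodDrawing n) (c : PoleChart) (u v : Fin n) (p : Sph) : ℂ :=
  th c (D.edge u v) p (D.vtx u) (D.vtx v)

/-- The winding number of the triangle `u v w` about `p`. -/
def W {n : ℕ} (D : GoodDrawing n) (c : PoleChart) (u v w : Fin n) (p : Sph) : ℤ :=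
  WT c (D.edge u v) (D.edge v w) (D.edge w u) (D.vtx u) (D.vtx v) (D.vtx w) p

/-- The chosen side of `u v w` is where the winding number is `k + s`, its complement (off the
triangle) is where it is `k`; moreover `s = ±1`. -/
structure Sided {n : ℕ} (D : GoodDrawing n) (c : PoleChart) (Δf : Fin n → Fin n → Fin n → Set Sph)
    (u v w : Fin n) (s k : ℤ) : Prop where
  unit : s = 1 ∨ s = -1
  val : ∀ p ∉ triCurve D u v w, (p ∈ Δf u v w ∧ W D c u v w p = k + s) ∨
    (p ∉ Δf u v w ∧ W D c u v w p = k)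

open Classical in
/-- The sign of the oriented triangle `u v w`: the sign `s` of `Sided`. -/
def sg {n : ℕ} (D : GoodDrawing n) (c : PoleChart) (Δf : Fin n → Fin n → Fin n → Set Sph)
    (u v w : Fin n) : ℤ :=
  if h : ∃ s k, Sided D c Δf u v w s k then h.choose else 0

lemma _root_.GoodDrawing.mem_l {n : ℕ} (D : GoodDrawing n) {u v : Fin n} (h : u ≠ v) :
    D.vtx u ∈ D.edge u v := (D.edge_arc u v h).left_mem

lemma _root_.GoodDrawing.mem_r {n : ℕ} (D : GoodDrawing n) {u v : Fin n} (h : u ≠ v) :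
    D.vtx v ∈ D.edge u v := (D.edge_arc u v h).right_mem

lemma _root_.GoodDrawing.closed {n : ℕ} (D : GoodDrawing n) {u v : Fin n} (h : u ≠ v) :
    IsClosed (D.edge u v) := (D.edge_arc u v h).acy.closed

lemma edge_inter {n : ℕ} (D : GoodDrawing n) {u v w : Fin n} (h : D3 u v w) :
    D.edge u v ∩ D.edge v w = {D.vtx v} := by
  have hne : ({u, v} : Set (Fin n)) ≠ {v, w} := fun he => by
    have : u ∈ ({v, w} : Set (Fin n)) := he ▸ (by simp)
    exact this.elim h.1 h.2.2
  exact (D.edge_meet u v v w h.1 h.2.1 hne).1.eq_singleton_of_mem ⟨D.mem_r h.1, D.mem_l h.2.1⟩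

lemma vtx_not_edge {n : ℕ} (D : GoodDrawing n) {u v w : Fin n} (h : D3 u v w) :
    D.vtx w ∉ D.edge u v := fun hw =>
  (D.edge_vtx u v h.1 w hw).elim (fun e => h.2.2 e.symm) fun e => h.2.1 e.symm

lemma tri_eq {n : ℕ} (D : GoodDrawing n) (u v w : Fin n) :
    D.edge u v ∪ D.edge v w ∪ D.edge w u = triCurve D u v w := by
  rw [triCurve, D.edge_symm w u]

lemma triCurve_rot {n : ℕ} (D : GoodDrawing n) (u v w : Fin n) :
    triCurve D v w u = triCurve D u v w := by
  rw [← tri_eq, ← tri_eq]; ext z; simp only [mem_union]; tauto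

lemma triCurve_swap {n : ℕ} (D : GoodDrawing n) (u v w : Fin n) :
    triCurve D v u w = triCurve D u v w := by
  simp only [triCurve]
  rw [D.edge_symm v u]; ext z; simp only [mem_union]; tauto

lemma vtx_not_tri {n : ℕ} (D : GoodDrawing n) {u v w x : Fin n} (h : D4 u v w x) :
    D.vtx x ∉ triCurve D u v w := by
  obtain ⟨⟨h1, h2, h3⟩, h4, h5, h6⟩ := h
  rintro ((hx | hx) | hx)
  · exact vtx_not_edge D ⟨h1, h5, h4⟩ hx
  · exact vtx_not_edge D ⟨h2, h6, h5⟩ hx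
  · exact vtx_not_edge D ⟨h3, h6, h4⟩ hx

lemma mem_tri {n : ℕ} (D : GoodDrawing n) {u v w : Fin n} (h : D3 u v w) : D.vtx u ∈ triCurve D u v w :=
  Or.inl (Or.inl (D.mem_l h.1))

lemma ee_symm {n : ℕ} (D : GoodDrawing n) (c : PoleChart) (u v : Fin n) (p : Sph) :
    ee D c v u p = - ee D c u v p := by
  rw [ee, ee, D.edge_symm v u, th_symm]

namespace Ctx

variable {n : ℕ} {D : GoodDrawing n} {c : PoleChart} {Δf : Fin n → Fin n → Fin n → Set Sph}
  (H : Ctx D c Δf)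
include H

lemma tri {u v w : Fin n} (h : D3 u v w) :
    Tri c (D.edge u v) (D.edge v w) (D.edge w u) (D.vtx u) (D.vtx v) (D.vtx w) :=
  ⟨D.edge_arc _ _ h.1, D.edge_arc _ _ h.2.1, D.edge_arc _ _ h.2.2.symm, edge_inter D h,
    edge_inter D h.rot, edge_inter D h.rot.rot, H.pole _ _ h.1, H.pole _ _ h.2.1,
    H.pole _ _ h.2.2.symm⟩

lemma closed {u v w : Fin n} (h : D3 u v w) : IsClosed (triCurve D u v w) := by
  rw [← tri_eq]; exact (H.tri h).closed

lemma W_spec {u v w : Fin n} (h : D3 u v w) {p : Sph} (hp : p ∉ triCurve D u v w) :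
    ee D c u v p + ee D c v w p + ee D c w u p = W D c u v w p * (2 * Real.pi * Complex.I) := by
  rw [← tri_eq] at hp
  exact (H.tri h).spec hp

lemma W_locConst {u v w : Fin n} (h : D3 u v w) {p : Sph} (hp : p ∉ triCurve D u v w) :
    ∀ᶠ q in 𝓝 p, q ∉ triCurve D u v w ∧ W D c u v w q = W D c u v w p := by
  refine Filter.Eventually.and ((H.closed h).isOpen_compl.mem_nhds hp) ?_
  rw [← tri_eq] at hp
  exact (H.tri h).locConst hp

omit H in
lemma W_rot {u v w : Fin n} {p : Sph} : W D c v w u p = W D c u v w p := by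
  unfold W; exact Tri.wt_rot

lemma W_swap {u v w : Fin n} (h : D3 u v w) {p : Sph} (hp : p ∉ triCurve D u v w) :
    W D c v u w p = - W D c u v w p := by
  apply int_eq_of_mul
  have h1 := H.W_spec h hp
  have h2 := H.W_spec h.swap (by rwa [triCurve_swap])
  rw [ee_symm D c u v, ee_symm D c w u, ee_symm D c v w] at h2
  push_cast
  linear_combination -h2 - h1

/-- The tetrahedral relation between the winding numbers of the triangles on four vertices. -/
lemma cocycle {a b x y : Fin n} (h : D4 a b x y) {p : Sph}
    (h1 : p ∉ triCurve D a b x) (h2 : p ∉ triCurve D a b y)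
    (h3 : p ∉ triCurve D a x y) (h4 : p ∉ triCurve D b x y) :
    W D c a b x p - W D c a b y p + W D c a x y p - W D c b x y p = 0 := by
  obtain ⟨⟨n1, n2, n3⟩, n4, n5, n6⟩ := h
  apply int_eq_of_mul
  have e1 := H.W_spec ⟨n1, n2, n3⟩ h1
  have e2 := H.W_spec ⟨n1, n5, n4⟩ h2
  have e3 := H.W_spec ⟨n3, n6, n4⟩ h3
  have e4 := H.W_spec ⟨n2, n6, n5⟩ h4
  rw [ee_symm D c a x] at e1
  rw [ee_symm D c b y] at e4
  push_cast
  linear_combination -e1 + e2 - e3 + e4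

lemma isSide {u v w : Fin n} (h : D3 u v w) :
    (∃ s k, Sided D c Δf u v w s k) ∧ triCurve D u v w ⊆ Δf u v w ∧
    ∀ q ∈ triCurve D u v w, (∃ᶠ p in 𝓝 q, p ∈ offAll D ∧ p ∈ Δf u v w) ∧
      ∃ᶠ p in 𝓝 q, p ∈ offAll D ∧ p ∉ Δf u v w := by
  obtain ⟨⟨x, hx, hΔ⟩, -⟩ := H.wit.2.2.1 u v w h.1 h.2.1 h.2.2
  have hx' : x ∉ triCurve D u v w := hx
  have T := H.tri h
  have hval := T.values (by rwa [tri_eq])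
  rw [tri_eq] at hval
  obtain ⟨s, hs, hv, hn⟩ := hval
  change ∀ p ∉ _, W D c u v w p = W D c u v w x ∨ W D c u v w p = W D c u v w x - s at hv
  change ∀ q ∈ _, ∀ N ∈ 𝓝 q, (∃ p ∈ N, p ∉ _ ∧ W D c u v w p = W D c u v w x) ∧
    ∃ p ∈ N, p ∉ _ ∧ W D c u v w p = W D c u v w x - s at hn
  set C := connectedComponentIn (triCurve D u v w)ᶜ x with hC
  have hcomp : ∀ p ∉ triCurve D u v w, W D c u v w p = W D c u v w x → p ∈ C := by
    intro p hp hW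
    have := T.comp_of_eq (p := x) (q := p) (by rwa [tri_eq]) (by rwa [tri_eq]) hW.symm
    rwa [tri_eq] at this
  have hcomp' : ∀ p ∈ C, W D c u v w p = W D c u v w x := fun p hp =>
    const_on_conn isPreconnected_connectedComponentIn
      (fun y hy => (H.W_locConst h (connectedComponentIn_subset _ _ hy)).mono fun _ h => h.2)
      hp (mem_connectedComponentIn hx)
  have hmem : ∀ p ∉ triCurve D u v w, p ∈ Δf u v w ↔ W D c u v w p = W D c u v w x := by
    intro p hp
    rw [hΔ]
    constructor
    · intro hpc
      obtain ⟨y, hyC, hy⟩ := ((mem_closure_iff_frequently.1 hpc).and_eventually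
        (H.W_locConst h hp)).exists
      rw [← hy.2, hcomp' y hyC]
    · exact fun hW => subset_closure (hcomp p hp hW)
  have hs0 : s ≠ 0 := by rcases hs with h | h <;> rw [h] <;> norm_num
  have hdense : ∀ q ∈ triCurve D u v w, ∀ m, (∀ N ∈ 𝓝 q, ∃ p ∈ N, p ∉ triCurve D u v w ∧
      W D c u v w p = m) → ∃ᶠ p in 𝓝 q, p ∈ offAll D ∧ p ∉ triCurve D u v w ∧
        W D c u v w p = m := by
    intro q _ m hm
    rw [Filter.frequently_iff]
    intro N hN
    obtain ⟨p, hp, hpT, hpm⟩ := hm _ (interior_mem_nhds.2 hN)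
    have h1 : ∃ᶠ z in 𝓝 p, z ∈ offAll D :=
      mem_closure_iff_frequently.1 (offAll_dense D p)
    obtain ⟨z, hz, hz1, hz2⟩ := (h1.and_eventually ((H.W_locConst h hpT).and
      (isOpen_interior.mem_nhds hp))).exists
    exact ⟨z, interior_subset hz2, hz, hz1.1, hz1.2.trans hpm⟩
  refine ⟨⟨s, W D c u v w x - s, hs, fun p hp => ?_⟩, fun q hq => ?_, fun q hq => ⟨?_, ?_⟩⟩
  · rw [hmem p hp]
    rcases hv p hp with h1 | h1
    · left; exact ⟨h1, by omega⟩
    · right; exact ⟨by omega, h1⟩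
  · rw [hΔ, mem_closure_iff_nhds]
    intro N hN
    obtain ⟨p, hp, hpT, hpm⟩ := (hn q hq N hN).1
    exact ⟨p, hp, hcomp p hpT hpm⟩
  · exact (hdense q hq _ fun N hN => (hn q hq N hN).1).mono fun p hp =>
      ⟨hp.1, (hmem p hp.2.1).2 hp.2.2⟩
  · exact (hdense q hq _ fun N hN => (hn q hq N hN).2).mono fun p hp =>
      ⟨hp.1, fun h' => by have := (hmem p hp.2.1).1 h'; have := hp.2.2; omega⟩

omit H in
lemma _root_.HConv.offAll_tri {u v w : Fin n} (h : D3 u v w) {p : Sph} (hp : p ∈ offAll D) :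
    p ∉ triCurve D u v w := by
  rintro ((h1 | h1) | h1)
  · exact hp _ _ h.1 h1
  · exact hp _ _ h.2.1 h1
  · exact hp _ _ h.2.2 h1

lemma sub {u v w : Fin n} (h : D3 u v w) : triCurve D u v w ⊆ Δf u v w := (H.isSide h).2.1

lemma freq_in {u v w : Fin n} (h : D3 u v w) {q : Sph} (hq : q ∈ triCurve D u v w) :
    ∃ᶠ p in 𝓝 q, p ∈ offAll D ∧ p ∈ Δf u v w := ((H.isSide h).2.2 q hq).1

lemma freq_out {u v w : Fin n} (h : D3 u v w) {q : Sph} (hq : q ∈ triCurve D u v w) :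
    ∃ᶠ p in 𝓝 q, p ∈ offAll D ∧ p ∉ Δf u v w := ((H.isSide h).2.2 q hq).2

lemma sided {u v w : Fin n} (h : D3 u v w) : ∃ k, Sided D c Δf u v w (sg D c Δf u v w) k := by
  have h1 := (H.isSide h).1
  rw [sg, dif_pos h1]
  exact h1.choose_spec

/-- The sign is determined by any decomposition of the values of the winding number. -/
lemma sg_unique {u v w : Fin n} (h : D3 u v w) {s k : ℤ}
    (hv : ∀ p ∈ offAll D, (p ∈ Δf u v w ∧ W D c u v w p = k + s) ∨
      (p ∉ Δf u v w ∧ W D c u v w p = k)) : sg D c Δf u v w = s := by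
  obtain ⟨k', hk'⟩ := H.sided h
  obtain ⟨p, hp, hp1⟩ := (H.freq_in h (mem_tri D h)).exists
  obtain ⟨q, hq, hq1⟩ := (H.freq_out h (mem_tri D h)).exists
  have h1 := hv p hp
  have h2 := hv q hq
  have h3 := hk'.val p (offAll_tri h hp)
  have h4 := hk'.val q (offAll_tri h hq)
  simp only [hp1, hq1, true_and, false_and, not_true, not_false_eq_true, or_false, false_or]
    at h1 h2 h3 h4
  omega

lemma sg_unit {u v w : Fin n} (h : D3 u v w) :
    sg D c Δf u v w = 1 ∨ sg D c Δf u v w = -1 := by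
  obtain ⟨k, hk⟩ := H.sided h
  exact hk.unit

lemma side_rot (u v w : Fin n) : Δf v w u = Δf u v w := by
  rw [H.wit.2.1 v w u, H.wit.1 v u w]

lemma sg_rot {u v w : Fin n} (h : D3 u v w) : sg D c Δf v w u = sg D c Δf u v w := by
  obtain ⟨k, hk⟩ := H.sided h
  refine H.sg_unique h.rot (k := k) fun p hp => ?_
  rw [H.side_rot, W_rot]
  exact hk.val p (offAll_tri h hp)

lemma sg_swap {u v w : Fin n} (h : D3 u v w) : sg D c Δf v u w = - sg D c Δf u v w := by
  obtain ⟨k, hk⟩ := H.sided h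
  refine H.sg_unique h.swap (k := -k) fun p hp => ?_
  rw [← H.wit.1 u v w, H.W_swap h (offAll_tri h hp)]
  rcases hk.val p (offAll_tri h hp) with h1 | h1
  · left; exact ⟨h1.1, by omega⟩
  · right; exact ⟨h1.1, by omega⟩

end Ctx

end HConv

namespace HConv

/-! ### Germs at an edge -/

lemma exists_f {A : Set Sph} {a b : Sph} (h : IsArcEnds A a b) : ∃ f : ℝ → Sph,
    ContinuousOn f (Icc 0 1) ∧ f '' Ioo 0 1 = A \ {a, b} ∧ f '' Ioc 0 1 = A \ {a} ∧ f 0 = a := by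
  obtain ⟨f, hf, hi, rfl, rfl, rfl⟩ := h
  refine ⟨f, hf, ?_, ?_, rfl⟩
  · ext z
    constructor
    · rintro ⟨t, ht, rfl⟩
      refine ⟨⟨t, Ioo_subset_Icc_self ht, rfl⟩, ?_⟩
      rintro (h | h)
      · exact ht.1.ne (hi (Ioo_subset_Icc_self ht) (by simp) h).symm
      · exact ht.2.ne (hi (Ioo_subset_Icc_self ht) (by simp) h)
    · rintro ⟨⟨t, ht, rfl⟩, hn⟩
      simp only [mem_insert_iff, mem_singleton_iff, not_or] at hn
      exact ⟨t, ⟨lt_of_le_of_ne ht.1 fun h => hn.1 (by rw [h]),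
        lt_of_le_of_ne ht.2 fun h => hn.2 (by rw [h])⟩, rfl⟩
  · ext z
    constructor
    · rintro ⟨t, ht, rfl⟩
      refine ⟨⟨t, Ioc_subset_Icc_self ht, rfl⟩, fun h => ?_⟩
      exact ht.1.ne (hi (Ioc_subset_Icc_self ht) (by simp) h).symm
    · rintro ⟨⟨t, ht, rfl⟩, hn⟩
      exact ⟨t, ⟨lt_of_le_of_ne ht.1 fun h => hn (by rw [h]; rfl), ht.2⟩, rfl⟩

lemma arc_mid {A : Set Sph} {a b : Sph} (h : IsArcEnds A a b) : ∃ q ∈ A, q ≠ a ∧ q ≠ b := by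
  obtain ⟨f, -, h1, -⟩ := exists_f h
  have : f (1 / 2) ∈ A \ {a, b} := h1 ▸ ⟨1 / 2, by norm_num, rfl⟩
  exact ⟨_, this.1, by simpa using this.2⟩

lemma arc_conn_open {A : Set Sph} {a b : Sph} (h : IsArcEnds A a b) :
    IsPreconnected (A \ {a, b}) := by
  obtain ⟨f, hf, h1, -⟩ := exists_f h
  rw [← h1]; exact isPreconnected_Ioo.image _ (hf.mono Ioo_subset_Icc_self)

lemma arc_conn_half {A : Set Sph} {a b : Sph} (h : IsArcEnds A a b) :
    IsPreconnected (A \ {a}) := by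
  obtain ⟨f, hf, -, h1, -⟩ := exists_f h
  rw [← h1]; exact isPreconnected_Ioc.image _ (hf.mono Ioc_subset_Icc_self)

lemma arc_freq {A : Set Sph} {a b : Sph} (h : IsArcEnds A a b) :
    ∃ᶠ p in 𝓝 a, p ∈ A ∧ p ≠ a ∧ p ≠ b := by
  obtain ⟨f, hf, h1, -, h0⟩ := exists_f h
  have hc : a ∈ closure (A \ {a, b}) := by
    rw [← h1]
    have := ContinuousOn.image_closure (f := f) (s := Ioo 0 1) (by
      rwa [closure_Ioo zero_ne_one])
    refine this ⟨0, ?_, h0⟩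
    rw [closure_Ioo zero_ne_one]; simp
  exact (mem_closure_iff_frequently.1 hc).mono fun p hp => ⟨hp.1, by simpa using hp.2⟩

lemma toZ_mul (x : ℤ) : toZ (x * (2 * Real.pi * Complex.I)) = x := by
  rw [toZ, mul_div_cancel_right₀ _ Complex.two_pi_I_ne_zero]; simp

/-- Near an interior point of the common arc `P` of two triangles, their winding numbers differ by
a constant. -/
lemma tri_germ {c : PoleChart} {P Q R Q' R' : Set Sph} {u v w w' q : Sph}
    (T : Tri c P Q R u v w) (T' : Tri c P Q' R' u v w') (h1 : q ∉ Q) (h2 : q ∉ R)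
    (h3 : q ∉ Q') (h4 : q ∉ R') : ∃ m : ℤ, ∀ᶠ p in 𝓝 q, p ∉ P →
      p ∉ P ∪ Q ∪ R ∧ p ∉ P ∪ Q' ∪ R' ∧ WT c P Q R u v w p - WT c P Q' R' u v w' p = m := by
  refine ⟨toZ (th c Q q v w + th c R q w u - (th c Q' q v w' + th c R' q w' u)), ?_⟩
  filter_upwards [th_near q T.arcQ.acy T.oQ h1, th_near q T.arcR.acy T.oR h2,
    th_near q T'.arcQ.acy T'.oQ h3, th_near q T'.arcR.acy T'.oR h4] with p e1 e2 e3 e4 hp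
  have n1 : p ∉ P ∪ Q ∪ R := by
    rintro ((h | h) | h)
    exacts [hp h, e1.1 h, e2.1 h]
  have n2 : p ∉ P ∪ Q' ∪ R' := by
    rintro ((h | h) | h)
    exacts [hp h, e3.1 h, e4.1 h]
  refine ⟨n1, n2, ?_⟩
  rw [← toZ_mul (_ - _)]
  congr 1
  push_cast
  have s1 := T.spec n1
  have s2 := T'.spec n2
  rw [e1.2 _ T.arcQ.left_mem _ T.arcQ.right_mem, e2.2 _ T.arcR.left_mem _ T.arcR.right_mem] at s1
  rw [e3.2 _ T'.arcQ.left_mem _ T'.arcQ.right_mem, e4.2 _ T'.arcR.left_mem _ T'.arcR.right_mem]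
    at s2
  linear_combination s2 - s1

lemma not_edge_of_mid {n : ℕ} (D : GoodDrawing n) {u v w : Fin n} (h : D3 u v w) {q : Sph}
    (hq : q ∈ D.edge u v) (h1 : q ≠ D.vtx u) (h2 : q ≠ D.vtx v) :
    q ∉ D.edge v w ∧ q ∉ D.edge w u := by
  refine ⟨fun hc => h2 ?_, fun hc => h1 ?_⟩
  · have : q ∈ ({D.vtx v} : Set Sph) := edge_inter D h ▸ ⟨hq, hc⟩
    exact this
  · have : q ∈ ({D.vtx u} : Set Sph) := edge_inter D h.rot.rot ▸ ⟨hc, hq⟩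
    exact this

namespace Ctx

variable {n : ℕ} {D : GoodDrawing n} {c : PoleChart} {Δf : Fin n → Fin n → Fin n → Set Sph}
  (H : Ctx D c Δf)
include H

lemma germ {a b x y : Fin n} (hx : D3 a b x) (hy : D3 a b y) {q : Sph} (hq : q ∈ D.edge a b)
    (hqa : q ≠ D.vtx a) (hqb : q ≠ D.vtx b) : ∃ m : ℤ, ∀ᶠ p in 𝓝 q, p ∉ D.edge a b →
      p ∉ triCurve D a b x ∧ p ∉ triCurve D a b y ∧ W D c a b x p - W D c a b y p = m := by
  obtain ⟨h1, h2⟩ := not_edge_of_mid D hx hq hqa hqb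
  obtain ⟨h3, h4⟩ := not_edge_of_mid D hy hq hqa hqb
  have := tri_germ (H.tri hx) (H.tri hy) h1 h2 h3 h4
  simp only [tri_eq] at this
  exact this

lemma germ_eq {a b x y : Fin n} (hx : D3 a b x) (hy : D3 a b y)
    (hs : sg D c Δf a b x = sg D c Δf a b y) {q : Sph} (hq : q ∈ D.edge a b)
    (hqa : q ≠ D.vtx a) (hqb : q ≠ D.vtx b) : ∀ᶠ p in 𝓝 q, p ∉ D.edge a b →
      (p ∈ Δf a b x ↔ p ∈ Δf a b y) := by
  obtain ⟨m, hm⟩ := H.germ hx hy hq hqa hqb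
  obtain ⟨k, hk⟩ := H.sided hx
  obtain ⟨l, hl⟩ := H.sided hy
  have hqT : q ∈ triCurve D a b x := Or.inl (Or.inl hq)
  obtain ⟨p₁, ⟨ho₁, hi₁⟩, hm₁⟩ := ((H.freq_in hx hqT).and_eventually hm).exists
  obtain ⟨p₂, ⟨ho₂, hi₂⟩, hm₂⟩ := ((H.freq_out hx hqT).and_eventually hm).exists
  obtain ⟨a₁, b₁, c₁⟩ := hm₁ (ho₁ _ _ hx.1)
  obtain ⟨a₂, b₂, c₂⟩ := hm₂ (ho₂ _ _ hx.1)
  have k₁ := hk.val _ a₁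
  have l₁ := hl.val _ b₁
  have k₂ := hk.val _ a₂
  have l₂ := hl.val _ b₂
  have u := hk.unit
  rw [← hs] at l₁ l₂ hl
  have hm0 : m = k - l := by
    simp only [hi₁, hi₂, true_and, false_and, not_true, not_false_eq_true, or_false, false_or]
      at k₁ k₂
    have l₁' := l₁.imp And.right And.right
    have l₂' := l₂.imp And.right And.right
    omega
  filter_upwards [hm] with p hp hpe
  obtain ⟨a₃, b₃, c₃⟩ := hp hpe
  rcases hk.val _ a₃ with ⟨i, e⟩ | ⟨i, e⟩ <;> rcases hl.val _ b₃ with ⟨j, f⟩ | ⟨j, f⟩ <;>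
    first | (exfalso; omega) | simp [i, j]

lemma germ_opp {a b x y : Fin n} (hx : D3 a b x) (hy : D3 a b y)
    (hs : sg D c Δf a b x ≠ sg D c Δf a b y) {q : Sph} (hq : q ∈ D.edge a b)
    (hqa : q ≠ D.vtx a) (hqb : q ≠ D.vtx b) : ∀ᶠ p in 𝓝 q, p ∉ D.edge a b →
      (p ∈ Δf a b x ↔ p ∉ Δf a b y) := by
  obtain ⟨m, hm⟩ := H.germ hx hy hq hqa hqb
  obtain ⟨k, hk⟩ := H.sided hx
  obtain ⟨l, hl⟩ := H.sided hy
  have hqT : q ∈ triCurve D a b x := Or.inl (Or.inl hq)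
  obtain ⟨p₁, ⟨ho₁, hi₁⟩, hm₁⟩ := ((H.freq_in hx hqT).and_eventually hm).exists
  obtain ⟨p₂, ⟨ho₂, hi₂⟩, hm₂⟩ := ((H.freq_out hx hqT).and_eventually hm).exists
  obtain ⟨a₁, b₁, c₁⟩ := hm₁ (ho₁ _ _ hx.1)
  obtain ⟨a₂, b₂, c₂⟩ := hm₂ (ho₂ _ _ hx.1)
  have k₁ := hk.val _ a₁
  have l₁ := hl.val _ b₁
  have k₂ := hk.val _ a₂
  have l₂ := hl.val _ b₂
  have u := hk.unit
  have u' := hl.unit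
  have hm0 : m = k - l + sg D c Δf a b x := by
    simp only [hi₁, hi₂, true_and, false_and, not_true, not_false_eq_true, or_false, false_or]
      at k₁ k₂
    have l₁' := l₁.imp And.right And.right
    have l₂' := l₂.imp And.right And.right
    omega
  filter_upwards [hm] with p hp hpe
  obtain ⟨a₃, b₃, c₃⟩ := hp hpe
  rcases hk.val _ a₃ with ⟨i, e⟩ | ⟨i, e⟩ <;> rcases hl.val _ b₃ with ⟨j, f⟩ | ⟨j, f⟩ <;>
    first | (exfalso; omega) | simp [i, j]

/-! ### Consequences of convexity -/

lemma convex {u v w : Fin n} (h : D3 u v w) {x y : Fin n} (hxy : x ≠ y)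
    (hx : D.vtx x ∈ Δf u v w) (hy : D.vtx y ∈ Δf u v w) : D.edge x y ⊆ Δf u v w :=
  (H.wit.2.2.1 u v w h.1 h.2.1 h.2.2).2 x y hxy hx hy

lemma vtx_mem {u v w : Fin n} (h : D3 u v w) :
    D.vtx u ∈ Δf u v w ∧ D.vtx v ∈ Δf u v w ∧ D.vtx w ∈ Δf u v w :=
  ⟨H.sub h (Or.inl (Or.inl (D.mem_l h.1))), H.sub h (Or.inl (Or.inl (D.mem_r h.1))),
    H.sub h (Or.inl (Or.inr (D.mem_r h.2.1)))⟩

/-- A triangle whose three vertices lie in the chosen side of another one has its chosen side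
inside. -/
lemma nested {u v w x y z : Fin n} (h : D3 u v w) (h' : D3 x y z) (hx : D.vtx x ∈ Δf u v w)
    (hy : D.vtx y ∈ Δf u v w) (hz : D.vtx z ∈ Δf u v w) : Δf x y z ⊆ Δf u v w := by
  refine H.wit.2.2.2 u v w x y z h.1 h.2.1 h.2.2 h'.1 h'.2.1 h'.2.2 ?_
  rintro p ((hp | hp) | hp)
  · exact H.convex h h'.1 hx hy hp
  · exact H.convex h h'.2.1 hy hz hp
  · exact H.convex h h'.2.2 hx hz hp

/-- If the vertex `z` lies in the chosen side of `u v w`, then `u v z` and `u v w` have the same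
sign. -/
lemma sg_of_mem {u v w z : Fin n} (h : D4 u v w z) (hz : D.vtx z ∈ Δf u v w) :
    sg D c Δf u v z = sg D c Δf u v w := by
  obtain ⟨h3, h4, h5, h6⟩ := h
  have hz3 : D3 u v z := ⟨h3.1, h5, h4⟩
  by_contra hne
  obtain ⟨q, hq, hqu, hqv⟩ := arc_mid (D.edge_arc u v h3.1)
  obtain ⟨p, ⟨hp, hpo⟩, hpe⟩ := ((H.freq_out h3 (Or.inl (Or.inl hq) : q ∈ _)).and_eventually
    (H.germ_opp h3 hz3 (Ne.symm hne) hq hqu hqv)).exists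
  have hpz : p ∈ Δf u v z := by
    by_contra hc
    exact hpo ((hpe (hp _ _ h3.1)).2 hc)
  have hm := H.vtx_mem h3
  exact hpo (H.nested h3 hz3 hm.1 hm.2.1 hz hpz)

/-- A connected set missing a triangle lies in its chosen side as soon as one of its points does. -/
lemma conn_side {u v w : Fin n} (h : D3 u v w) {S : Set Sph} (hS : IsPreconnected S)
    (hd : ∀ p ∈ S, p ∉ triCurve D u v w) {p q : Sph} (hp : p ∈ S) (hq : q ∈ S)
    (hpΔ : p ∈ Δf u v w) : q ∈ Δf u v w := by
  obtain ⟨k, hk⟩ := H.sided h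
  have hu := hk.unit
  have := const_on_conn hS (fun y hy => (H.W_locConst h (hd y hy)).mono fun _ h => h.2) hp hq
  rcases hk.val p (hd p hp) with h1 | h1
  · rcases hk.val q (hd q hq) with h2 | h2
    · exact h2.1
    · omega
  · exact absurd hpΔ h1.1

lemma side_locConst {u v w : Fin n} (h : D3 u v w) {p : Sph} (hp : p ∉ triCurve D u v w) :
    ∀ᶠ q in 𝓝 p, q ∉ triCurve D u v w ∧ (q ∈ Δf u v w ↔ p ∈ Δf u v w) := by
  obtain ⟨k, hk⟩ := H.sided h
  have hu := hk.unit
  filter_upwards [H.W_locConst h hp] with q hq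
  refine ⟨hq.1, ?_⟩
  rcases hk.val p hp with ⟨i, e⟩ | ⟨i, e⟩ <;> rcases hk.val q hq.1 with ⟨j, f⟩ | ⟨j, f⟩ <;>
    first | (exfalso; omega) | simp [i, j]

end Ctx

end HConv

namespace HConv

/-! ### Edges entering the chosen side of a triangle -/

namespace Ctx

variable {n : ℕ} {D : GoodDrawing n} {c : PoleChart} {Δf : Fin n → Fin n → Fin n → Set Sph}
  (H : Ctx D c Δf)
include H

/-- The complement of the chosen side of `u v w` is connected. -/
lemma ext_conn {u v w : Fin n} (h : D3 u v w) {p q : Sph} (hp : p ∉ Δf u v w)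
    (hq : q ∉ Δf u v w) : ∃ S : Set Sph, IsPreconnected S ∧ p ∈ S ∧ q ∈ S ∧
      ∀ z ∈ S, z ∉ Δf u v w := by
  have hpT : p ∉ triCurve D u v w := fun hc => hp (H.sub h hc)
  have hqT : q ∉ triCurve D u v w := fun hc => hq (H.sub h hc)
  obtain ⟨k, hk⟩ := H.sided h
  have h1 : W D c u v w p = W D c u v w q :=
    ((hk.val p hpT).resolve_left fun h => hp h.1).2.trans
      ((hk.val q hqT).resolve_left fun h => hq h.1).2.symm
  have h2 := (H.tri h).comp_of_eq (by rwa [tri_eq]) (by rwa [tri_eq]) h1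
  rw [tri_eq] at h2
  refine ⟨_, isPreconnected_connectedComponentIn, mem_connectedComponentIn hpT, h2,
    fun z hz hzΔ => hp ?_⟩
  exact H.conn_side h isPreconnected_connectedComponentIn
    (fun y hy => connectedComponentIn_subset _ _ hy) hz (mem_connectedComponentIn hpT) hzΔ

/-- An arc `A` from the vertex `a` to the opposite side of the triangle `a x y`, running in its
chosen side, cuts off a triangle on `a x` whose winding number behaves, up to an additive
constant, like that of a part of the chosen side. -/
lemma cut {a x y : Fin n} (h : D3 a x y) {A B₁ B₂ : Set Sph} {e : Sph}
    (hA : IsArcEnds A (D.vtx a) e) (hB₁ : IsArcEnds B₁ (D.vtx x) e)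
    (hB₂ : IsArcEnds B₂ e (D.vtx y)) (hB : D.edge x y = B₁ ∪ B₂) (hBB : B₁ ∩ B₂ = {e})
    (hAx : A ∩ D.edge a x = {D.vtx a}) (hAy : A ∩ D.edge y a = {D.vtx a})
    (hAB : A ∩ D.edge x y = {e}) (hAΔ : A ⊆ Δf a x y) (ho : c.o ∉ A) (hex : e ≠ D.vtx x)
    (hey : e ≠ D.vtx y) :
    ∃ k : ℤ, (∀ p ∉ D.edge a x ∪ B₁ ∪ A,
      WT c (D.edge a x) B₁ A (D.vtx a) (D.vtx x) e p = k ∨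
      WT c (D.edge a x) B₁ A (D.vtx a) (D.vtx x) e p = k + sg D c Δf a x y) ∧
      ∀ᶠ p in 𝓝 (D.vtx y), p ∉ D.edge a x ∪ B₁ ∪ A ∧
        WT c (D.edge a x) B₁ A (D.vtx a) (D.vtx x) e p = k := by
  have b1 : B₁ ⊆ D.edge x y := hB ▸ subset_union_left
  have b2 : B₂ ⊆ D.edge x y := hB ▸ subset_union_right
  have oB : c.o ∉ D.edge x y := H.pole _ _ h.2.1
  have TJ : Tri c (D.edge a x) B₁ A (D.vtx a) (D.vtx x) e := by
    refine ⟨D.edge_arc _ _ h.1, hB₁, hA.symm, ?_, ?_, hAx, H.pole _ _ h.1, fun h => oB (b1 h), ho⟩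
    · refine Subset.antisymm ?_ ?_
      · rw [← edge_inter D h]; exact inter_subset_inter_right _ b1
      · rintro _ rfl; exact ⟨D.mem_r h.1, hB₁.left_mem⟩
    · refine Subset.antisymm ?_ ?_
      · rw [inter_comm, ← hAB]; exact inter_subset_inter_right _ b1
      · rintro _ rfl; exact ⟨hB₁.right_mem, hA.right_mem⟩
  have TJ' : Tri c A B₂ (D.edge y a) (D.vtx a) e (D.vtx y) := by
    refine ⟨hA, hB₂, D.edge_arc _ _ h.2.2.symm, ?_, ?_, by rw [inter_comm, hAy], ho,
      fun h => oB (b2 h), H.pole _ _ h.2.2.symm⟩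
    · refine Subset.antisymm ?_ ?_
      · rw [← hAB]; exact inter_subset_inter_right _ b2
      · rintro _ rfl; exact ⟨hA.right_mem, hB₂.left_mem⟩
    · refine Subset.antisymm ?_ ?_
      · rw [← edge_inter D h.rot]; exact inter_subset_inter_left _ b2
      · rintro _ rfl; exact ⟨hB₂.right_mem, D.mem_l h.2.2.symm⟩
  set J := WT c (D.edge a x) B₁ A (D.vtx a) (D.vtx x) e with hJ
  set J' := WT c A B₂ (D.edge y a) (D.vtx a) e (D.vtx y) with hJ'
  have sum : ∀ p, p ∉ triCurve D a x y → p ∉ A → J p + J' p = W D c a x y p := by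
    intro p hp hpA
    rw [← tri_eq] at hp
    simp only [mem_union, not_or] at hp
    obtain ⟨⟨p1, p2⟩, p3⟩ := hp
    have s1 := TJ.spec (p := p) (by
      rintro ((h | h) | h)
      exacts [p1 h, p2 (b1 h), hpA h])
    have s2 := TJ'.spec (p := p) (by
      rintro ((h | h) | h)
      exacts [hpA h, p2 (b2 h), p3 h])
    have s3 := (H.tri h).spec (p := p) (by
      rintro ((h | h) | h)
      exacts [p1 h, p2 h, p3 h])
    have s4 := th_union (u := D.vtx x) (w := D.vtx y) hB₁.acy hB₂.acy hBB (fun h => oB (b1 h))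
      (fun h => oB (b2 h)) (fun h => p2 (b1 h)) (fun h => p2 (b2 h)) hB₁.left_mem hB₂.right_mem
    rw [← hB] at s4
    rw [th_symm (u := D.vtx a) (v := e)] at s1
    apply int_eq_of_mul
    push_cast
    change _ = (WT c _ _ _ _ _ _ _ : ℂ) * _
    linear_combination s3 - s1 - s2 - s4
  have Tsub : ∀ p, p ∈ D.edge a x ∪ B₁ ∪ A ∨ p ∈ A ∪ B₂ ∪ D.edge y a → p ∈ Δf a x y := by
    have t := H.sub h
    rw [← tri_eq] at t
    rintro p (((h | h) | h) | ((h | h) | h))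
    exacts [t (Or.inl (Or.inl h)), t (Or.inl (Or.inr (b1 h))), hAΔ h, hAΔ h,
      t (Or.inl (Or.inr (b2 h))), t (Or.inr h)]
  have hay : D.vtx a ∈ triCurve D a x y := mem_tri D h
  obtain ⟨p₁, -, hp₁⟩ := (H.freq_out h hay).exists
  have cJ : ∀ p, p ∉ Δf a x y → J p = J p₁ := by
    intro p hp
    obtain ⟨S, hS, h1, h2, h3⟩ := H.ext_conn h hp hp₁
    exact const_on_conn hS (fun z hz => TJ.locConst fun hc => h3 z hz (Tsub z (Or.inl hc))) h1 h2
  have cJ' : ∀ p, p ∉ Δf a x y → J' p = J' p₁ := by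
    intro p hp
    obtain ⟨S, hS, h1, h2, h3⟩ := H.ext_conn h hp hp₁
    exact const_on_conn hS (fun z hz => TJ'.locConst fun hc => h3 z hz (Tsub z (Or.inr hc))) h1 h2
  obtain ⟨m, hm⟩ := H.sided h
  have hp₁T : p₁ ∉ triCurve D a x y := fun hc => hp₁ (H.sub h hc)
  have hsum₁ := sum p₁ hp₁T fun hc => hp₁ (hAΔ hc)
  have hm₁ := ((hm.val p₁ hp₁T).resolve_left fun h => hp₁ h.1).2
  -- near an interior point `q` of the edge `a x`, the winding number `J'` is constant
  obtain ⟨q, hq, hqa, hqx⟩ := arc_mid (D.edge_arc a x h.1)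
  have hqT : q ∈ triCurve D a x y := Or.inl (Or.inl hq)
  obtain ⟨q1, q2⟩ := not_edge_of_mid D h hq hqa hqx
  have hqA : q ∉ A := fun hc => hqa (by
    have : q ∈ ({D.vtx a} : Set Sph) := hAx ▸ ⟨hc, hq⟩
    exact this)
  have hqJ' : q ∉ A ∪ B₂ ∪ D.edge y a := by
    rintro ((h | h) | h)
    exacts [hqA h, q1 (b2 h), q2 h]
  have e1 := TJ'.locConst hqJ'
  obtain ⟨z, ⟨-, hz⟩, hz'⟩ := ((H.freq_out h hqT).and_eventually e1).exists
  have hqk : J' q = J' p₁ := by rw [← cJ' z hz]; exact hz'.symm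
  obtain ⟨y', ⟨hy0, hy1⟩, hy2, hy3⟩ := ((H.freq_in h hqT).and_eventually
    (e1.and (hA.acy.closed.isOpen_compl.mem_nhds hqA))).exists
  have hyT := offAll_tri h hy0
  have hsumy := sum y' hyT hy3
  have hmy := ((hm.val y' hyT).resolve_right fun h => h.1 hy1).2
  change J' y' = J' q at hy2
  have hJy : J y' = J p₁ + sg D c Δf a x y := by omega
  have hJ1 : p₁ ∉ D.edge a x ∪ B₁ ∪ A := fun hc => hp₁ (Tsub _ (Or.inl hc))
  have hy'K : y' ∉ D.edge a x ∪ B₁ ∪ A := by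
    rw [← tri_eq] at hyT
    rintro ((h | h) | h)
    exacts [hyT (Or.inl (Or.inl h)), hyT (Or.inl (Or.inr (b1 h))), hy3 h]
  obtain ⟨s', -, hv, -⟩ := TJ.values hJ1
  have hu := hm.unit
  change ∀ p, _ → J p = J p₁ ∨ J p = J p₁ - s' at hv
  refine ⟨J p₁, fun p hp => ?_, ?_⟩
  · have := hv p hp
    have := hv y' hy'K
    omega
  · have hyK : D.vtx y ∉ D.edge a x ∪ B₁ ∪ A := by
      rintro ((hc | hc) | hc)
      · exact vtx_not_edge D h hc
      · have : D.vtx y ∈ ({e} : Set Sph) := hBB ▸ ⟨hc, hB₂.right_mem⟩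
        exact hey this.symm
      · have : D.vtx y ∈ ({e} : Set Sph) := hAB ▸ ⟨hc, D.mem_r h.2.1⟩
        exact hey this.symm
    have e2 := TJ.locConst hyK
    have hyT : D.vtx y ∈ triCurve D a x y := Or.inr (D.mem_r h.2.2)
    obtain ⟨z, ⟨-, hz⟩, hz'⟩ := ((H.freq_out h hyT).and_eventually e2).exists
    have : J (D.vtx y) = J p₁ := by rw [← cJ z hz]; exact hz'.symm
    filter_upwards [e2, TJ.closed.isOpen_compl.mem_nhds hyK] with p hp hp'
    exact ⟨hp', hp.trans this⟩

/-- The main part of `star`: the edge `a b` enters the chosen side of `a x y` but `b` lies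
outside it, so that the edge leaves through `x y`. -/
lemma star_out {a b x y : Fin n} (h : D4 a b x y) {g : Sph} (hg : g ∈ D.edge a b)
    (hgT : g ∉ triCurve D a x y) (hgΔ : g ∈ Δf a x y) (hb : D.vtx b ∉ Δf a x y) :
    sg D c Δf a x b = sg D c Δf a x y := by
  obtain ⟨⟨nab, nbx, nax⟩, nay, nby, nxy⟩ := h
  have daxy : D3 a x y := ⟨nax, nxy, nay⟩
  have dbxy : D3 b x y := ⟨nbx, nxy, nby⟩
  have daxb : D3 a x b := ⟨nax, nbx.symm, nab⟩
  have Iax : D.edge a b ∩ D.edge a x = {D.vtx a} := by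
    rw [D.edge_symm a b]; exact edge_inter D ⟨nab.symm, nax, nbx⟩
  have Iay : D.edge a b ∩ D.edge y a = {D.vtx a} := by
    rw [D.edge_symm a b, D.edge_symm y a]; exact edge_inter D ⟨nab.symm, nay, nby⟩
  have Ibx : D.edge a b ∩ D.edge b x = {D.vtx b} := edge_inter D ⟨nab, nbx, nax⟩
  have Iby : D.edge a b ∩ D.edge y b = {D.vtx b} := by
    rw [D.edge_symm y b]; exact edge_inter D ⟨nab, nby, nay⟩
  have oab := H.pole _ _ nab
  have hga : g ≠ D.vtx a := fun hc => hgT (hc ▸ mem_tri D daxy)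
  -- a point of `a b` on the triangle `a x y` is `a` or lies on `x y`
  have onT : ∀ z ∈ D.edge a b, z ≠ D.vtx a → z ∉ D.edge x y → z ∉ triCurve D a x y := by
    intro z hz hza hzxy hc
    rw [← tri_eq] at hc
    rcases hc with (hc | hc) | hc
    · exact hza (show z ∈ ({D.vtx a} : Set Sph) from Iax ▸ ⟨hz, hc⟩)
    · exact hzxy hc
    · exact hza (show z ∈ ({D.vtx a} : Set Sph) from Iay ▸ ⟨hz, hc⟩)
  have onT' : ∀ z ∈ D.edge a b, z ≠ D.vtx b → z ∉ D.edge x y → z ∉ triCurve D b x y := by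
    intro z hz hzb hzxy hc
    rw [← tri_eq] at hc
    rcases hc with (hc | hc) | hc
    · exact hzb (show z ∈ ({D.vtx b} : Set Sph) from Ibx ▸ ⟨hz, hc⟩)
    · exact hzxy hc
    · exact hzb (show z ∈ ({D.vtx b} : Set Sph) from Iby ▸ ⟨hz, hc⟩)
  have hbnA : D.vtx b ≠ D.vtx a := fun hc => nab (D.vtx_inj hc).symm
  -- the edge `a b` crosses `x y`
  obtain ⟨e, heab, hexy⟩ : ∃ e, e ∈ D.edge a b ∧ e ∈ D.edge x y := by
    by_contra! hc
    exact hb (H.conn_side daxy (arc_conn_half (D.edge_arc a b nab))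
      (fun z hz => onT z hz.1 hz.2 (hc z hz.1)) ⟨hg, hga⟩ ⟨D.mem_r nab, hbnA⟩ hgΔ)
  have hne : ({a, b} : Set (Fin n)) ≠ {x, y} := fun he => by
    have : a ∈ ({x, y} : Set (Fin n)) := he ▸ (by simp)
    exact this.elim nax nay
  have Ixy : D.edge a b ∩ D.edge x y = {e} :=
    (D.edge_meet a b x y nab nxy hne).1.eq_singleton_of_mem ⟨heab, hexy⟩
  have hea : e ≠ D.vtx a := fun hc => vtx_not_edge D daxy.rot (hc ▸ hexy)
  have heb : e ≠ D.vtx b := fun hc => vtx_not_edge D dbxy.rot (hc ▸ hexy)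
  have hex : e ≠ D.vtx x := fun hc => vtx_not_edge D ⟨nab, nbx, nax⟩ (hc ▸ heab)
  have hey : e ≠ D.vtx y := fun hc => vtx_not_edge D ⟨nab, nby, nay⟩ (hc ▸ heab)
  obtain ⟨A₁, A₂, hA₁, hA₂, hA, hAA⟩ := (D.edge_arc a b nab).split heab hea heb
  obtain ⟨B₁, B₂, hB₁, hB₂, hB, hBB⟩ := (D.edge_arc x y nxy).split hexy hex hey
  have a1 : A₁ ⊆ D.edge a b := hA ▸ subset_union_left
  have a2 : A₂ ⊆ D.edge a b := hA ▸ subset_union_right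
  have ha2 : D.vtx a ∉ A₂ := fun hc => hea
    (show D.vtx a ∈ ({e} : Set Sph) from hAA ▸ ⟨hA₁.left_mem, hc⟩).symm
  have hb1 : D.vtx b ∉ A₁ := fun hc => heb
    (show D.vtx b ∈ ({e} : Set Sph) from hAA ▸ ⟨hc, hA₂.right_mem⟩).symm
  have notxy : ∀ z ∈ D.edge a b, z ≠ e → z ∉ D.edge x y := fun z hz hze hc =>
    hze (show z ∈ ({e} : Set Sph) from Ixy ▸ ⟨hz, hc⟩)
  have out2 : ∀ z ∈ A₂, z ≠ e → z ∉ Δf a x y := by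
    intro z hz hze hzΔ
    exact hb (H.conn_side daxy (arc_conn_half hA₂)
      (fun z hz => onT z (a2 hz.1) (fun hc => ha2 (hc ▸ hz.1)) (notxy z (a2 hz.1) hz.2))
      ⟨hz, hze⟩ ⟨hA₂.right_mem, heb.symm⟩ hzΔ)
  have hge : g ≠ e := fun hc => hgT (by rw [hc, ← tri_eq]; exact Or.inl (Or.inr hexy))
  have hg1 : g ∈ A₁ := by
    rw [hA] at hg
    exact hg.resolve_right fun hc => out2 g hc hge hgΔ
  have in1 : A₁ ⊆ Δf a x y := by
    intro z hz
    by_cases hza : z = D.vtx a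
    · rw [hza]; exact (H.vtx_mem daxy).1
    by_cases hze : z = e
    · rw [hze]; exact H.sub daxy (by rw [← tri_eq]; exact Or.inl (Or.inr hexy))
    refine H.conn_side daxy (arc_conn_open hA₁) (fun z hz => ?_) (p := g) ⟨hg1, ?_⟩ ⟨hz, ?_⟩ hgΔ
    · exact onT z (a1 hz.1) (fun hc => hz.2 (Or.inl hc))
        (notxy z (a1 hz.1) fun hc => hz.2 (Or.inr hc))
    · rintro (hc | hc)
      exacts [hga hc, hge hc]
    · rintro (hc | hc)
      exacts [hza hc, hze hc]
  have hy : D.vtx y ∉ Δf a x b := by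
    intro hc
    have hm := H.vtx_mem daxb
    have hsub := H.nested daxb daxy hm.1 hm.2.1 hc
    have hgT' : g ∈ triCurve D a x b := Or.inr hg
    obtain ⟨p, ⟨-, hp⟩, hp'⟩ := ((H.freq_out daxb hgT').and_eventually
      (H.side_locConst daxy hgT)).exists
    exact hp (hsub (hp'.2.2 hgΔ))
  have fr1 := arc_freq hA₁.symm
  have fr2 := arc_freq hA₂
  have dxya : D3 x y a := daxy.rot
  have dxyb : D3 x y b := dbxy.rot
  have hΔa := H.side_rot a x y
  have hΔb := H.side_rot b x y
  have hopp : sg D c Δf x y a ≠ sg D c Δf x y b := by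
    intro hs
    have hgerm := H.germ_eq dxya dxyb hs hexy hex hey
    rw [hΔa, hΔb] at hgerm
    obtain ⟨p, ⟨hp1, hpe, hpa⟩, hp⟩ := (fr1.and_eventually hgerm).exists
    have hpb := (hp (notxy p (a1 hp1) hpe)).1 (in1 hp1)
    have ha : D.vtx a ∈ Δf b x y := H.conn_side dbxy (arc_conn_half hA₁.symm)
      (fun z hz => onT' z (a1 hz.1) (fun hc => hb1 (hc ▸ hz.1)) (notxy z (a1 hz.1) hz.2))
      ⟨hp1, hpe⟩ ⟨hA₁.left_mem, hea.symm⟩ hpb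
    have hab := H.convex dbxy nab ha (H.vtx_mem dbxy).1
    obtain ⟨z, ⟨hz1, hze, -⟩, hz⟩ := (fr2.and_eventually hgerm).exists
    exact out2 z hz1 hze ((hz (notxy z (a2 hz1) hze)).2 (hab (a2 hz1)))
  have in2 : A₂ ⊆ Δf b x y := by
    intro z hz
    by_cases hzb : z = D.vtx b
    · rw [hzb]; exact (H.vtx_mem dbxy).1
    by_cases hze : z = e
    · rw [hze]; exact H.sub dbxy (by rw [← tri_eq]; exact Or.inl (Or.inr hexy))
    have hgerm := H.germ_opp dxya dxyb hopp hexy hex hey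
    rw [hΔa, hΔb] at hgerm
    obtain ⟨p, ⟨hp1, hpe, hpb⟩, hp⟩ := (fr2.and_eventually hgerm).exists
    have hpΔ : p ∈ Δf b x y := by
      by_contra hc
      exact out2 p hp1 hpe ((hp (notxy p (a2 hp1) hpe)).2 hc)
    refine H.conn_side dbxy (arc_conn_open hA₂) (fun z hz => ?_) (p := p) ⟨hp1, ?_⟩ ⟨hz, ?_⟩ hpΔ
    · exact onT' z (a2 hz.1) (fun hc => hz.2 (Or.inr hc))
        (notxy z (a2 hz.1) fun hc => hz.2 (Or.inl hc))
    · rintro (hc | hc)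
      exacts [hpe hc, hpb hc]
    · rintro (hc | hc)
      exacts [hze hc, hzb hc]
  have single : ∀ {A X : Set Sph} {v : Sph}, A ⊆ D.edge a b → v ∈ A → D.edge a b ∩ X = {v} →
      A ∩ X = {v} := by
    intro A X v h1 h2 h3
    refine Subset.antisymm (h3 ▸ inter_subset_inter_left _ h1) ?_
    rintro _ rfl
    exact ⟨h2, (show _ ∈ D.edge a b ∩ X from h3 ▸ rfl).2⟩
  obtain ⟨k, k1, k2⟩ := H.cut daxy hA₁ hB₁ hB₂ hB hBB (single a1 hA₁.left_mem Iax)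
    (single a1 hA₁.left_mem Iay) (single a1 hA₁.right_mem Ixy) in1 (fun h => oab (a1 h)) hex hey
  obtain ⟨l, l1, l2⟩ := H.cut dbxy hA₂.symm hB₁ hB₂ hB hBB (single a2 hA₂.right_mem Ibx)
    (single a2 hA₂.right_mem Iby) (single a2 hA₂.left_mem Ixy) in2 (fun h => oab (a2 h)) hex hey
  set J := WT c (D.edge a x) B₁ A₁ (D.vtx a) (D.vtx x) e with hJ
  set J' := WT c (D.edge b x) B₁ A₂ (D.vtx b) (D.vtx x) e with hJ'
  have b1 : B₁ ⊆ D.edge x y := hB ▸ subset_union_left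
  have oB : c.o ∉ D.edge x y := H.pole _ _ nxy
  -- the spec of `J` and `J'` requires the triangles `a x e` and `b x e`
  have single' : ∀ {A B X : Set Sph} {v : Sph}, X ∩ B = {v} → A ⊆ B → v ∈ A → X ∩ A = {v} := by
    intro A B X v h3 h1 h2
    refine Subset.antisymm (h3 ▸ inter_subset_inter_right _ h1) ?_
    rintro _ rfl
    exact ⟨(show _ ∈ X ∩ B from h3 ▸ rfl).1, h2⟩
  have TJ : Tri c (D.edge a x) B₁ A₁ (D.vtx a) (D.vtx x) e :=
    ⟨D.edge_arc _ _ nax, hB₁, hA₁.symm, single' (edge_inter D daxy) b1 hB₁.left_mem,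
      by rw [inter_comm]; exact single' (single a1 hA₁.right_mem Ixy) b1 hB₁.right_mem,
      single a1 hA₁.left_mem Iax, H.pole _ _ nax, fun h => oB (b1 h), fun h => oab (a1 h)⟩
  have TJ' : Tri c (D.edge b x) B₁ A₂ (D.vtx b) (D.vtx x) e :=
    ⟨D.edge_arc _ _ nbx, hB₁, hA₂, single' (edge_inter D dbxy) b1 hB₁.left_mem,
      by rw [inter_comm]; exact single' (single a2 hA₂.left_mem Ixy) b1 hB₁.right_mem,
      single a2 hA₂.right_mem Ibx, H.pole _ _ nbx, fun h => oB (b1 h), fun h => oab (a2 h)⟩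
  have off1 : ∀ p ∈ offAll D, p ∉ D.edge a x ∪ B₁ ∪ A₁ := by
    rintro p hp ((h | h) | h)
    exacts [hp _ _ nax h, hp _ _ nxy (b1 h), hp _ _ nab (a1 h)]
  have off2 : ∀ p ∈ offAll D, p ∉ D.edge b x ∪ B₁ ∪ A₂ := by
    rintro p hp ((h | h) | h)
    exacts [hp _ _ nbx h, hp _ _ nxy (b1 h), hp _ _ nab (a2 h)]
  have rel : ∀ p ∈ offAll D, W D c a x b p = J p - J' p := by
    intro p hp
    have s1 := TJ.spec (off1 p hp)
    have s2 := TJ'.spec (off2 p hp)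
    have s3 := H.W_spec daxb (offAll_tri daxb hp)
    rw [ee_symm D c a b, ee_symm D c b x] at s3
    have s4 := th_union (u := D.vtx a) (w := D.vtx b) hA₁.acy hA₂.acy hAA (fun h => oab (a1 h))
      (fun h => oab (a2 h)) (fun h => hp _ _ nab (a1 h)) (fun h => hp _ _ nab (a2 h))
      hA₁.left_mem hA₂.right_mem
    rw [← hA] at s4
    rw [th_symm (u := D.vtx a) (v := e)] at s1
    unfold ee at s3
    apply int_eq_of_mul
    push_cast
    linear_combination s1 - s2 - s3 - s4
  obtain ⟨m, hm⟩ := H.sided daxb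
  have u1 := hm.unit
  have u2 := H.sg_unit daxy
  have u3 : sg D c Δf b x y = - sg D c Δf a x y := by
    have h1 := H.sg_rot daxy
    have h2 := H.sg_rot dbxy
    have h3 := H.sg_unit dbxy
    rw [h1, h2] at hopp
    omega
  have hyT : D.vtx y ∉ triCurve D a x b := fun hc => hy (H.sub daxb hc)
  have hd : ∃ᶠ z in 𝓝 (D.vtx y), z ∈ offAll D :=
    mem_closure_iff_frequently.1 (offAll_dense D _)
  obtain ⟨z, hz, ⟨⟨-, z1⟩, ⟨-, z2⟩⟩, z3, z4⟩ := (hd.and_eventually ((k2.and l2).and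
    (H.side_locConst daxb hyT))).exists
  have hWz := ((hm.val z z3).resolve_left fun h => hy (z4.1 h.1)).2
  obtain ⟨w, hw, hw'⟩ := (H.freq_in daxb (mem_tri D daxb)).exists
  have hWw := ((hm.val w (offAll_tri daxb hw)).resolve_right fun h => h.1 hw').2
  have r1 := rel z hz
  have r2 := rel w hw
  have j1 := k1 w (off1 w hw)
  have j2 := l1 w (off2 w hw)
  change J z = k at z1
  change J' z = l at z2
  rw [u3] at j2
  omega

/-- If the edge `a b` meets the chosen side of `a x y` off the triangle, then the signs of `a x b`
and `a b y` agree with that of `a x y`. -/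
lemma star {a b x y : Fin n} (h : D4 a b x y) {g : Sph} (hg : g ∈ D.edge a b)
    (hgT : g ∉ triCurve D a x y) (hgΔ : g ∈ Δf a x y) :
    sg D c Δf a b x = - sg D c Δf a x y ∧ sg D c Δf a b y = sg D c Δf a x y := by
  have main : ∀ {x y : Fin n}, D4 a b x y → g ∉ triCurve D a x y → g ∈ Δf a x y →
      sg D c Δf a x b = sg D c Δf a x y := by
    intro x y h hgT hgΔ
    by_cases hb : D.vtx b ∈ Δf a x y
    · obtain ⟨⟨nab, nbx, nax⟩, nay, nby, nxy⟩ := h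
      exact H.sg_of_mem ⟨⟨nax, nxy, nay⟩, nab, nbx.symm, nby.symm⟩ hb
    · exact H.star_out h hg hgT hgΔ hb
  have flip : ∀ {u v w : Fin n}, D3 u v w → sg D c Δf u w v = - sg D c Δf u v w := by
    intro u v w h
    rw [← H.sg_swap h, ← H.sg_rot h.swap]
  have h1 := main h hgT hgΔ
  obtain ⟨⟨nab, nbx, nax⟩, nay, nby, nxy⟩ := h
  have e : triCurve D a y x = triCurve D a x y := by
    rw [← triCurve_rot, ← triCurve_rot, triCurve_swap, triCurve_rot]
  have h2 := main (x := y) (y := x) ⟨⟨nab, nby, nay⟩, nax, nbx, nxy.symm⟩ (by rwa [e])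
    (by rwa [H.wit.2.1])
  have f1 := flip (u := a) (v := x) (w := b) ⟨nax, nbx.symm, nab⟩
  have f2 := flip (u := a) (v := y) (w := b) ⟨nay, nby.symm, nab⟩
  have f3 := flip (u := a) (v := x) (w := y) ⟨nax, nxy, nay⟩
  exact ⟨by omega, by omega⟩

end Ctx

end HConv

namespace HConv

/-! ### A pattern forbidden at a vertex -/

namespace Ctx

variable {n : ℕ} {D : GoodDrawing n} {c : PoleChart} {Δf : Fin n → Fin n → Fin n → Set Sph}
  (H : Ctx D c Δf)
include H

lemma sg_perm {u v w : Fin n} (h : D3 u v w) :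
    sg D c Δf v w u = sg D c Δf u v w ∧ sg D c Δf w u v = sg D c Δf u v w ∧
    sg D c Δf v u w = - sg D c Δf u v w ∧ sg D c Δf u w v = - sg D c Δf u v w ∧
    sg D c Δf w v u = - sg D c Δf u v w := by
  have e1 := H.sg_rot h
  have e2 := H.sg_rot h.rot
  have e3 := H.sg_swap h
  have e4 := H.sg_rot h.swap
  have e5 := H.sg_rot h.swap.rot
  exact ⟨e1, e2.trans e1, e3, e4.trans e3, e5.trans (e4.trans e3)⟩

/-- If the signs of `a x y`, `a y z`, `a z x` agree, then the chosen sides of these triangles cover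
a neighbourhood of `a` up to the edges at `a`. The first part of the edge `a b` thus runs into one
of them, and `star` yields two different signs among those of `a b x`, `a b y`, `a b z`. -/
lemma no_wheel {a b x y z : Fin n} (hx : D4 a b x y) (haz : a ≠ z) (hbz : b ≠ z) (hxz : x ≠ z)
    (hyz : y ≠ z) : ¬ (sg D c Δf a x y = sg D c Δf a y z ∧ sg D c Δf a y z = sg D c Δf a z x ∧
      sg D c Δf a b x = sg D c Δf a b y ∧ sg D c Δf a b y = sg D c Δf a b z) := by
  rintro ⟨e1, e2, e3, e4⟩
  obtain ⟨⟨nab, nbx, nax⟩, nay, nby, nxy⟩ := hx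
  have d1 : D3 a x y := ⟨nax, nxy, nay⟩
  have d2 : D3 a y z := ⟨nay, hyz, haz⟩
  have d3 : D3 a x z := ⟨nax, hxz, haz⟩
  have d4 : D3 x y z := ⟨nxy, hyz, hxz⟩
  have s1 := H.sg_unit d1
  have s3 : sg D c Δf a z x = - sg D c Δf a x z := (H.sg_perm d3).2.2.2.1
  obtain ⟨k1, v1⟩ := H.sided d1
  obtain ⟨k2, v2⟩ := H.sided d2
  obtain ⟨k3, v3⟩ := H.sided d3
  have ha : D.vtx a ∉ triCurve D x y z := vtx_not_tri D ⟨d4, nax.symm, nay.symm, haz.symm⟩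
  have loc := H.W_locConst d4 ha
  -- the number of chosen sides covering a point near `a` is constant
  obtain ⟨p, ⟨hp, hpΔ⟩, hpx, hpW⟩ := ((H.freq_in d1 (mem_tri D d1)).and_eventually loc).exists
  obtain ⟨g, ⟨hg, hga, hgb⟩, hgx, hgW⟩ := ((arc_freq (D.edge_arc a b nab)).and_eventually loc).exists
  have off : ∀ {u : Fin n}, a ≠ u → b ≠ u → g ∉ D.edge a u := fun {u} h1 h2 hc => hga (by
    have : g ∈ ({D.vtx a} : Set Sph) := by
      rw [← edge_inter D (u := b) (v := a) (w := u) ⟨nab.symm, h1, h2⟩, D.edge_symm b a]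
      exact ⟨hg, hc⟩
    exact this)
  have gx := off nax nbx
  have gy := off nay nby
  have gz := off haz hbz
  have g1 : g ∉ triCurve D a x y := by
    rintro ((h | h) | h)
    exacts [gx h, hgx (Or.inl (Or.inl h)), gy h]
  have g2 : g ∉ triCurve D a y z := by
    rintro ((h | h) | h)
    exacts [gy h, hgx (Or.inl (Or.inr h)), gz h]
  have g3 : g ∉ triCurve D a x z := by
    rintro ((h | h) | h)
    exacts [gx h, hgx (Or.inr h), gz h]
  have cg := H.cocycle ⟨d1, haz, hxz, hyz⟩ g1 g3 g2 hgx
  have cp := H.cocycle ⟨d1, haz, hxz, hyz⟩ (offAll_tri d1 hp) (offAll_tri d3 hp)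
    (offAll_tri d2 hp) hpx
  have p1 := ((v1.val p (offAll_tri d1 hp)).resolve_right fun h => h.1 hpΔ).2
  have p2 := v2.val p (offAll_tri d2 hp)
  have p3 := v3.val p (offAll_tri d3 hp)
  have q1 := v1.val g g1
  have q2 := v2.val g g2
  have q3 := v3.val g g3
  by_cases i1 : g ∈ Δf a x y
  · have := H.star ⟨⟨nab, nbx, nax⟩, nay, nby, nxy⟩ hg g1 i1
    omega
  by_cases i2 : g ∈ Δf a y z
  · have := H.star ⟨⟨nab, nby, nay⟩, haz, hbz, hyz⟩ hg g2 i2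
    omega
  by_cases i3 : g ∈ Δf a x z
  · have := H.star ⟨⟨nab, nbx, nax⟩, haz, hbz, hxz⟩ hg g3 i3
    omega
  have q1 := (q1.resolve_left fun h => i1 h.1).2
  have q2 := (q2.resolve_left fun h => i2 h.1).2
  have q3 := (q3.resolve_left fun h => i3 h.1).2
  have p2 : W D c a y z p = k2 + sg D c Δf a y z ∨ W D c a y z p = k2 := p2.imp And.right And.right
  have p3 : W D c a x z p = k3 + sg D c Δf a x z ∨ W D c a x z p = k3 := p3.imp And.right And.right
  omega

/-! ### Combinatorics of the signs of six vertices -/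

/-- Four vertices whose triples all have the same sign do not alternate with respect to the
edge `a b`. -/
lemma no_alternation_aux {a b w₁ w₂ w₃ w₄ : Fin n} (nab : a ≠ b) (a1 : a ≠ w₁) (a2 : a ≠ w₂)
    (a3 : a ≠ w₃) (a4 : a ≠ w₄) (b1 : b ≠ w₁) (b2 : b ≠ w₂) (b3 : b ≠ w₃) (b4 : b ≠ w₄)
    (n12 : w₁ ≠ w₂) (n13 : w₁ ≠ w₃) (n14 : w₁ ≠ w₄) (n23 : w₂ ≠ w₃) (n24 : w₂ ≠ w₄)
    (n34 : w₃ ≠ w₄) {s : ℤ} (e1 : sg D c Δf w₁ w₂ w₃ = s) (e2 : sg D c Δf w₁ w₂ w₄ = s)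
    (e3 : sg D c Δf w₁ w₃ w₄ = s) (e4 : sg D c Δf w₂ w₃ w₄ = s)
    (f1 : sg D c Δf a b w₁ = s) (f2 : sg D c Δf a b w₂ = -s)
    (f3 : sg D c Δf a b w₃ = s) (f4 : sg D c Δf a b w₄ = -s) : False := by
  have p1 := H.sg_perm (⟨nab, b1, a1⟩ : D3 a b w₁)
  have p2 := H.sg_perm (⟨nab, b2, a2⟩ : D3 a b w₂)
  have p3 := H.sg_perm (⟨nab, b3, a3⟩ : D3 a b w₃)
  have p4 := H.sg_perm (⟨nab, b4, a4⟩ : D3 a b w₄)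
  have q12 := H.sg_perm (⟨a1, n12, a2⟩ : D3 a w₁ w₂)
  have q13 := H.sg_perm (⟨a1, n13, a3⟩ : D3 a w₁ w₃)
  have q14 := H.sg_perm (⟨a1, n14, a4⟩ : D3 a w₁ w₄)
  have q23 := H.sg_perm (⟨a2, n23, a3⟩ : D3 a w₂ w₃)
  have q24 := H.sg_perm (⟨a2, n24, a4⟩ : D3 a w₂ w₄)
  have q34 := H.sg_perm (⟨a3, n34, a4⟩ : D3 a w₃ w₄)
  have r1 := H.sg_perm (⟨n12, n23, n13⟩ : D3 w₁ w₂ w₃)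
  have r2 := H.sg_perm (⟨n12, n24, n14⟩ : D3 w₁ w₂ w₄)
  have r3 := H.sg_perm (⟨n13, n34, n14⟩ : D3 w₁ w₃ w₄)
  have r4 := H.sg_perm (⟨n23, n34, n24⟩ : D3 w₂ w₃ w₄)
  have hs := H.sg_unit (⟨n12, n23, n13⟩ : D3 w₁ w₂ w₃)
  have u12 := H.sg_unit (⟨a1, n12, a2⟩ : D3 a w₁ w₂)
  have u13 := H.sg_unit (⟨a1, n13, a3⟩ : D3 a w₁ w₃)
  have u14 := H.sg_unit (⟨a1, n14, a4⟩ : D3 a w₁ w₄)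
  have u23 := H.sg_unit (⟨a2, n23, a3⟩ : D3 a w₂ w₃)
  have u24 := H.sg_unit (⟨a2, n24, a4⟩ : D3 a w₂ w₄)
  have u34 := H.sg_unit (⟨a3, n34, a4⟩ : D3 a w₃ w₄)
  -- the configurations excluded by `no_wheel` that lead to a contradiction
  have g1 := H.no_wheel (a := a) (b := w₃) (x := b) (y := w₁) (z := w₂)
    ⟨⟨a3, b3.symm, nab⟩, a1, n13.symm, b1⟩ a2 n23.symm b2 n12
  have g2 := H.no_wheel (a := w₂) (b := w₁) (x := a) (y := w₃) (z := w₄)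
    ⟨⟨n12.symm, a1.symm, a2.symm⟩, n23, n13, a3⟩ n24 n14 a4 n34
  have g3 := H.no_wheel (a := a) (b := w₄) (x := b) (y := w₁) (z := w₂)
    ⟨⟨a4, b4.symm, nab⟩, a1, n14.symm, b1⟩ a2 n24.symm b2 n12
  have g4 := H.no_wheel (a := w₃) (b := w₄) (x := a) (y := w₁) (z := w₂)
    ⟨⟨n34, a4.symm, a3.symm⟩, n13.symm, n14.symm, a1⟩ n23.symm n24.symm a2 n12
  have g5 := H.no_wheel (a := a) (b := w₄) (x := b) (y := w₂) (z := w₃)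
    ⟨⟨a4, b4.symm, nab⟩, a2, n24.symm, b2⟩ a3 n34.symm b3 n23
  have g6 := H.no_wheel (a := w₁) (b := w₂) (x := a) (y := w₃) (z := w₄)
    ⟨⟨n12, a2.symm, a1.symm⟩, n13, n23, a3⟩ n14 n24 a4 n34
  have g7 := H.no_wheel (a := a) (b := w₁) (x := b) (y := w₃) (z := w₄)
    ⟨⟨a1, b1.symm, nab⟩, a3, n13, b3⟩ a4 n14 b4 n34
  have g8 := H.no_wheel (a := w₄) (b := w₁) (x := a) (y := w₂) (z := w₃)
    ⟨⟨n14.symm, a1.symm, a4.symm⟩, n24.symm, n12, a2⟩ n34.symm n13 a3 n23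
  have g9 := H.no_wheel (a := w₁) (b := w₄) (x := a) (y := w₂) (z := w₃)
    ⟨⟨n14, a4.symm, a1.symm⟩, n12, n24.symm, a2⟩ n13 n34.symm a3 n23
  have g10 := H.no_wheel (a := a) (b := w₂) (x := b) (y := w₁) (z := w₄)
    ⟨⟨a2, b2.symm, nab⟩, a1, n12.symm, b1⟩ a4 n24 b4 n14
  have g11 := H.no_wheel (a := w₂) (b := w₃) (x := a) (y := w₁) (z := w₄)
    ⟨⟨n23, a3.symm, a2.symm⟩, n12.symm, n13.symm, a1⟩ n24 n34 a4 n14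
  have g12 := H.no_wheel (a := w₄) (b := w₃) (x := a) (y := w₁) (z := w₂)
    ⟨⟨n34.symm, a3.symm, a4.symm⟩, n14.symm, n13.symm, a1⟩ n24.symm n23.symm a2 n12
  have g13 := H.no_wheel (a := a) (b := w₁) (x := b) (y := w₂) (z := w₃)
    ⟨⟨a1, b1.symm, nab⟩, a2, n12, b2⟩ a3 n13 b3 n23
  have g14 := H.no_wheel (a := w₃) (b := w₂) (x := a) (y := w₁) (z := w₄)
    ⟨⟨n23.symm, a2.symm, a3.symm⟩, n13.symm, n12.symm, a1⟩ n34 n24 a4 n14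
  rw [e1] at hs
  simp only [p1, p2, p3, p4, q12, q13, q14, q23, q24, q34, r1, r2, r3, r4, e1, e2, e3, e4,
    f1, f2, f3, f4, neg_neg] at g1 g2 g3 g4 g5 g6 g7 g8 g9 g10 g11 g12 g13 g14
  rcases hs with rfl | rfl <;> rcases u12 with h12 | h12 <;> rcases u13 with h13 | h13 <;>
    rcases u14 with h14 | h14 <;> rcases u23 with h23 | h23 <;> rcases u24 with h24 | h24 <;>
    rcases u34 with h34 | h34 <;>
    simp [h12, h13, h14, h23, h24, h34] at g1 g2 g3 g4 g5 g6 g7 g8 g9 g10 g11 g12 g13 g14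

/-- Four vertices whose triples all have the same sign do not alternate with respect to the
edge `a b`. -/
lemma no_alternation {a b w₁ w₂ w₃ w₄ : Fin n} (nab : a ≠ b) (a1 : a ≠ w₁) (a2 : a ≠ w₂)
    (a3 : a ≠ w₃) (a4 : a ≠ w₄) (b1 : b ≠ w₁) (b2 : b ≠ w₂) (b3 : b ≠ w₃) (b4 : b ≠ w₄)
    (n12 : w₁ ≠ w₂) (n13 : w₁ ≠ w₃) (n14 : w₁ ≠ w₄) (n23 : w₂ ≠ w₃) (n24 : w₂ ≠ w₄)
    (n34 : w₃ ≠ w₄) {s : ℤ} (e1 : sg D c Δf w₁ w₂ w₃ = s) (e2 : sg D c Δf w₁ w₂ w₄ = s)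
    (e3 : sg D c Δf w₁ w₃ w₄ = s) (e4 : sg D c Δf w₂ w₃ w₄ = s)
    (f1 : sg D c Δf a b w₁ ≠ sg D c Δf a b w₂) (f2 : sg D c Δf a b w₂ ≠ sg D c Δf a b w₃)
    (f3 : sg D c Δf a b w₃ ≠ sg D c Δf a b w₄) : False := by
  have hs := H.sg_unit (⟨n12, n23, n13⟩ : D3 w₁ w₂ w₃)
  have t1 := H.sg_unit (⟨nab, b1, a1⟩ : D3 a b w₁)
  have t2 := H.sg_unit (⟨nab, b2, a2⟩ : D3 a b w₂)
  have t3 := H.sg_unit (⟨nab, b3, a3⟩ : D3 a b w₃)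
  have t4 := H.sg_unit (⟨nab, b4, a4⟩ : D3 a b w₄)
  by_cases h : sg D c Δf a b w₁ = s
  · exact H.no_alternation_aux nab a1 a2 a3 a4 b1 b2 b3 b4 n12 n13 n14 n23 n24 n34 e1 e2 e3 e4
      h (by omega) (by omega) (by omega)
  · -- exchanging `a` and `b` changes the signs with respect to the edge
    have p1 := (H.sg_perm (⟨nab, b1, a1⟩ : D3 a b w₁)).2.2.1
    have p2 := (H.sg_perm (⟨nab, b2, a2⟩ : D3 a b w₂)).2.2.1
    have p3 := (H.sg_perm (⟨nab, b3, a3⟩ : D3 a b w₃)).2.2.1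
    have p4 := (H.sg_perm (⟨nab, b4, a4⟩ : D3 a b w₄)).2.2.1
    exact H.no_alternation_aux nab.symm b1 b2 b3 b4 a1 a2 a3 a4 n12 n13 n14 n23 n24 n34 e1 e2 e3 e4
      (by omega) (by omega) (by omega) (by omega)

end Ctx

end HConv

namespace HConv

/-! ### The cycle bounding a face -/

/-- `F` is a nonempty connected set missing all edges between vertices of the injective
list `v 0, …, v (N - 1)`, and the edges between consecutive ones are in its closure. -/
structure Bounded {n : ℕ} (D : GoodDrawing n) (F : Set Sph) (N : ℕ) (v : ℕ → Fin n) : Prop where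
  inj : ∀ i < N, ∀ j < N, i ≠ j → v i ≠ v j
  conn : IsPreconnected F
  off : ∀ i < N, ∀ j < N, i ≠ j → Disjoint F (D.edge (v i) (v j))
  bd : ∀ i, i + 1 < N → D.edge (v i) (v (i + 1)) ⊆ closure F

open Classical in
/-- The sign of the triangle `u v w` with respect to its side not containing `f`. -/
def tau {n : ℕ} (D : GoodDrawing n) (c : PoleChart) (Δf : Fin n → Fin n → Fin n → Set Sph)
    (f : Sph) (u v w : Fin n) : ℤ :=
  if f ∈ Δf u v w then - sg D c Δf u v w else sg D c Δf u v w

namespace Ctx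

variable {n : ℕ} {D : GoodDrawing n} {c : PoleChart} {Δf : Fin n → Fin n → Fin n → Set Sph}
  (H : Ctx D c Δf)
include H

lemma tau_unit {f : Sph} {u v w : Fin n} (h : D3 u v w) :
    tau D c Δf f u v w = 1 ∨ tau D c Δf f u v w = -1 := by
  have := H.sg_unit h
  unfold tau
  split <;> omega

lemma tau_rot {f : Sph} {u v w : Fin n} (h : D3 u v w) :
    tau D c Δf f v w u = tau D c Δf f u v w := by
  unfold tau
  rw [H.side_rot, H.sg_rot h]

/-- If `f` is off the triangle, then `tau` is the jump of the winding number from the side of the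
triangle containing `f` to the other side. -/
lemma tau_val {f : Sph} {u v w : Fin n} (h : D3 u v w) (hf : f ∉ triCurve D u v w) {p : Sph}
    (hp : p ∉ triCurve D u v w) : W D c u v w p = W D c u v w f ∨
      W D c u v w p = W D c u v w f + tau D c Δf f u v w := by
  obtain ⟨k, hk⟩ := H.sided h
  unfold tau
  rcases hk.val f hf with ⟨i, e⟩ | ⟨i, e⟩ <;> rcases hk.val p hp with ⟨j, e'⟩ | ⟨j, e'⟩ <;>
    simp only [i, if_true, if_false] <;> omega

lemma tau_freq {f : Sph} {u v w : Fin n} (h : D3 u v w) (hf : f ∉ triCurve D u v w) {q : Sph}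
    (hq : q ∈ triCurve D u v w) : ∃ᶠ p in 𝓝 q, p ∈ offAll D ∧
      W D c u v w p = W D c u v w f + tau D c Δf f u v w := by
  obtain ⟨k, hk⟩ := H.sided h
  unfold tau
  rcases hk.val f hf with ⟨i, e⟩ | ⟨i, e⟩
  · refine (H.freq_out h hq).mono fun p hp => ⟨hp.1, ?_⟩
    have := ((hk.val p (offAll_tri h hp.1)).resolve_left fun h => hp.2 h.1).2
    simp only [i, if_true]; omega
  · refine (H.freq_in h hq).mono fun p hp => ⟨hp.1, ?_⟩
    have := ((hk.val p (offAll_tri h hp.1)).resolve_right fun h => h.1 hp.2).2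
    simp only [i, if_false]; omega

lemma W_const {F : Set Sph} (hF : IsPreconnected F) {u v w : Fin n} (h : D3 u v w)
    (hd : ∀ p ∈ F, p ∉ triCurve D u v w) {p q : Sph} (hp : p ∈ F) (hq : q ∈ F) :
    W D c u v w p = W D c u v w q :=
  const_on_conn hF (fun y hy => (H.W_locConst h (hd y hy)).mono fun _ h => h.2) hp hq

/-- An edge on the boundary of `F` has `F` on the same side as seen from any two triangles. -/
lemma tau_edge {F : Set Sph} (hF : IsPreconnected F) {f : Sph} (hf : f ∈ F) {u v x y : Fin n}
    (hx : D3 u v x) (hy : D3 u v y) (dx : ∀ p ∈ F, p ∉ triCurve D u v x)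
    (dy : ∀ p ∈ F, p ∉ triCurve D u v y) (hb : D.edge u v ⊆ closure F) :
    tau D c Δf f u v x = tau D c Δf f u v y := by
  obtain ⟨q, hq, hqu, hqv⟩ := arc_mid (D.edge_arc u v hx.1)
  obtain ⟨m, hm⟩ := H.germ hx hy hq hqu hqv
  obtain ⟨z, hzF, hz⟩ := ((mem_closure_iff_frequently.1 (hb hq)).and_eventually hm).exists
  have h1 := (hz fun hc => dx z hzF (Or.inl (Or.inl hc))).2.2
  rw [H.W_const hF hx dx hzF hf, H.W_const hF hy dy hzF hf] at h1
  obtain ⟨p, ⟨hp, hpW⟩, hp'⟩ := ((H.tau_freq hx (dx f hf)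
    (Or.inl (Or.inl hq) : q ∈ triCurve D u v x)).and_eventually hm).exists
  obtain ⟨-, hpy, h2⟩ := hp' (hp _ _ hx.1)
  have h3 := H.tau_val hy (dy f hf) hpy
  have h4 := H.tau_unit (f := f) hx
  omega

/-- A vertex `x` on the boundary of `F`: the signs of `u v w`, `u v x` and `v w x` determine that
of `u w x`. -/
lemma tau_vertex {F : Set Sph} (hF : IsPreconnected F) {f : Sph} (hf : f ∈ F) {u v w x : Fin n}
    (h : D4 u v w x) (d1 : ∀ p ∈ F, p ∉ triCurve D u v w) (d2 : ∀ p ∈ F, p ∉ triCurve D u v x)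
    (d3 : ∀ p ∈ F, p ∉ triCurve D u w x) (d4 : ∀ p ∈ F, p ∉ triCurve D v w x)
    (hx : D.vtx x ∈ closure F) {s : ℤ} (e2 : tau D c Δf f u v x = s)
    (e4 : tau D c Δf f v w x = s) : tau D c Δf f u w x = s := by
  have hh := h
  obtain ⟨h1, n1, n2, n3⟩ := hh
  have h2 : D3 u v x := ⟨h1.1, n2, n1⟩
  have h3 : D3 u w x := ⟨h1.2.2, n3, n1⟩
  have h4 : D3 v w x := ⟨h1.2.1, n3, n2⟩
  have loc := H.W_locConst h1 (vtx_not_tri D h)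
  obtain ⟨z, hzF, -, hz⟩ := ((mem_closure_iff_frequently.1 hx).and_eventually loc).exists
  rw [H.W_const hF h1 d1 hzF hf] at hz
  obtain ⟨p, ⟨hp, hpW⟩, -, hp1⟩ := ((H.tau_freq h3 (d3 f hf)
    (Or.inr (D.mem_r h3.2.2) : D.vtx x ∈ triCurve D u w x)).and_eventually loc).exists
  have c1 := H.cocycle h (offAll_tri h1 hp) (offAll_tri h2 hp) (offAll_tri h3 hp)
    (offAll_tri h4 hp)
  have c2 := H.cocycle h (d1 f hf) (d2 f hf) (d3 f hf) (d4 f hf)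
  have v2 := H.tau_val h2 (d2 f hf) (offAll_tri h2 hp)
  have v4 := H.tau_val h4 (d4 f hf) (offAll_tri h4 hp)
  have u2 := H.tau_unit (f := f) h2
  have u3 := H.tau_unit (f := f) h3
  omega

/-- If `F` is contained in the chosen side of `u v w`, then the signs of `u v w` and `u v x`
relative to `F` differ. -/
lemma not_mem_side {F : Set Sph} (hF : IsPreconnected F) {f : Sph} (hf : f ∈ F)
    {u v w x : Fin n} (h : D4 u v w x) (d1 : ∀ p ∈ F, p ∉ triCurve D u v w)
    (d2 : ∀ p ∈ F, p ∉ triCurve D u v x) (hw : D.vtx w ∈ closure F) (hx : D.vtx x ∈ closure F)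
    (e : tau D c Δf f u v w = tau D c Δf f u v x) : f ∉ Δf u v w := by
  intro hfΔ
  have hh := h
  obtain ⟨h1, n1, n2, n3⟩ := hh
  have h2 : D3 u v x := ⟨h1.1, n2, n1⟩
  have key : ∀ {w x : Fin n}, D4 u v w x → (∀ p ∈ F, p ∉ triCurve D u v w) →
      D.vtx x ∈ closure F → f ∈ Δf u v w → D.vtx x ∈ Δf u v w := by
    intro w x h d hx hfΔ
    obtain ⟨z, hzF, -, hz⟩ := ((mem_closure_iff_frequently.1 hx).and_eventually
      (H.side_locConst h.1 (vtx_not_tri D h))).exists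
    exact hz.1 (H.conn_side h.1 hF d hf hzF hfΔ)
  have hxΔ := key h d1 hx hfΔ
  have hs := H.sg_of_mem h hxΔ
  have hu := H.sg_unit h1
  have hfΔ' : f ∈ Δf u v x := by
    by_contra hc
    simp only [tau, hfΔ, hc, if_true, if_false] at e
    omega
  have h' : D4 u v x w := ⟨h2, h1.2.2, h1.2.1, n3.symm⟩
  have hwΔ := key h' d2 hw hfΔ'
  have m1 := H.vtx_mem h1
  -- the chosen sides coincide, although `w` is on the boundary of only one of them
  have sub := H.nested h1 h2 m1.1 m1.2.1 hxΔ
  obtain ⟨p, ⟨-, hp⟩, -, hp'⟩ := ((H.freq_out h1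
    (Or.inr (D.mem_r h1.2.2) : D.vtx w ∈ triCurve D u v w)).and_eventually
    (H.side_locConst h2 (vtx_not_tri D h'))).exists
  exact hp (sub (hp'.2 hwΔ))

section cycle

variable {F : Set Sph} {N : ℕ} {v : ℕ → Fin n} (B : Bounded D F N v)
include B

omit H in
lemma _root_.HConv.Bounded.off_tri {i j l : ℕ} (hi : i < N) (hj : j < N) (hl : l < N) (h1 : i ≠ j)
    (h2 : j ≠ l) (h3 : i ≠ l) : ∀ p ∈ F, p ∉ triCurve D (v i) (v j) (v l) := by
  rintro p hp ((h | h) | h)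
  · exact (B.off i hi j hj h1).le_bot ⟨hp, h⟩
  · exact (B.off j hj l hl h2).le_bot ⟨hp, h⟩
  · exact (B.off i hi l hl h3).le_bot ⟨hp, h⟩

omit H in
lemma _root_.HConv.Bounded.d3 {i j l : ℕ} (hi : i < N) (hj : j < N) (hl : l < N) (h1 : i ≠ j)
    (h2 : j ≠ l) (h3 : i ≠ l) : D3 (v i) (v j) (v l) :=
  ⟨B.inj i hi j hj h1, B.inj j hj l hl h2, B.inj i hi l hl h3⟩

omit H in
lemma _root_.HConv.Bounded.mem_closure {i : ℕ} (hi : i < N) (h1 : 1 < N) :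
    D.vtx (v i) ∈ closure F := by
  rcases Nat.eq_zero_or_pos i with rfl | h
  · exact B.bd 0 h1 (D.mem_l (B.inj _ hi _ h1 (by omega)))
  · obtain ⟨m, rfl⟩ := Nat.exists_eq_add_of_lt h
    exact B.bd (0 + m) hi (D.mem_r (B.inj _ (by omega) _ hi (by omega)))

/-- All triples of vertices in the order of the cycle have the same sign relative to `F`. -/
lemma tau_cycle {f : Sph} (hf : f ∈ F) (hN : 2 < N) : ∀ i j l : ℕ, i < j → j < l → l < N →
    tau D c Δf f (v i) (v j) (v l) = tau D c Δf f (v 0) (v 1) (v 2) := by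
  have edge : ∀ i l m : ℕ, i + 1 < N → l < N → m < N → l ≠ i → l ≠ i + 1 → m ≠ i → m ≠ i + 1 →
      tau D c Δf f (v i) (v (i + 1)) (v l) = tau D c Δf f (v i) (v (i + 1)) (v m) := by
    intro i l m hi hl hm h1 h2 h3 h4
    exact H.tau_edge B.conn hf
      (B.d3 (by omega) hi hl (by omega) h2.symm h1.symm)
      (B.d3 (by omega) hi hm (by omega) h4.symm h3.symm)
      (B.off_tri (by omega) hi hl (by omega) h2.symm h1.symm)
      (B.off_tri (by omega) hi hm (by omega) h4.symm h3.symm) (B.bd i hi)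
  have base : ∀ i : ℕ, i + 2 < N →
      tau D c Δf f (v i) (v (i + 1)) (v (i + 2)) = tau D c Δf f (v 0) (v 1) (v 2) := by
    intro i
    induction i with
    | zero => intro _; rfl
    | succ i ih =>
      intro hi
      rw [← ih (by omega), edge (i + 1) (i + 1 + 2) i (by omega) (by omega) (by omega) (by omega)
        (by omega) (by omega) (by omega)]
      exact H.tau_rot (B.d3 (by omega) (by omega) (by omega) (by omega) (by omega) (by omega))
  have first : ∀ i l : ℕ, i + 1 < l → l < N →
      tau D c Δf f (v i) (v (i + 1)) (v l) = tau D c Δf f (v 0) (v 1) (v 2) := by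
    intro i l h1 h2
    rw [← base i (by omega)]
    exact edge i l (i + 2) (by omega) (by omega) (by omega) (by omega) (by omega) (by omega)
      (by omega)
  intro i j l hij
  induction j, hij using Nat.le_induction with
  | base => exact first i l
  | succ j hj ih =>
    intro hl hlN
    refine H.tau_vertex B.conn hf (v := v j) ?_ ?_ ?_ ?_ ?_ (B.mem_closure hlN (by omega))
      (ih (by omega) hlN) (first j l hl hlN)
    · exact ⟨B.d3 (by omega) (by omega) (by omega) (by omega) (by omega) (by omega),
        B.inj _ (by omega) _ (by omega) (by omega), B.inj _ (by omega) _ (by omega) (by omega),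
        B.inj _ (by omega) _ (by omega) (by omega)⟩
    all_goals
      exact B.off_tri (by omega) (by omega) (by omega) (by omega) (by omega) (by omega)

/-- The chosen side of a triangle on the cycle does not contain `F` if there is a further vertex on
the cycle, so that the sign relative to `F` is that of the chosen side. -/
lemma sg_cycle {f : Sph} (hf : f ∈ F) {i j l m : ℕ} (hij : i < j) (hjl : j < l) (hlm : l < m)
    (hm : m < N) :
    sg D c Δf (v i) (v j) (v l) = tau D c Δf f (v 0) (v 1) (v 2) ∧
    sg D c Δf (v i) (v j) (v m) = tau D c Δf f (v 0) (v 1) (v 2) ∧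
    sg D c Δf (v i) (v l) (v m) = tau D c Δf f (v 0) (v 1) (v 2) ∧
    sg D c Δf (v j) (v l) (v m) = tau D c Δf f (v 0) (v 1) (v 2) := by
  have t := H.tau_cycle B hf (by omega)
  have t1 := t i j l hij hjl (by omega)
  have t2 := t i j m hij (by omega) hm
  have t3 := t i l m (by omega) hlm hm
  have t4 := t j l m hjl hlm hm
  -- `a, b, d` and `e` stand for the four vertices in some order
  have key : ∀ {a b d e : ℕ}, a < N → b < N → d < N → e < N → a ≠ b → a ≠ d → a ≠ e → b ≠ d →
      b ≠ e → d ≠ e → tau D c Δf f (v a) (v b) (v d) = tau D c Δf f (v a) (v b) (v e) →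
      sg D c Δf (v a) (v b) (v d) = tau D c Δf f (v a) (v b) (v d) := by
    intro a b d e ha hb hd he h1 h2 h3 h4 h5 h6 ht
    have := H.not_mem_side B.conn hf
      ⟨B.d3 ha hb hd h1 h4 h2, B.inj a ha e he h3, B.inj b hb e he h5, B.inj d hd e he h6⟩
      (B.off_tri ha hb hd h1 h4 h2) (B.off_tri ha hb he h1 h5 h3) (B.mem_closure hd (by omega))
      (B.mem_closure he (by omega)) ht
    rw [tau, if_neg this]
  have hi : i < N := by omega
  have hj : j < N := by omega
  have hl : l < N := by omega
  have n12 : i ≠ j := by omega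
  have n13 : i ≠ l := by omega
  have n14 : i ≠ m := by omega
  have n23 : j ≠ l := by omega
  have n24 : j ≠ m := by omega
  have n34 : l ≠ m := by omega
  have d2 := B.d3 hi hj hm n12 n24 n14
  have d3 := B.d3 hi hl hm n13 n34 n14
  have d4 := B.d3 hj hl hm n23 n34 n24
  have r2 := H.tau_rot (f := f) d2.rot.rot
  have r3 := H.tau_rot (f := f) d3.rot.rot
  have r3' := H.tau_rot (f := f) d3
  have r4 := H.tau_rot (f := f) d4
  refine ⟨?_, ?_, ?_, ?_⟩
  · rw [← t1]
    exact key hi hj hl hm n12 n13 n14 n23 n24 n34 (t1.trans t2.symm)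
  · rw [← t2]
    exact key hi hj hm hl n12 n14 n13 n24 n23 n34.symm (t2.trans t1.symm)
  · have k := key hm hi hl hj n14.symm n34.symm n24.symm n13 n12 n23.symm
      (by rw [← r3, ← r2, t3, t2])
    rw [← t3, r3, ← k]
    exact H.sg_rot d3.rot.rot
  · have k := key hl hm hj hi n34 n23.symm n13.symm n24.symm n14.symm n12.symm
      (by rw [r4, r3', t4, t3])
    rw [← t4, ← r4, ← k]
    exact (H.sg_rot d4).symm

end cycle

/-! ### The two sides of an edge -/

omit H in
/-- A point of an arc whose first collar coordinate is in the open interval `(0, 1)` is not an end: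
removing it disconnects the arc. -/
lemma _root_.HConv.collar_ne_end {A : Set Sph} {q b : Sph} (hA : IsArcEnds A q b) (C : Collar A) :
    (C.φ q).1 ∉ Ioo (0 : ℝ) 1 := by
  intro hq
  have hcont : ContinuousOn (fun p => (C.φ p).1) (A \ {q}) :=
    continuous_fst.comp_continuousOn (C.φ.continuousOn.mono (sdiff_subset.trans C.source_sub))
  have hconn := ((arc_conn_half hA).image _ hcont).ordConnected
  have hend : ∀ t ∈ Icc (0 : ℝ) 1, t ≠ (C.φ q).1 → t ∈ (fun p => (C.φ p).1) '' (A \ {q}) := by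
    intro t ht hne
    have : (t, (0 : ℝ)) ∈ C.φ '' A := by rw [C.image_eq]; exact ⟨ht, rfl⟩
    obtain ⟨p, hp, hpt⟩ := this
    refine ⟨p, ⟨hp, fun hc => hne ?_⟩, by simp only [hpt]⟩
    have hpq : p = q := hc
    rw [← hpq, hpt]
  obtain ⟨p, ⟨hp, hpq⟩, hpt⟩ := hconn.out (hend 0 (by simp) hq.1.ne) (hend 1 (by simp) hq.2.ne')
    (Ioo_subset_Icc_self hq)
  have snd : ∀ p ∈ A, (C.φ p).2 = 0 := by
    intro p hp
    have : C.φ p ∈ Icc (0 : ℝ) 1 ×ˢ ({0} : Set ℝ) := C.image_eq ▸ mem_image_of_mem _ hp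
    exact this.2
  exact hpq (C.φ.injOn (C.source_sub hp) (C.source_sub hA.left_mem)
    (Prod.ext hpt ((snd p hp).trans (snd q hA.left_mem).symm)))

/-- Membership of `u` in the first class of the edge `a b` depends only on the sign of `a b u`. -/
lemma sg_ne {a b u v : Fin n} (hab : a ≠ b) (C : Collar (D.edge a b))
    (hv : v ∈ sigmaSide1 D Δf a b C) (hu : u ∈ sigmaSide2 D Δf a b C) :
    sg D c Δf a b v ≠ sg D c Δf a b u := by
  intro hs
  obtain ⟨hva, hvb, q, hq, hqI, U, hU, -, hside⟩ := hv
  obtain ⟨hua, hub, hu⟩ := hu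
  have dv : D3 a b v := ⟨hab, hvb.symm, hva.symm⟩
  have du : D3 a b u := ⟨hab, hub.symm, hua.symm⟩
  have hqa : q ≠ D.vtx a := by
    rintro rfl
    exact collar_ne_end (D.edge_arc a b hab) C hqI
  have hqb : q ≠ D.vtx b := by
    rintro rfl
    exact collar_ne_end (D.edge_arc a b hab).symm C hqI
  have hg := H.germ_eq dv du hs hq hqa hqb
  refine hu ⟨hua, hub, q, hq, hqI, _, Filter.inter_mem hU hg, ?_, ?_⟩
  · obtain ⟨p, ⟨hp, hpΔ⟩, hpU⟩ := ((H.freq_in du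
      (Or.inl (Or.inl hq) : q ∈ triCurve D a b u)).and_eventually (Filter.inter_mem hU hg)).exists
    exact ⟨p, ⟨hpΔ, hpU⟩, hp _ _ hab⟩
  · rintro x ⟨hx, hxU, hxg⟩ hxA
    exact hside x ⟨(hxg hxA).2 hx, hxU⟩ hxA

end Ctx

/-! ### The boundary of the face -/

lemma bounded_of_face {n : ℕ} (D : GoodDrawing n) {S : Set (Fin n)} {F : Set Sph}
    (hF : IsFaceOf F (drawingOn D S)) {k : ℕ} {cyc : Fin (k + 3) → Fin n}
    (hcyc : Function.Injective cyc)
    (hbound : frontier F = ⋃ j : Fin (k + 3), D.edge (cyc j) (cyc (j + 1))) :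
    F.Nonempty ∧ Bounded D F (k + 3) fun i => cyc (Fin.ofNat (k + 3) i) := by
  obtain ⟨x, hx, rfl⟩ := hF
  set F := connectedComponentIn (drawingOn D S)ᶜ x with hFdef
  have hcl : IsClosed (drawingOn D S) := by
    refine ((S.toFinite.image _).isClosed).union ?_
    refine S.toFinite.isClosed_biUnion fun u _ => S.toFinite.isClosed_biUnion fun v _ => ?_
    by_cases huv : u = v
    · simp [huv]
    · simpa [huv] using D.closed huv
  have hopen : IsOpen F := hcl.isOpen_compl.connectedComponentIn
  have hconn : IsPreconnected F := isPreconnected_connectedComponentIn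
  have hfr : frontier F ⊆ drawingOn D S := by
    intro p hp
    by_contra hc
    have hpo : IsOpen (connectedComponentIn (drawingOn D S)ᶜ p) :=
      hcl.isOpen_compl.connectedComponentIn
    have hpm : p ∈ connectedComponentIn (drawingOn D S)ᶜ p := mem_connectedComponentIn hc
    obtain ⟨z, hz1, hz2⟩ := mem_closure_iff.1 hp.1 _ hpo hpm
    have e : F = connectedComponentIn (drawingOn D S)ᶜ p :=
      (connectedComponentIn_eq hz2).trans (connectedComponentIn_eq hz1).symm
    exact hp.2 (by rw [hopen.interior_eq, e]; exact hpm)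
  have hne : ∀ j : Fin (k + 3), cyc j ≠ cyc (j + 1) := fun j hc => by
    have h := hcyc hc
    have h1 : (1 : Fin (k + 3)) = 0 := by simpa using h.symm
    exact absurd (congrArg Fin.val h1) (by simp)
  have hmem : ∀ j, cyc j ∈ S := by
    intro j
    have : D.vtx (cyc j) ∈ drawingOn D S := hfr (by
      rw [hbound]; exact mem_iUnion.2 ⟨j, D.mem_l (hne j)⟩)
    rcases this with ⟨u, hu, e⟩ | h
    · rwa [← D.vtx_inj e]
    · simp only [mem_iUnion] at h
      obtain ⟨u, hu, v, hv, huv, h⟩ := h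
      rcases D.edge_vtx u v huv _ h with e | e <;> rwa [e]
  have hinj : ∀ i < k + 3, ∀ j < k + 3, i ≠ j → Fin.ofNat (k + 3) i ≠ Fin.ofNat (k + 3) j := by
    intro i hi j hj hij hc
    have := congrArg Fin.val hc
    simp only [Fin.ofNat, Nat.mod_eq_of_lt hi, Nat.mod_eq_of_lt hj] at this
    exact hij this
  refine ⟨⟨x, mem_connectedComponentIn hx⟩, ?_, hconn, ?_, ?_⟩
  · exact fun i hi j hj hij hc => hinj i hi j hj hij (hcyc hc)
  · intro i hi j hj hij
    refine disjoint_left.2 fun p hp hpe => connectedComponentIn_subset _ _ hp (Or.inr ?_)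
    simp only [mem_iUnion]
    exact ⟨_, hmem _, _, hmem _, fun hc => hinj i hi j hj hij (hcyc hc), hpe⟩
  · intro i _
    have e : Fin.ofNat (k + 3) (i + 1) = Fin.ofNat (k + 3) i + 1 := by
      ext; simp [Fin.ofNat, Fin.val_add]
    intro p hp
    refine frontier_subset_closure ?_
    rw [hbound]
    refine mem_iUnion.2 ⟨Fin.ofNat (k + 3) i, ?_⟩
    rwa [← e]

end HConv

/-- Let `D` be an h-convex drawing of `K_n` with a specified
witnessing set of convex sides and let `e = ab`, `e' = a'b'` be distinct edges.
Label the vertices of the cycle `C_e^1` (here given by an injective cyclic listing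
`cyc` whose drawing bounds the face `F_e^1`) according to membership in `Σ_{e'}^1`,
`Σ_{e'}^2`, or incidence with `e'`.  Then the cyclic order around `C_e^1` contains no
pattern `1,2,1,2`. -/
theorem no_1212_pattern (n : ℕ) (D : GoodDrawing n)
    (Δf : Fin n → Fin n → Fin n → Set Sph) (h : IsHConvexWitness D Δf)
    (a b : Fin n) (hab : a ≠ b) (c : Collar (D.edge a b))
    (a' b' : Fin n) (hab' : a' ≠ b') (c' : Collar (D.edge a' b'))
    (hne : ({a, b} : Set (Fin n)) ≠ {a', b'})
    (F₁ : Set Sph)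
    (hF₁ : IsEdgeFace D a b (sigmaSide1 D Δf a b c) (sigmaSide2 D Δf a b c) F₁)
    (k : ℕ) (cyc : Fin (k + 3) → Fin n) (hcyc : Function.Injective cyc)
    (hthrough : ∃ j : Fin (k + 3), ({cyc j, cyc (j + 1)} : Set (Fin n)) = {a, b})
    (hbound : frontier F₁ = ⋃ j : Fin (k + 3), D.edge (cyc j) (cyc (j + 1))) :
    ¬ ∃ j₁ j₂ j₃ j₄ : Fin (k + 3), j₁ < j₂ ∧ j₂ < j₃ ∧ j₃ < j₄ ∧
      ((cyc j₁ ∈ sigmaSide1 D Δf a' b' c' ∧ cyc j₂ ∈ sigmaSide2 D Δf a' b' c' ∧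
        cyc j₃ ∈ sigmaSide1 D Δf a' b' c' ∧ cyc j₄ ∈ sigmaSide2 D Δf a' b' c') ∨
       (cyc j₁ ∈ sigmaSide2 D Δf a' b' c' ∧ cyc j₂ ∈ sigmaSide1 D Δf a' b' c' ∧
        cyc j₃ ∈ sigmaSide2 D Δf a' b' c' ∧ cyc j₄ ∈ sigmaSide1 D Δf a' b' c')) := by
  obtain ⟨o, ho⟩ := (HConv.offAll_dense D).nonempty
  obtain ⟨pc, rfl⟩ := HConv.exists_poleChart o
  have H : HConv.Ctx D pc Δf := ⟨ho, h⟩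
  obtain ⟨⟨f, hf⟩, B⟩ := HConv.bounded_of_face D hF₁.1 hcyc hbound
  rintro ⟨j₁, j₂, j₃, j₄, h12, h23, h34, hpat⟩
  obtain ⟨e1, e2, e3, e4⟩ := H.sg_cycle B hf (i := j₁) (j := j₂) (l := j₃) (m := j₄) h12 h23 h34
    j₄.isLt
  simp only [Fin.ofNat_eq_cast, Fin.cast_val_eq_self] at e1 e2 e3 e4
  have inj : ∀ {i j : Fin (k + 3)}, i < j → cyc i ≠ cyc j := fun hij hc => hij.ne (hcyc hc)
  rcases hpat with ⟨l1, l2, l3, l4⟩ | ⟨l1, l2, l3, l4⟩ <;>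
  · refine H.no_alternation hab' l1.1.symm l2.1.symm l3.1.symm l4.1.symm l1.2.1.symm l2.2.1.symm
      l3.2.1.symm l4.2.1.symm (inj h12) (inj (h12.trans h23)) (inj ((h12.trans h23).trans h34))
      (inj h23) (inj (h23.trans h34)) (inj h34) e1 e2 e3 e4 ?_ ?_ ?_ <;>
    first
    | exact H.sg_ne hab' c' ‹_› ‹_›
    | exact (H.sg_ne hab' c' ‹_› ‹_›).symm
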